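/- arXiv:2104.05885 — 2 statements merged into one kernel-verified Lean document; each statement's English description precedes it below -/
import Mathlib

section
/- Let G be an ample groupoid and X a locally compact Hausdorff space with an étale anchor map p : X → G^0 and a continuous left G-action that is free and proper. Then there is an isomorphism of abelian groups Z[X]_G ≅ Z[G\X], induced by the map sending f ∈ Z[X] to the function [x] ↦ Σ_{g ∈ G_{p(x)}} f(g·x) on the quotient G\X. -/
noncomputable section

open Function Set

attribute [local instance] Classical.propDecidable

universe u v w

/-- `ℤ[Y]`: the set of compactly supported continuous `ℤ`-valued functions on a space `Y`
(`ℤ` carries the discrete topology). -/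
def ccZ (Y : Type v) [TopologicalSpace Y] : Set (Y → ℤ) :=
  {f | Continuous f ∧ HasCompactSupport f}

/-- `ℤ[Y]` as an additive subgroup of the group of all functions `Y → ℤ`. -/
def ccZSub (Y : Type v) [TopologicalSpace Y] : AddSubgroup (Y → ℤ) where
  carrier := ccZ Y
  add_mem' {a b} ha hb := ⟨ha.1.add hb.1, ha.2.add hb.2⟩
  zero_mem' := ⟨continuous_const, by
    have h : tsupport (0 : Y → ℤ) = ∅ := by simp [tsupport]
    unfold HasCompactSupport
    rw [h]; exact isCompact_empty⟩
  neg_mem' {a} ha := ⟨ha.1.neg, ha.2.neg⟩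

@[simp] lemma mem_ccZSub {Y : Type v} [TopologicalSpace Y] (f : Y → ℤ) :
    f ∈ ccZSub Y ↔ f ∈ ccZ Y := Iff.rfl

/-- The pushforward `φ_*(a)(y) = ∑_{x ∈ φ⁻¹(y)} a x` of a function along a map. -/
def pushf {X : Type v} {Y : Type w} (φ : X → Y) (a : X → ℤ) : Y → ℤ :=
  fun y => ∑ᶠ x ∈ φ ⁻¹' {y}, a x

/-- The generated equivalence relation. -/
inductive RelGen {α : Sort*} (r : α → α → Prop) : α → α → Prop
  | rel {x y} : r x y → RelGen r x y
  | refl (x) : RelGen r x x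
  | symm {x y} : RelGen r x y → RelGen r y x
  | trans {x y z} : RelGen r x y → RelGen r y z → RelGen r x z

/-- The purely algebraic data of a topological groupoid, with arrow space `G`:
the set of units, source and range maps (valued in units), a (junk-total)
partially defined composition, and inversion. -/
structure GroupoidData (G : Type u) where
  unitSpace : Set G
  source : G → G
  range : G → G
  mul : G → G → G
  inv : G → G

namespace GroupoidData

variable {G : Type u} (D : GroupoidData G)

/-- The product of two subsets of a groupoid. -/
def setMul (A B : Set G) : Set G :=
  {w | ∃ a ∈ A, ∃ b ∈ B, D.source a = D.range b ∧ w = D.mul a b}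

/-- A bisection: a subset on which both the source and the range map are injective. -/
def IsBisection (B : Set G) : Prop := Set.InjOn D.source B ∧ Set.InjOn D.range B

/-- Membership in the subgroupoid generated by a subset `A` of `G`. -/
inductive InSubgroupoid (A : Set G) : G → Prop
  | base {g} : g ∈ A → InSubgroupoid A g
  | inv {g} : InSubgroupoid A g → InSubgroupoid A (D.inv g)
  | mul {g h} : InSubgroupoid A g → InSubgroupoid A h → D.source g = D.range h →
      InSubgroupoid A (D.mul g h)

/-- `G` is a (locally compact, Hausdorff, étale) ample groupoid: all the algebraic groupoid
axioms hold, the structure maps are suitably continuous, the source and range maps are local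
homeomorphisms onto the open unit space (étaleness), and the compact open bisections form a
basis for the topology (ampleness). -/
structure IsAmpleGroupoid [TopologicalSpace G] : Prop where
  t2 : T2Space G
  locallyCompact : LocallyCompactSpace G
  source_mem : ∀ g, D.source g ∈ D.unitSpace
  range_mem : ∀ g, D.range g ∈ D.unitSpace
  source_unit : ∀ x ∈ D.unitSpace, D.source x = x
  range_unit : ∀ x ∈ D.unitSpace, D.range x = x
  source_mul : ∀ g h, D.source g = D.range h → D.source (D.mul g h) = D.source h
  range_mul : ∀ g h, D.source g = D.range h → D.range (D.mul g h) = D.range g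
  mul_assoc : ∀ g h k, D.source g = D.range h → D.source h = D.range k →
      D.mul (D.mul g h) k = D.mul g (D.mul h k)
  source_inv : ∀ g, D.source (D.inv g) = D.range g
  range_inv : ∀ g, D.range (D.inv g) = D.source g
  inv_mul : ∀ g, D.mul (D.inv g) g = D.source g
  mul_inv : ∀ g, D.mul g (D.inv g) = D.range g
  unit_mul : ∀ g, D.mul (D.range g) g = g
  mul_unit : ∀ g, D.mul g (D.source g) = g
  continuous_inv : Continuous D.inv
  continuous_mul : Continuous fun p : {p : G × G // D.source p.1 = D.range p.2} =>
      D.mul p.1.1 p.1.2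
  open_unitSpace : IsOpen D.unitSpace
  etale_source : IsLocalHomeomorph D.source
  etale_range : IsLocalHomeomorph D.range
  ample : ∀ g : G, ∀ U : Set G, IsOpen U → g ∈ U →
      ∃ B : Set G, g ∈ B ∧ B ⊆ U ∧ IsOpen B ∧ IsCompact B ∧ D.IsBisection B

/-- A groupoid is principal if every arrow with equal range and source is a unit. -/
def IsPrincipal : Prop := ∀ g, D.source g = D.range g → g ∈ D.unitSpace

/-- `G` has dynamic asymptotic dimension at most `d`: for every relatively compact open
subset `K` of `G` there are `d+1` open subsets of the unit space covering `r(K) ∪ s(K)` such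
that the subgroupoid generated by the elements of `K` with source and range in one of these
sets is relatively compact. -/
def DadLE [TopologicalSpace G] (d : ℕ) : Prop :=
  ∀ K : Set G, IsOpen K → IsCompact (closure K) →
    ∃ U : Fin (d + 1) → Set G,
      (∀ i, IsOpen (U i) ∧ U i ⊆ D.unitSpace) ∧
      (D.range '' K ∪ D.source '' K ⊆ ⋃ i, U i) ∧
      ∀ i, IsCompact (closure
        {g | D.InSubgroupoid {g ∈ K | D.source g ∈ U i ∧ D.range g ∈ U i} g})

/-! ### Matui's complex computing the Crainic–Moerdijk groupoid homology `H_*(G)` -/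

/-- The space `G^(n)` of composable `n`-tuples. -/
def Comps (n : ℕ) : Set (Fin n → G) :=
  {v | ∀ (j : Fin n) (h : (j : ℕ) + 1 < n), D.source (v j) = D.range (v ⟨(j : ℕ) + 1, h⟩)}

/-- The face maps of Matui's complex on tuples:
`d_0` drops the first entry, `d_{n+1}` drops the last one, and the intermediate
`d_i` compose two consecutive entries. -/
def dface (n : ℕ) (i : Fin (n + 2)) (v : Fin (n + 1) → G) : Fin n → G := fun j =>
  if (j : ℕ) + 1 < (i : ℕ) then v j.castSucc
  else if (j : ℕ) + 1 = (i : ℕ) then D.mul (v j.castSucc) (v j.succ)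
  else v j.succ

/-- The spaces of Matui's complex: `G^0` in degree `0`, and `G^(n)` in degree `n ≥ 1`. -/
def MSp : ℕ → Type u
  | 0 => ↥(D.unitSpace)
  | (n + 1) => ↥(D.Comps (n + 1))

instance [TopologicalSpace G] (n : ℕ) : TopologicalSpace (D.MSp n) := by
  cases n with
  | zero => exact (inferInstance : TopologicalSpace ↥(D.unitSpace))
  | succ n => exact (inferInstance : TopologicalSpace ↥(D.Comps (n + 1)))

/-- The boundary maps of Matui's complex, given by alternating sums of pushforwards
along the face maps (in degree one, `∂₁ = s_* - r_*`). -/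
def mBdry : (n : ℕ) → ((D.MSp (n + 1)) → ℤ) → (D.MSp n) → ℤ
  | 0, a => fun u =>
      (∑ᶠ x ∈ {x : ↥(D.Comps 1) | D.source (x.1 0) = u.1}, a x)
        - ∑ᶠ x ∈ {x : ↥(D.Comps 1) | D.range (x.1 0) = u.1}, a x
  | (n + 1), a => fun y =>
      ∑ i : Fin (n + 3), (-1 : ℤ) ^ (i : ℕ) *
        ∑ᶠ x ∈ {x : ↥(D.Comps (n + 2)) | D.dface (n + 1) i x.1 = y.1}, a x

variable [TopologicalSpace G]

/-- The cycle subgroup of Matui's complex in degree `n`. -/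
def mCycles : (n : ℕ) → AddSubgroup ((D.MSp n) → ℤ)
  | 0 => ccZSub (D.MSp 0)
  | (n + 1) => AddSubgroup.closure {a | a ∈ ccZ (D.MSp (n + 1)) ∧ D.mBdry n a = 0}

/-- The boundary subgroup of Matui's complex in degree `n`. -/
def mBdries (n : ℕ) : AddSubgroup ((D.MSp n) → ℤ) :=
  AddSubgroup.closure {c | ∃ a ∈ ccZ (D.MSp (n + 1)), D.mBdry n a = c}

/-- The groupoid homology `H_n(G)` (Crainic–Moerdijk homology, computed by Matui's complex). -/
def Homology (n : ℕ) : Type u :=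
  (D.mCycles n) ⧸ AddSubgroup.comap (D.mCycles n).subtype (D.mBdries n)

instance (n : ℕ) : AddCommGroup (D.Homology n) :=
  QuotientAddGroup.Quotient.addCommGroup _

/-- The homology class of a cycle. -/
def hcls {n : ℕ} (a : (D.MSp n) → ℤ) (ha : a ∈ D.mCycles n) : D.Homology n :=
  QuotientAddGroup.mk ⟨a, ha⟩

end GroupoidData
namespace GroupoidData

variable {G : Type u} {D : GroupoidData G}

/-- The data of a left `G`-space: an anchor map `p : X → G⁰ ⊆ G` and a (junk-total)
action map. -/
structure GSpaceData (D : GroupoidData G) (X : Type v) where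
  anchor : X → G
  act : G → X → X

variable {X : Type v}

/-- The axioms of an étale left `G`-space. -/
structure GSpaceData.IsGSpace [TopologicalSpace G] [TopologicalSpace X]
    (S : D.GSpaceData X) : Prop where
  anchor_mem : ∀ x, S.anchor x ∈ D.unitSpace
  act_anchor : ∀ g x, D.source g = S.anchor x → S.anchor (S.act g x) = D.range g
  act_act : ∀ g h x, D.source g = D.range h → D.source h = S.anchor x →
      S.act g (S.act h x) = S.act (D.mul g h) x
  act_unit : ∀ x, S.act (S.anchor x) x = x
  continuous_act : Continuous fun q : {q : G × X // D.source q.1 = S.anchor q.2} =>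
      S.act q.1.1 q.1.2
  etale_anchor : IsLocalHomeomorph S.anchor

/-- Freeness of a `G`-space. -/
def GSpaceData.IsFree (S : D.GSpaceData X) : Prop :=
  ∀ g x, D.source g = S.anchor x → S.act g x = x → g = S.anchor x

/-- Properness of a `G`-space. -/
def GSpaceData.IsProper [TopologicalSpace G] [TopologicalSpace X]
    (S : D.GSpaceData X) : Prop :=
  IsProperMap fun q : {q : G × X // D.source q.1 = S.anchor q.2} =>
    ((S.act q.1.1 q.1.2, q.1.2) : X × X)

/-- The orbit relation of a `G`-space. -/
def GSpaceData.orbRel (S : D.GSpaceData X) (x y : X) : Prop :=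
  ∃ g, D.source g = S.anchor x ∧ y = S.act g x

/-- The quotient `G\X` of a `G`-space. -/
def GSpaceData.Quot' (S : D.GSpaceData X) : Type v := Quot S.orbRel

/-- The quotient topology on `G\X`. -/
def GSpaceData.quotTop [TopologicalSpace X] (S : D.GSpaceData X) :
    TopologicalSpace S.Quot' :=
  TopologicalSpace.coinduced (Quot.mk S.orbRel) inferInstance

/-- The `ℤ[G]`-module action on `ℤ[X]`:
`(f·a)(x) = ∑_{g ∈ G^{p(x)}} f(g) a(g⁻¹x)`. -/
def GSpaceData.actFun (S : D.GSpaceData X) (f : G → ℤ) (a : X → ℤ) : X → ℤ :=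
  fun x => ∑ᶠ g : G, if D.range g = S.anchor x then f g * a (S.act (D.inv g) x) else 0

/-- The action of the augmentation `ε(f)` on `ℤ[X]`. -/
def GSpaceData.epsFun (S : D.GSpaceData X) (f : G → ℤ) (a : X → ℤ) : X → ℤ :=
  fun x => (∑ᶠ g ∈ {g : G | D.source g = S.anchor x}, f g) * a x

/-- The subgroup of `ℤ[X]` generated by the elements `f·a - ε(f)·a`. -/
def GSpaceData.coinvRel [TopologicalSpace G] [TopologicalSpace X]
    (S : D.GSpaceData X) : AddSubgroup (X → ℤ) :=
  AddSubgroup.closure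
    {c | ∃ f a, f ∈ ccZ G ∧ a ∈ ccZ X ∧ c = S.actFun f a - S.epsFun f a}

/-- The coinvariants `ℤ[X]_G`. -/
def GSpaceData.Coinv [TopologicalSpace G] [TopologicalSpace X]
    (S : D.GSpaceData X) : Type v :=
  ↥(ccZSub X) ⧸ AddSubgroup.comap (ccZSub X).subtype S.coinvRel

instance [TopologicalSpace G] [TopologicalSpace X] (S : D.GSpaceData X) :
    AddCommGroup S.Coinv := QuotientAddGroup.Quotient.addCommGroup _

/-- The class of `f ∈ ℤ[X]` in the coinvariants `ℤ[X]_G`. -/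
def GSpaceData.coinvCls [TopologicalSpace G] [TopologicalSpace X]
    (S : D.GSpaceData X) (f : X → ℤ) (hf : f ∈ ccZ X) : S.Coinv :=
  QuotientAddGroup.mk ⟨f, hf⟩

end GroupoidData

/-! ### Helper lemmas -/

section Helpers

open Topology

/-- Indicator of a clopen compact set is in `ℤ[Y]`. -/
lemma ind_mem_ccZ {Y : Type v} [TopologicalSpace Y] [T2Space Y] {U : Set Y}
    (ho : IsOpen U) (hc : IsCompact U) : U.indicator (1 : Y → ℤ) ∈ ccZ Y := by
  refine ⟨?_, ?_⟩
  · exact IsClopen.continuous_indicator ⟨hc.isClosed, ho⟩ continuous_one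
  · refine HasCompactSupport.intro hc fun x hx => by simp [hx]

/-- Decomposition of functions into indicators of small sets. -/
lemma ccZ_mem_closure {Y : Type v} [TopologicalSpace Y] [T2Space Y] (P : Set Y → Prop)
    (hop : ∀ U, P U → IsOpen U) (hcp : ∀ U, P U → IsCompact U)
    (hsub : ∀ U D, P U → IsClopen D → P (U ∩ D))
    (f : Y → ℤ) (hf : f ∈ ccZ Y)
    (hb : ∀ y, f y ≠ 0 → ∀ O : Set Y, IsOpen O → y ∈ O → ∃ U, P U ∧ y ∈ U ∧ U ⊆ O) :
    f ∈ AddSubgroup.closure {c : Y → ℤ | ∃ U, P U ∧ c = U.indicator 1} := by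
  have hsupp : IsClosed (support f) := by
    have : support f = f ⁻¹' {0}ᶜ := by ext; simp
    rw [this]; exact (isClosed_discrete _).preimage hf.1
  have hK : IsCompact (support f) := by
    have := hf.2
    rwa [HasCompactSupport, tsupport, hsupp.closure_eq] at this
  have key : ∃ C : Set Y, IsClopen C ∧ support f ⊆ C ∧ ∀ D, IsClopen D →
      (C ∩ D).indicator f ∈ AddSubgroup.closure {c : Y → ℤ | ∃ U, P U ∧ c = U.indicator 1} := by
    refine hK.induction_on (p := fun s => ∃ C : Set Y, IsClopen C ∧ s ⊆ C ∧ ∀ D, IsClopen D →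
      (C ∩ D).indicator f ∈ AddSubgroup.closure {c : Y → ℤ | ∃ U, P U ∧ c = U.indicator 1})
      ?_ ?_ ?_ ?_
    · refine ⟨∅, isClopen_empty, le_rfl, fun D _ => ?_⟩
      simp only [Set.empty_inter, Set.indicator_empty]
      exact zero_mem _
    · rintro s t hst ⟨C, h1, h2, h3⟩
      exact ⟨C, h1, hst.trans h2, h3⟩
    · rintro s t ⟨C, h1, h2, h3⟩ ⟨C', h1', h2', h3'⟩
      refine ⟨C ∪ C', h1.union h1', union_subset_union h2 h2', fun D hD => ?_⟩
      have : ((C ∪ C') ∩ D).indicator f = (C ∩ D).indicator f + (C' ∩ (D \ C)).indicator f := by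
        ext x
        by_cases a : x ∈ C <;> by_cases b : x ∈ C' <;> by_cases c : x ∈ D <;>
          simp [Set.indicator, a, b, c]
      rw [this]
      exact add_mem (h3 _ hD) (h3' _ (hD.diff h1))
    · intro x hx
      obtain ⟨U, hU, hxU, hUO⟩ := hb x hx (f ⁻¹' {f x})
        ((isOpen_discrete _).preimage hf.1) rfl
      refine ⟨U, mem_nhdsWithin_of_mem_nhds ((hop U hU).mem_nhds hxU), U,
        ⟨(hcp U hU).isClosed, hop U hU⟩, le_rfl, fun D hD => ?_⟩
      have : (U ∩ D).indicator f = f x • (U ∩ D).indicator (1 : Y → ℤ) := by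
        ext y
        by_cases h : y ∈ U ∩ D
        · have := hUO h.1
          simp only [mem_preimage, mem_singleton_iff] at this
          simp [h, this]
        · simp [h]
      rw [this]
      refine zsmul_mem (AddSubgroup.subset_closure ?_) _
      exact ⟨U ∩ D, hsub U D hU hD, rfl⟩
  obtain ⟨C, -, h2, h3⟩ := key
  have := h3 univ isClopen_univ
  rwa [inter_univ, Set.indicator_eq_self.2 h2] at this

set_option linter.unusedSectionVars false

namespace GroupoidData

attribute [local instance] GSpaceData.quotTop

variable {G : Type u} [TopologicalSpace G] {D : GroupoidData G}
  {X : Type v} [TopologicalSpace X] {S : D.GSpaceData X}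

/-- The quotient map. -/
def qmk (S : D.GSpaceData X) : X → S.Quot' := Quot.mk S.orbRel

lemma act_inv_act (hA : D.IsAmpleGroupoid) (hS : S.IsGSpace) {g : G} {x : X}
    (h : D.source g = S.anchor x) : S.act (D.inv g) (S.act g x) = x := by
  rw [hS.act_act _ _ _ (hA.source_inv g) h, hA.inv_mul, h, hS.act_unit]

lemma orbRel_equiv (hA : D.IsAmpleGroupoid) (hS : S.IsGSpace) : Equivalence S.orbRel where
  refl x := ⟨S.anchor x, hA.source_unit _ (hS.anchor_mem x), (hS.act_unit x).symm⟩
  symm := by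
    rintro x y ⟨g, hg, rfl⟩
    exact ⟨D.inv g, by rw [hA.source_inv, hS.act_anchor _ _ hg], (act_inv_act hA hS hg).symm⟩
  trans := by
    rintro x y z ⟨g, hg, rfl⟩ ⟨h, hh, rfl⟩
    rw [hS.act_anchor _ _ hg] at hh
    exact ⟨D.mul h g, by rw [hA.source_mul _ _ hh, hg], by rw [hS.act_act _ _ _ hh hg]⟩

lemma qmk_eq (hA : D.IsAmpleGroupoid) (hS : S.IsGSpace) {x y : X} :
    qmk S x = qmk S y ↔ ∃ g, D.source g = S.anchor x ∧ y = S.act g x := by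
  have h : (Quot.mk S.orbRel x = Quot.mk S.orbRel y) ↔ S.orbRel x y := by
    rw [Quot.eq, (orbRel_equiv hA hS).eqvGen_iff]
  exact h

/-- local form of continuity of the action -/
lemma act_nhds (hS : S.IsGSpace) {g : G} {x : X} (h : D.source g = S.anchor x)
    {O : Set X} (hO : IsOpen O) (hm : S.act g x ∈ O) :
    ∃ N M, IsOpen N ∧ IsOpen M ∧ g ∈ N ∧ x ∈ M ∧
      ∀ g' ∈ N, ∀ x' ∈ M, D.source g' = S.anchor x' → S.act g' x' ∈ O := by
  obtain ⟨V, hV, hVe⟩ := isOpen_induced_iff.1 (hO.preimage hS.continuous_act)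
  have hmem : (g, x) ∈ V := by
    have : (⟨(g, x), h⟩ : {q : G × X // D.source q.1 = S.anchor q.2}) ∈ Subtype.val ⁻¹' V := by
      rw [hVe]; exact hm
    exact this
  obtain ⟨N, M, hN, hM, hgN, hxM, hNM⟩ := isOpen_prod_iff.1 hV g x hmem
  refine ⟨N, M, hN, hM, hgN, hxM, fun g' hg' x' hx' h' => ?_⟩
  have : (⟨(g', x'), h'⟩ : {q : G × X // D.source q.1 = S.anchor q.2}) ∈ Subtype.val ⁻¹' V :=
    hNM ⟨hg', hx'⟩
  rw [hVe] at this
  exact this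

lemma qmk_openQuot (hA : D.IsAmpleGroupoid) (hS : S.IsGSpace) :
    IsOpenQuotientMap (qmk S) := by
  refine ⟨Quot.mk_surjective, continuous_coinduced_rng, ?_⟩
  intro U hU
  refine isOpen_coinduced.2 ?_
  rw [isOpen_iff_mem_nhds]
  rintro y ⟨u, hu, huy⟩
  obtain ⟨g, hg, rfl⟩ := (qmk_eq hA hS).1 (show qmk S y = qmk S u from huy.symm)
  obtain ⟨N, M, hN, hM, hgN, hyM, h⟩ := act_nhds hS hg hU hu
  have h1 : IsOpen (M ∩ S.anchor ⁻¹' (D.source '' N)) :=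
    hM.inter ((hA.etale_source.isOpenMap _ hN).preimage hS.etale_anchor.continuous)
  refine Filter.mem_of_superset (h1.mem_nhds ⟨hyM, g, hgN, hg⟩) ?_
  rintro z ⟨hz, g', hg', hz'⟩
  exact ⟨S.act g' z, h g' hg' z hz hz', ((qmk_eq hA hS).2 ⟨g', hz', rfl⟩).symm⟩

lemma quot_t2 (hA : D.IsAmpleGroupoid) (hS : S.IsGSpace) (hp : S.IsProper) :
    T2Space S.Quot' := by
  rw [t2Space_iff_of_isOpenQuotientMap (qmk_openQuot hA hS)]
  have : {q : X × X | qmk S q.1 = qmk S q.2} =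
      Set.range fun q : {q : G × X // D.source q.1 = S.anchor q.2} =>
        ((S.act q.1.1 q.1.2, q.1.2) : X × X) := by
    ext ⟨a, b⟩
    constructor
    · intro h
      obtain ⟨g, hg, rfl⟩ := (qmk_eq hA hS).1 (show qmk S b = qmk S a from Eq.symm h)
      exact ⟨⟨(g, b), hg⟩, rfl⟩
    · rintro ⟨⟨⟨g, x⟩, h⟩, e⟩
      simp only [Prod.mk.injEq] at e
      obtain ⟨rfl, rfl⟩ := e
      exact ((qmk_eq hA hS).2 ⟨g, h, rfl⟩).symm
  rw [this]
  exact hp.isClosedMap.isClosed_range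

/-- Small sets. -/
def Small (S : D.GSpaceData X) (U : Set X) : Prop :=
  IsOpen U ∧ IsCompact U ∧ InjOn (qmk S) U ∧ InjOn S.anchor U

lemma act_inj (hA : D.IsAmpleGroupoid) (hS : S.IsGSpace) (hfree : S.IsFree) {g h : G} {x : X}
    (hg : D.source g = S.anchor x) (hh : D.source h = S.anchor x)
    (e : S.act g x = S.act h x) : g = h := by
  have hr : D.range g = D.range h := by
    rw [← hS.act_anchor _ _ hg, ← hS.act_anchor _ _ hh, e]
  have h1 : D.source (D.inv h) = D.range g := by rw [hA.source_inv, hr]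
  have h2 : S.act (D.mul (D.inv h) g) x = x := by
    rw [← hS.act_act _ _ _ h1 hg, e, act_inv_act hA hS hh]
  have h3 := hfree _ _ (by rw [hA.source_mul _ _ h1, hg]) h2
  have h4 : D.mul h (D.mul (D.inv h) g) = D.mul h (D.source h) := by rw [h3, hh]
  rw [← hA.mul_assoc _ _ _ (hA.range_inv h).symm h1, hA.mul_inv, ← hr, hA.unit_mul,
    hA.mul_unit] at h4
  exact h4

lemma exists_small (hA : D.IsAmpleGroupoid) (hS : S.IsGSpace) (hfree : S.IsFree)
    (hp : S.IsProper) (x : X) (O : Set X) (hO : IsOpen O) (hx : x ∈ O) :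
    ∃ U, Small S U ∧ x ∈ U ∧ U ⊆ O := by
  have hemb : IsClosedEmbedding fun q : {q : G × X // D.source q.1 = S.anchor q.2} =>
    ((S.act q.1.1 q.1.2, q.1.2) : X × X) := by
    refine IsClosedEmbedding.of_continuous_injective_isClosedMap hp.continuous ?_ hp.isClosedMap
    rintro ⟨⟨g, y⟩, hg⟩ ⟨⟨h, z⟩, hh⟩ e
    simp only [Prod.mk.injEq] at e
    obtain ⟨e1, rfl⟩ := e
    have := act_inj hA hS hfree hg hh e1
    subst this; rfl
  have hunit : IsOpen {q : {q : G × X // D.source q.1 = S.anchor q.2} | q.1.1 ∈ D.unitSpace} :=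
    hA.open_unitSpace.preimage (continuous_fst.comp continuous_subtype_val)
  obtain ⟨V, hV, hVe⟩ := hemb.isInducing.isOpen_iff.1 hunit
  have hsx : D.source (S.anchor x) = S.anchor x := hA.source_unit _ (hS.anchor_mem x)
  have hxV : (x, x) ∈ V := by
    have : (⟨(S.anchor x, x), hsx⟩ : {q : G × X // D.source q.1 = S.anchor q.2}) ∈
        {q : {q : G × X // D.source q.1 = S.anchor q.2} | q.1.1 ∈ D.unitSpace} :=
      hS.anchor_mem x
    rw [← hVe] at this
    simpa [hS.act_unit] using this
  obtain ⟨M, M', hM, hM', hxM, hxM', hMM⟩ := isOpen_prod_iff.1 hV x x hxV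
  obtain ⟨e, hxe, he⟩ := hS.etale_anchor x
  set W := e.source ∩ (M ∩ M' ∩ O) with hWdef
  have hWo : IsOpen W := e.open_source.inter ((hM.inter hM').inter hO)
  have hxW : x ∈ W := ⟨hxe, ⟨hxM, hxM'⟩, hx⟩
  have hinj : InjOn S.anchor W := by
    rw [he]; exact e.injOn.mono inter_subset_left
  obtain ⟨B, hxB, hBW, hBo, hBc, -⟩ := hA.ample (S.anchor x) (S.anchor '' W)
    (hS.etale_anchor.isOpenMap _ hWo) ⟨x, hxW, rfl⟩
  have hBt : B ⊆ e.target := by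
    intro b hb
    obtain ⟨w, hw, rfl⟩ := hBW hb
    rw [he]; exact e.map_source hw.1
  refine ⟨W ∩ S.anchor ⁻¹' B, ⟨hWo.inter (hBo.preimage hS.etale_anchor.continuous), ?_, ?_, ?_⟩,
    ⟨hxW, hxB⟩, fun y hy => hy.1.2.2⟩
  · have : W ∩ S.anchor ⁻¹' B = e.symm '' B := by
      ext y
      constructor
      · rintro ⟨hy, hyB⟩
        refine ⟨S.anchor y, hyB, ?_⟩
        rw [he]; exact e.left_inv hy.1
      · rintro ⟨b, hb, rfl⟩
        obtain ⟨w, hw, rfl⟩ := hBW hb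
        have : e.symm (S.anchor w) = w := by rw [he]; exact e.left_inv hw.1
        rw [this]; exact ⟨hw, hb⟩
    rw [this]
    exact hBc.image_of_continuousOn (e.continuousOn_symm.mono hBt)
  · intro y hy z hz h
    obtain ⟨g, hg, rfl⟩ := (qmk_eq hA hS).1 h
    have : (⟨(g, y), hg⟩ : {q : G × X // D.source q.1 = S.anchor q.2}) ∈
        {q : {q : G × X // D.source q.1 = S.anchor q.2} | q.1.1 ∈ D.unitSpace} := by
      rw [← hVe]
      exact hMM ⟨hz.1.2.1.1, hy.1.2.1.2⟩
    have hu : D.source g = g := hA.source_unit _ this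
    rw [← hu, hg, hS.act_unit]
  · exact hinj.mono inter_subset_left

lemma Small.inter {U C : Set X} (hU : Small S U) (hC : IsClopen C) : Small S (U ∩ C) :=
  ⟨hU.1.inter hC.2, hU.2.1.inter_right hC.1, hU.2.2.1.mono inter_subset_left,
    hU.2.2.2.mono inter_subset_left⟩

lemma finite_fiber (hA : D.IsAmpleGroupoid) {K : Set G} (hK : IsCompact K) (y : G) :
    {g | g ∈ K ∧ D.source g = y}.Finite := by
  refine hK.induction_on (p := fun s => {g | g ∈ s ∧ D.source g = y}.Finite) ?_ ?_ ?_ ?_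
  · simp
  · intro s t hst h
    exact h.subset fun g hg => ⟨hst hg.1, hg.2⟩
  · intro s t h h'
    refine (h.union h').subset ?_
    rintro g ⟨hg | hg, h⟩
    · exact Or.inl ⟨hg, h⟩
    · exact Or.inr ⟨hg, h⟩
  · intro g _
    obtain ⟨B, hgB, -, hBo, -, hB, -⟩ := hA.ample g univ isOpen_univ (mem_univ _)
    refine ⟨B, mem_nhdsWithin_of_mem_nhds (hBo.mem_nhds hgB), ?_⟩
    refine Set.Subsingleton.finite ?_
    rintro a ⟨ha, ha'⟩ b ⟨hb, hb'⟩
    exact hB ha hb (ha'.trans hb'.symm)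

/-- Finite support along orbits. -/
def OFin (S : D.GSpaceData X) (f : X → ℤ) : Prop :=
  ∀ x, ({g : G | D.source g = S.anchor x} ∩ support fun g => f (S.act g x)).Finite

/-- The summation map. -/
def Tm (S : D.GSpaceData X) (f : X → ℤ) (x : X) : ℤ :=
  ∑ᶠ g ∈ {g : G | D.source g = S.anchor x}, f (S.act g x)

lemma ccZ_OFin (hA : D.IsAmpleGroupoid) (hp : S.IsProper) {f : X → ℤ} (hf : f ∈ ccZ X) :
    OFin S f := by
  intro x
  have h1 := hp.isCompact_preimage (IsCompact.prod (show IsCompact (tsupport f) from hf.2)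
    (isCompact_singleton (x := x)))
  have h2 := h1.image (continuous_fst.comp continuous_subtype_val)
  refine (finite_fiber hA h2 (S.anchor x)).subset ?_
  rintro g ⟨hg, hg'⟩
  exact ⟨⟨⟨(g, x), hg⟩, ⟨subset_tsupport f hg', rfl⟩, rfl⟩, hg⟩

lemma OFin.add {f f' : X → ℤ} (h : OFin S f) (h' : OFin S f') : OFin S (f + f') := by
  intro x
  refine ((h x).union (h' x)).subset ?_
  rintro g ⟨hg, hg'⟩
  by_cases h0 : f (S.act g x) = 0
  · refine Or.inr ⟨hg, fun h1 => hg' ?_⟩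
    simp only [Pi.add_apply] at *
    simp [h0, h1]
  · exact Or.inl ⟨hg, h0⟩

lemma OFin.neg {f : X → ℤ} (h : OFin S f) : OFin S (-f) := by
  intro x
  refine (h x).subset ?_
  rintro g ⟨hg, hg'⟩
  exact ⟨hg, fun h0 => hg' (by simpa using h0)⟩

lemma OFin.zero : OFin S (0 : X → ℤ) := by
  intro x
  convert Set.finite_empty
  ext; simp

lemma Tm_add {f f' : X → ℤ} (h : OFin S f) (h' : OFin S f') :
    Tm S (f + f') = Tm S f + Tm S f' := by
  ext x
  exact finsum_mem_add_distrib' (h x) (h' x)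

lemma Tm_zero : Tm S (0 : X → ℤ) = 0 := by
  ext x; simp [Tm]

lemma Tm_neg {f : X → ℤ} (h : OFin S f) : Tm S (-f) = - Tm S f := by
  have := Tm_add h h.neg
  rw [add_neg_cancel, Tm_zero] at this
  exact (neg_eq_of_add_eq_zero_right this.symm).symm

lemma Tm_act (hA : D.IsAmpleGroupoid) (hS : S.IsGSpace) (f : X → ℤ) {h : G} {x : X}
    (hh : D.source h = S.anchor x) : Tm S f (S.act h x) = Tm S f x := by
  unfold Tm
  refine finsum_mem_eq_of_bijOn (fun g => D.mul g h) ⟨?_, ?_, ?_⟩ ?_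
  · intro g hg
    simp only [mem_ofPred_eq] at *
    rw [hS.act_anchor _ _ hh] at hg
    rw [hA.source_mul _ _ hg, hh]
  · intro a ha b hb e
    simp only [mem_ofPred_eq] at *
    rw [hS.act_anchor _ _ hh] at ha hb
    have := congrArg (fun k => D.mul k (D.inv h)) e
    rw [hA.mul_assoc _ _ _ ha (hA.range_inv h).symm, hA.mul_assoc _ _ _ hb (hA.range_inv h).symm,
      hA.mul_inv, ← ha, hA.mul_unit, ha, ← hb, hA.mul_unit] at this
    exact this
  · intro k hk
    simp only [mem_ofPred_eq, mem_image] at *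
    have h1 : D.source k = D.range (D.inv h) := by rw [hA.range_inv, hh, hk]
    refine ⟨D.mul k (D.inv h), ?_, ?_⟩
    · rw [hA.source_mul _ _ h1, hA.source_inv, hS.act_anchor _ _ hh]
    · rw [hA.mul_assoc _ _ _ h1 (hA.source_inv h), hA.inv_mul, hh, ← hk, hA.mul_unit]
  · intro g hg
    simp only [mem_ofPred_eq] at *
    rw [hS.act_anchor _ _ hh] at hg
    rw [hS.act_act _ _ _ hg hh]

/-- If `qmk` is injective on `W` and `f` vanishes off `W`, `Tm f = f` on `W`. -/
lemma Tm_eq_of_inj (hA : D.IsAmpleGroupoid) (hS : S.IsGSpace) (hfree : S.IsFree)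
    {W : Set X} (hW : InjOn (qmk S) W) {f : X → ℤ} (hf : ∀ x, x ∉ W → f x = 0)
    {x : X} (hx : x ∈ W) : Tm S f x = f x := by
  unfold Tm
  rw [finsum_mem_def, finsum_eq_single _ (S.anchor x)]
  · have : S.anchor x ∈ {g : G | D.source g = S.anchor x} := hA.source_unit _ (hS.anchor_mem x)
    rw [Set.indicator_of_mem this, hS.act_unit]
  · intro g hg
    by_cases h : D.source g = S.anchor x
    · rw [Set.indicator_of_mem (by exact h)]
      apply hf
      intro hm
      exact hg (hfree g x h (hW hx hm ((qmk_eq hA hS).2 ⟨g, h, rfl⟩)).symm)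
    · exact Set.indicator_of_notMem (s := {g : G | D.source g = S.anchor x}) h _

lemma Tm_ind (hA : D.IsAmpleGroupoid) (hS : S.IsGSpace) (hfree : S.IsFree)
    {W : Set X} (hW : InjOn (qmk S) W) (x : X) :
    Tm S (W.indicator 1) x = (qmk S '' W).indicator 1 (qmk S x) := by
  by_cases h : qmk S x ∈ qmk S '' W
  · rw [Set.indicator_of_mem h]
    obtain ⟨w, hw, e⟩ := h
    obtain ⟨g, hg, rfl⟩ := (qmk_eq hA hS).1 e
    rw [Tm_act hA hS _ hg, Tm_eq_of_inj hA hS hfree hW (fun x hx => Set.indicator_of_notMem hx _) hw]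
    simp [hw]
  · rw [Set.indicator_of_notMem h]
    refine finsum_mem_eq_zero_of_forall_eq_zero fun g hg => ?_
    refine Set.indicator_of_notMem (s := W) (fun hm => h ⟨_, hm, ?_⟩) _
    exact ((qmk_eq hA hS).2 ⟨g, hg, rfl⟩).symm

lemma coinv_gen (hA : D.IsAmpleGroupoid) (hS : S.IsGSpace) (hp : S.IsProper)
    {f : G → ℤ} {a : X → ℤ} (hf : f ∈ ccZ G) (ha : a ∈ ccZ X) :
    OFin S (S.actFun f a) ∧ OFin S (S.epsFun f a) ∧
      Tm S (S.actFun f a) = Tm S (S.epsFun f a) := by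
  have hao := ccZ_OFin hA hp ha
  have hff : ∀ y, ({g : G | D.source g = y} ∩ support f).Finite := fun y =>
    (finite_fiber hA (show IsCompact (tsupport f) from hf.2) y).subset
      fun g hg => ⟨subset_tsupport f hg.2, hg.1⟩
  have key : ∀ x : X, ∃ A B : Set (G × G), ∃ F H : G × G → ℤ,
      A = {q | D.source q.1 = S.anchor x ∧ D.range q.2 = D.range q.1} ∧
      B = {q | D.source q.1 = S.anchor x ∧ D.source q.2 = D.range q.1} ∧
      (F = fun q => f q.2 * a (S.act (D.inv q.2) (S.act q.1 x))) ∧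
      (H = fun q => f q.2 * a (S.act q.1 x)) ∧
      (B ∩ support H).Finite ∧ (A ∩ support F).Finite ∧
      ∑ᶠ q ∈ A, F q = ∑ᶠ q ∈ B, H q := by
    intro x
    refine ⟨_, _, _, _, rfl, rfl, rfl, rfl, ?_⟩
    have hbij : BijOn (fun q : G × G => (D.mul q.2 q.1, q.2))
        {q | D.source q.1 = S.anchor x ∧ D.source q.2 = D.range q.1}
        {q | D.source q.1 = S.anchor x ∧ D.range q.2 = D.range q.1} := by
      refine ⟨?_, ?_, ?_⟩
      · rintro ⟨k, g⟩ ⟨h1, h2⟩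
        exact ⟨(hA.source_mul _ _ h2).trans h1, (hA.range_mul _ _ h2).symm⟩
      · rintro ⟨k, g⟩ ⟨h1, h2⟩ ⟨k', g'⟩ ⟨h1', h2'⟩ e
        simp only [Prod.mk.injEq] at e h1 h2 h1' h2'
        obtain ⟨e, rfl⟩ := e
        have := congrArg (fun l => D.mul (D.inv g) l) e
        rw [← hA.mul_assoc _ _ _ (hA.source_inv g) h2, ← hA.mul_assoc _ _ _ (hA.source_inv g) h2',
          hA.inv_mul, h2, hA.unit_mul, ← h2, h2', hA.unit_mul] at this
        rw [this]
      · rintro ⟨h, g⟩ ⟨h1, h2⟩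
        simp only at h1 h2
        have h3 : D.source (D.inv g) = D.range h := by rw [hA.source_inv, h2]
        refine ⟨(D.mul (D.inv g) h, g), ⟨?_, ?_⟩, ?_⟩
        · exact (hA.source_mul _ _ h3).trans h1
        · exact ((hA.range_mul _ _ h3).trans (hA.range_inv g)).symm
        · simp only [Prod.mk.injEq, and_true]
          rw [← hA.mul_assoc _ _ _ (hA.range_inv g).symm h3, hA.mul_inv, h2, hA.unit_mul]
    have hval : ∀ q ∈ {q : G × G | D.source q.1 = S.anchor x ∧ D.source q.2 = D.range q.1},
        f q.2 * a (S.act q.1 x) =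
        f q.2 * a (S.act (D.inv q.2) (S.act (D.mul q.2 q.1) x)) := by
      rintro ⟨k, g⟩ ⟨h1, h2⟩
      simp only at h1 h2 ⊢
      rw [← hS.act_act _ _ _ h2 h1, act_inv_act hA hS (by rw [h2, hS.act_anchor _ _ h1])]
    have hfinB : ({q : G × G | D.source q.1 = S.anchor x ∧ D.source q.2 = D.range q.1} ∩
        support fun q : G × G => f q.2 * a (S.act q.1 x)).Finite := by
      refine ((hao x).biUnion fun k _ => ((hff (D.range k)).image (fun g => (k, g)))).subset ?_
      rintro ⟨k, g⟩ ⟨⟨h1, h2⟩, h3⟩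
      simp only [mem_support] at h1 h2 h3
      exact mem_biUnion (show k ∈ _ from ⟨h1, right_ne_zero_of_mul h3⟩)
        ⟨g, ⟨h2, left_ne_zero_of_mul h3⟩, rfl⟩
    refine ⟨hfinB, ?_, ?_⟩
    · refine (hfinB.image (fun q : G × G => (D.mul q.2 q.1, q.2))).subset ?_
      rintro q ⟨hq, hq'⟩
      obtain ⟨q', hq1, rfl⟩ := hbij.surjOn hq
      refine ⟨q', ⟨hq1, ?_⟩, rfl⟩
      have := hval q' hq1
      simp only [mem_support] at hq' ⊢
      rw [this]; exact hq'
    · exact (finsum_mem_eq_of_bijOn _ hbij hval).symm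
  have hact : ∀ x h, D.source h = S.anchor x → S.actFun f a (S.act h x) = ∑ᶠ g,
      indicator {q : G × G | D.source q.1 = S.anchor x ∧ D.range q.2 = D.range q.1}
        (fun q => f q.2 * a (S.act (D.inv q.2) (S.act q.1 x))) (h, g) := by
    intro x h hh
    unfold GSpaceData.actFun
    refine finsum_congr fun g => ?_
    rw [hS.act_anchor _ _ hh]
    by_cases hg : D.range g = D.range h
    · rw [if_pos hg, Set.indicator_of_mem]
      exact ⟨hh, hg⟩
    · rw [if_neg hg, Set.indicator_of_notMem]
      exact fun h => hg h.2
  have heps : ∀ x k, D.source k = S.anchor x → S.epsFun f a (S.act k x) = ∑ᶠ g,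
      indicator {q : G × G | D.source q.1 = S.anchor x ∧ D.source q.2 = D.range q.1}
        (fun q => f q.2 * a (S.act q.1 x)) (k, g) := by
    intro x k hk
    unfold GSpaceData.epsFun
    rw [hS.act_anchor _ _ hk, finsum_mem_def, finsum_mul']
    · refine finsum_congr fun g => ?_
      by_cases hg : D.source g = D.range k
      · rw [Set.indicator_of_mem (by exact hg), Set.indicator_of_mem]
        exact ⟨hk, hg⟩
      · rw [Set.indicator_of_notMem (by exact hg), Set.indicator_of_notMem, zero_mul]
        exact fun h => hg h.2
    · have := hff (D.range k)
      rw [← Set.support_indicator] at this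
      exact this
  refine ⟨?_, ?_, ?_⟩
  · intro x
    obtain ⟨A, B, F, H, rfl, rfl, rfl, rfl, hB, hA', e⟩ := key x
    refine (hA'.image Prod.fst).subset ?_
    rintro h ⟨hh, hne⟩
    simp only [mem_support] at hne
    rw [hact x h hh] at hne
    obtain ⟨g, hg⟩ : ∃ g, indicator
        {q : G × G | D.source q.1 = S.anchor x ∧ D.range q.2 = D.range q.1}
        (fun q => f q.2 * a (S.act (D.inv q.2) (S.act q.1 x))) (h, g) ≠ 0 := by
      by_contra! hall
      exact hne ((finsum_congr hall).trans finsum_zero)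
    refine ⟨(h, g), ?_, rfl⟩
    rw [← Set.support_indicator]
    exact hg
  · intro x
    refine (hao x).subset ?_
    rintro h ⟨hh, hne⟩
    exact ⟨hh, right_ne_zero_of_mul hne⟩
  · ext x
    obtain ⟨A, B, F, H, rfl, rfl, rfl, rfl, hB, hA', e⟩ := key x
    rw [finsum_mem_def, finsum_mem_def, finsum_curry, finsum_curry] at e
    · have h1 : Tm S (S.actFun f a) x = ∑ᶠ h, ∑ᶠ g,
          indicator {q : G × G | D.source q.1 = S.anchor x ∧ D.range q.2 = D.range q.1}
          (fun q => f q.2 * a (S.act (D.inv q.2) (S.act q.1 x))) (h, g) := by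
        unfold Tm
        rw [finsum_mem_def]
        refine finsum_congr fun h => ?_
        by_cases hh : D.source h = S.anchor x
        · rw [Set.indicator_of_mem (by exact hh), hact x h hh]
        · rw [Set.indicator_of_notMem (by exact hh)]
          symm
          convert finsum_zero with g
          exact Set.indicator_of_notMem (fun h => hh h.1) _
      have h2 : Tm S (S.epsFun f a) x = ∑ᶠ h, ∑ᶠ g,
          indicator {q : G × G | D.source q.1 = S.anchor x ∧ D.source q.2 = D.range q.1}
          (fun q => f q.2 * a (S.act q.1 x)) (h, g) := by
        unfold Tm
        rw [finsum_mem_def]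
        refine finsum_congr fun h => ?_
        by_cases hh : D.source h = S.anchor x
        · rw [Set.indicator_of_mem (by exact hh), heps x h hh]
        · rw [Set.indicator_of_notMem (by exact hh)]
          symm
          convert finsum_zero with g
          exact Set.indicator_of_notMem (fun h => hh h.1) _
      rw [h1, h2, e]
    · rw [← Set.support_indicator] at hB
      exact hB
    · rw [← Set.support_indicator] at hA'
      exact hA'

lemma Tm_coinvRel (hA : D.IsAmpleGroupoid) (hS : S.IsGSpace) (hp : S.IsProper)
    {c : X → ℤ} (hc : c ∈ S.coinvRel) : OFin S c ∧ Tm S c = 0 := by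
  induction hc using AddSubgroup.closure_induction with
  | mem c h =>
    obtain ⟨f, a, hf, ha, rfl⟩ := h
    obtain ⟨h1, h2, h3⟩ := coinv_gen hA hS hp hf ha
    rw [sub_eq_add_neg]
    refine ⟨h1.add h2.neg, ?_⟩
    rw [Tm_add h1 h2.neg, Tm_neg h2, h3, add_neg_cancel]
  | zero => exact ⟨OFin.zero, Tm_zero⟩
  | add a b _ _ h h' => exact ⟨h.1.add h'.1, by rw [Tm_add h.1 h'.1, h.2, h'.2, add_zero]⟩
  | neg a _ h => exact ⟨h.1.neg, by rw [Tm_neg h.1, h.2, neg_zero]⟩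

lemma ind_sub_mem [T2Space X] (hA : D.IsAmpleGroupoid) (hS : S.IsGSpace) (hfree : S.IsFree)
    (hp : S.IsProper) {U U' : Set X} (hU : Small S U) (ho : IsOpen U') (hc : IsCompact U')
    (hi : InjOn (qmk S) U') (he : qmk S '' U = qmk S '' U') :
    (U'.indicator 1 - U.indicator 1 : X → ℤ) ∈ S.coinvRel := by
  have := hA.t2
  obtain ⟨hUo, hUc, hUq, hUp⟩ := hU
  set B : Set G := {g | ∃ u ∈ U, D.source g = S.anchor u ∧ S.act g u ∈ U'} with hBdef
  have hBo : IsOpen B := by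
    rw [isOpen_iff_mem_nhds]
    rintro g ⟨u, hu, hg, hgu⟩
    obtain ⟨N, M, hN, hM, hgN, huM, h⟩ := act_nhds hS hg ho hgu
    have h1 : IsOpen (N ∩ D.source ⁻¹' (S.anchor '' (M ∩ U))) :=
      hN.inter ((hS.etale_anchor.isOpenMap _ (hM.inter hUo)).preimage hA.etale_source.continuous)
    refine Filter.mem_of_superset (h1.mem_nhds ⟨hgN, u, ⟨huM, hu⟩, hg.symm⟩) ?_
    rintro g' ⟨hg', u', ⟨hu', hu''⟩, e⟩
    exact ⟨u', hu'', e.symm, h g' hg' u' hu' e.symm⟩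
  have hBc : IsCompact B := by
    have h1 := (hp.isCompact_preimage (hc.prod hUc)).image
      (continuous_fst.comp continuous_subtype_val)
    convert h1 using 1
    ext g
    constructor
    · rintro ⟨u, hu, hg, hgu⟩
      exact ⟨⟨(g, u), hg⟩, ⟨hgu, hu⟩, rfl⟩
    · rintro ⟨⟨⟨g, u⟩, hg⟩, ⟨hgu, hu⟩, rfl⟩
      exact ⟨u, hu, hg, hgu⟩
  refine AddSubgroup.subset_closure ⟨B.indicator 1, U.indicator 1, ind_mem_ccZ hBo hBc,
    ind_mem_ccZ hUo hUc, ?_⟩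
  congr 1
  · ext x
    unfold GSpaceData.actFun
    have hz : ∀ g, D.range g = S.anchor x → g ∈ B → S.act (D.inv g) x ∈ U → x ∈ U' := by
      rintro g hg ⟨u, hu, h1, h2⟩ h3
      have h4 : S.act (D.inv g) x = u := by
        apply hUp h3 hu
        rw [hS.act_anchor _ _ (by rw [hA.source_inv, hg]), hA.range_inv, h1]
      rw [← h4, hS.act_act _ _ _ (hA.range_inv g).symm (by rw [hA.source_inv, hg]), hA.mul_inv,
        hg, hS.act_unit] at h2
      exact h2
    by_cases hx : x ∈ U'
    · obtain ⟨u, hu, e⟩ : qmk S x ∈ qmk S '' U := by rw [he]; exact ⟨x, hx, rfl⟩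
      obtain ⟨g, hg, rfl⟩ := (qmk_eq hA hS).1 e
      rw [finsum_eq_single _ g]
      · rw [if_pos (hS.act_anchor _ _ hg).symm, act_inv_act hA hS hg]
        have hgB : g ∈ B := ⟨u, hu, hg, hx⟩
        simp [hx, hgB, hu]
      · intro k hk
        by_cases h1 : D.range k = S.anchor (S.act g u)
        · rw [if_pos h1]
          by_contra hne
          have h2 : S.act (D.inv k) (S.act g u) ∈ U := by
            by_contra h; simp [h] at hne
          have h3 : S.act (D.inv k) (S.act g u) = u := by
            apply hUq h2 hu
            exact (((qmk_eq hA hS).2 ⟨g, hg, rfl⟩).trans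
              ((qmk_eq hA hS).2 ⟨D.inv k, by rw [hA.source_inv, h1], rfl⟩)).symm
          have hsk : D.source k = S.anchor u := by
            rw [← h3, hS.act_anchor _ _ (by rw [hA.source_inv, h1]), hA.range_inv]
          apply hk
          apply act_inj hA hS hfree hsk hg
          conv_lhs => rw [← h3]
          rw [hS.act_act _ _ _ (hA.range_inv k).symm (by rw [hA.source_inv, h1]), hA.mul_inv, h1,
            hS.act_unit]
        · rw [if_neg h1]
    · rw [Set.indicator_of_notMem hx]
      symm
      convert finsum_zero with g
      split_ifs with h1
      · by_contra hne
        have h2 : S.act (D.inv g) x ∈ U := by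
          by_contra h; simp [h] at hne
        have h3 : g ∈ B := by
          by_contra h; simp [h] at hne
        exact hx (hz g h1 h3 h2)
      · rfl
  · ext x
    unfold GSpaceData.epsFun
    by_cases hx : x ∈ U
    · obtain ⟨u, hu, e⟩ : qmk S x ∈ qmk S '' U' := by rw [← he]; exact ⟨x, hx, rfl⟩
      obtain ⟨g, hg, rfl⟩ := (qmk_eq hA hS).1 e.symm
      rw [finsum_mem_def, finsum_eq_single _ g]
      · have hgB : g ∈ B := ⟨x, hx, hg, hu⟩
        have hg' : g ∈ {g : G | D.source g = S.anchor x} := hg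
        rw [Set.indicator_of_mem hg']
        simp [hx, hgB]
      · intro k hk
        by_cases h1 : D.source k = S.anchor x
        · rw [Set.indicator_of_mem (by exact h1)]
          refine Set.indicator_of_notMem ?_ _
          rintro ⟨y, hy, h2, h3⟩
          obtain rfl : x = y := hUp hx hy (h1.symm.trans h2)
          apply hk
          apply act_inj hA hS hfree h1 hg
          apply hi h3 hu
          exact ((qmk_eq hA hS).2 ⟨k, h1, rfl⟩).symm.trans ((qmk_eq hA hS).2 ⟨g, hg, rfl⟩)
        · exact Set.indicator_of_notMem (s := {g : G | D.source g = S.anchor x}) h1 _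
    · simp [hx]

lemma image_clopen (hA : D.IsAmpleGroupoid) (hS : S.IsGSpace) (hp : S.IsProper)
    {W : Set X} (ho : IsOpen W) (hc : IsCompact W) : IsClopen (qmk S '' W) := by
  have := quot_t2 hA hS hp
  have hq := qmk_openQuot hA hS
  exact ⟨(hc.image hq.continuous).isClosed, hq.isOpenMap _ ho⟩

lemma exists_section [T2Space X] (hA : D.IsAmpleGroupoid) (hS : S.IsGSpace) (hfree : S.IsFree)
    (hp : S.IsProper) {K : Set X} (hK : IsCompact K) :
    ∃ W, IsOpen W ∧ IsCompact W ∧ InjOn (qmk S) W ∧ K ⊆ qmk S ⁻¹' (qmk S '' W) := by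
  have hq := qmk_openQuot hA hS
  refine hK.induction_on (p := fun K => ∃ W, IsOpen W ∧ IsCompact W ∧ InjOn (qmk S) W ∧
    K ⊆ qmk S ⁻¹' (qmk S '' W)) ?_ ?_ ?_ ?_
  · exact ⟨∅, isOpen_empty, isCompact_empty, injOn_empty _, empty_subset _⟩
  · rintro s t hst ⟨W, h1, h2, h3, h4⟩
    exact ⟨W, h1, h2, h3, hst.trans h4⟩
  · rintro s t ⟨W, h1, h2, h3, h4⟩ ⟨W', h1', h2', h3', h4'⟩
    have hcl : IsClopen (qmk S ⁻¹' (qmk S '' W)) :=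
      (image_clopen hA hS hp h1 h2).preimage hq.continuous
    refine ⟨W ∪ (W' ∩ (qmk S ⁻¹' (qmk S '' W))ᶜ), h1.union (h1'.inter hcl.compl.2),
      h2.union (h2'.inter_right hcl.compl.1), ?_, ?_⟩
    · rintro a (ha | ⟨ha, ha'⟩) b (hb | ⟨hb, hb'⟩) e
      · exact h3 ha hb e
      · exact absurd ⟨a, ha, e⟩ hb'
      · exact absurd ⟨b, hb, e.symm⟩ ha'
      · exact h3' ha hb e
    · rintro x (hx | hx)
      · obtain ⟨w, hw, e⟩ := h4 hx
        exact ⟨w, Or.inl hw, e⟩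
      · by_cases hxW : qmk S x ∈ qmk S '' W
        · obtain ⟨w, hw, e⟩ := hxW
          exact ⟨w, Or.inl hw, e⟩
        · obtain ⟨w, hw, e⟩ := h4' hx
          refine ⟨w, Or.inr ⟨hw, fun h => hxW ?_⟩, e⟩
          rw [← e]; exact h
  · intro x _
    obtain ⟨U, hU, hxU, -⟩ := exists_small hA hS hfree hp x univ isOpen_univ (mem_univ _)
    exact ⟨U, mem_nhdsWithin_of_mem_nhds (hU.1.mem_nhds hxU), U, hU.1, hU.2.1, hU.2.2.1,
      subset_preimage_image _ _⟩

lemma ker_sub [T2Space X] (hA : D.IsAmpleGroupoid) (hS : S.IsGSpace) (hfree : S.IsFree)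
    (hp : S.IsProper) {f : X → ℤ} (hf : f ∈ ccZ X) (h0 : Tm S f = 0) : f ∈ S.coinvRel := by
  have hq := qmk_openQuot hA hS
  obtain ⟨W, h1, h2, h3, h4⟩ := exists_section hA hS hfree hp
    (show IsCompact (tsupport f) from hf.2)
  have hcl : IsClopen (qmk S ⁻¹' (qmk S '' W)) :=
    (image_clopen hA hS hp h1 h2).preimage hq.continuous
  have hmem := ccZ_mem_closure (fun U => Small S U ∧ U ⊆ qmk S ⁻¹' (qmk S '' W))
    (fun U h => h.1.1) (fun U h => h.1.2.1)
    (fun U C h hC => ⟨h.1.inter hC, inter_subset_left.trans h.2⟩) f hf (by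
      intro y hy O hO hyO
      obtain ⟨U, hU, hyU, hUO⟩ := exists_small hA hS hfree hp y _ (hO.inter hcl.2)
        ⟨hyO, h4 (subset_tsupport f hy)⟩
      exact ⟨U, ⟨hU, hUO.trans inter_subset_right⟩, hyU, hUO.trans inter_subset_left⟩)
  have key : ∃ f' : X → ℤ, (∀ x, x ∉ W → f' x = 0) ∧ f' - f ∈ S.coinvRel := by
    clear h0 hf h4
    induction hmem using AddSubgroup.closure_induction with
    | mem c h =>
      obtain ⟨U, ⟨hU, hUW⟩, rfl⟩ := h
      have hclU : IsClopen (qmk S ⁻¹' (qmk S '' U)) :=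
        (image_clopen hA hS hp hU.1 hU.2.1).preimage hq.continuous
      refine ⟨(W ∩ qmk S ⁻¹' (qmk S '' U)).indicator 1, fun x hx => ?_, ?_⟩
      · exact Set.indicator_of_notMem (fun h => hx h.1) _
      · refine ind_sub_mem hA hS hfree hp hU (h1.inter hclU.2) (h2.inter_right hclU.1)
          (h3.mono inter_subset_left) ?_
        rw [image_inter_preimage]
        exact (inter_eq_right.2 (image_subset_iff.2 hUW)).symm
    | zero => exact ⟨0, fun _ _ => rfl, by rw [sub_zero]; exact zero_mem _⟩
    | add a b _ _ h h' =>
      obtain ⟨a', ha, ha'⟩ := h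
      obtain ⟨b', hb, hb'⟩ := h'
      refine ⟨a' + b', fun x hx => by simp [ha x hx, hb x hx], ?_⟩
      rw [add_sub_add_comm]
      exact add_mem ha' hb'
    | neg a _ h =>
      obtain ⟨a', ha, ha'⟩ := h
      refine ⟨-a', fun x hx => by simp [ha x hx], ?_⟩
      rw [← neg_sub']
      exact neg_mem ha'
  obtain ⟨f', hf', hr⟩ := key
  obtain ⟨k1, k2⟩ := Tm_coinvRel hA hS hp hr
  have hT : Tm S f' = 0 := by
    have := Tm_add k1 (ccZ_OFin hA hp hf)
    rwa [sub_add_cancel, k2, h0, add_zero] at this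
  have hz : f' = 0 := by
    ext x
    by_cases hx : x ∈ W
    · rw [← Tm_eq_of_inj hA hS hfree h3 hf' hx, hT]
    · exact hf' x hx
  rw [hz, zero_sub] at hr
  exact neg_mem_iff.1 hr

/-- The descended summation map. -/
def Tbar (hA : D.IsAmpleGroupoid) (hS : S.IsGSpace) (f : X → ℤ) : S.Quot' → ℤ :=
  Quot.lift (Tm S f) (by
    rintro x y ⟨g, hg, rfl⟩
    exact (Tm_act hA hS f hg).symm)

lemma Tbar_qmk (hA : D.IsAmpleGroupoid) (hS : S.IsGSpace) (f : X → ℤ) (x : X) :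
    Tbar hA hS f (qmk S x) = Tm S f x := rfl

lemma Tbar_ext (hA : D.IsAmpleGroupoid) (hS : S.IsGSpace) (f : X → ℤ) (c : S.Quot' → ℤ)
    (h : ∀ x, Tm S f x = c (qmk S x)) : Tbar hA hS f = c := by
  ext y
  obtain ⟨x, rfl⟩ := (qmk_openQuot hA hS).surjective y
  exact h x

lemma Tbar_add (hA : D.IsAmpleGroupoid) (hS : S.IsGSpace) {f f' : X → ℤ} (h : OFin S f)
    (h' : OFin S f') : Tbar hA hS (f + f') = Tbar hA hS f + Tbar hA hS f' :=
  Tbar_ext hA hS _ _ fun x => by rw [Tm_add h h']; rfl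

lemma Tbar_neg (hA : D.IsAmpleGroupoid) (hS : S.IsGSpace) {f : X → ℤ} (h : OFin S f) :
    Tbar hA hS (-f) = - Tbar hA hS f :=
  Tbar_ext hA hS _ _ fun x => by rw [Tm_neg h]; rfl

lemma Tbar_zero (hA : D.IsAmpleGroupoid) (hS : S.IsGSpace) :
    Tbar hA hS (0 : X → ℤ) = 0 :=
  Tbar_ext hA hS _ _ fun x => by rw [Tm_zero]; rfl

lemma Tbar_ind (hA : D.IsAmpleGroupoid) (hS : S.IsGSpace) (hfree : S.IsFree)
    {W : Set X} (hW : InjOn (qmk S) W) :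
    Tbar hA hS (W.indicator 1) = (qmk S '' W).indicator 1 :=
  Tbar_ext hA hS _ _ fun x => Tm_ind hA hS hfree hW x

lemma Tbar_mem [T2Space X] (hA : D.IsAmpleGroupoid) (hS : S.IsGSpace) (hfree : S.IsFree)
    (hp : S.IsProper) {f : X → ℤ} (hf : f ∈ ccZ X) : Tbar hA hS f ∈ ccZSub S.Quot' := by
  have := quot_t2 hA hS hp
  have hq := qmk_openQuot hA hS
  have hmem := ccZ_mem_closure (fun U => Small S U)
    (fun U h => h.1) (fun U h => h.2.1) (fun U C h hC => h.inter hC) f hf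
    (fun y _ O hO hy => exists_small hA hS hfree hp y O hO hy)
  suffices OFin S f ∧ Tbar hA hS f ∈ ccZSub S.Quot' from this.2
  clear hf
  induction hmem using AddSubgroup.closure_induction with
  | mem c h =>
    obtain ⟨U, hU, rfl⟩ := h
    refine ⟨ccZ_OFin hA hp (ind_mem_ccZ hU.1 hU.2.1), ?_⟩
    rw [Tbar_ind hA hS hfree hU.2.2.1]
    exact ind_mem_ccZ (hq.isOpenMap _ hU.1) (hU.2.1.image hq.continuous)
  | zero =>
    refine ⟨OFin.zero, ?_⟩
    rw [Tbar_zero]; exact zero_mem _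
  | add a b _ _ h h' =>
    refine ⟨h.1.add h'.1, ?_⟩
    rw [Tbar_add hA hS h.1 h'.1]
    exact add_mem h.2 h'.2
  | neg a _ h =>
    refine ⟨h.1.neg, ?_⟩
    rw [Tbar_neg hA hS h.1]
    exact neg_mem h.2

lemma Tbar_surj [T2Space X] (hA : D.IsAmpleGroupoid) (hS : S.IsGSpace) (hfree : S.IsFree)
    (hp : S.IsProper) {c : S.Quot' → ℤ} (hc : c ∈ ccZ S.Quot') :
    ∃ f ∈ ccZSub X, Tbar hA hS f = c := by
  have := quot_t2 hA hS hp
  have hq := qmk_openQuot hA hS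
  have hmem := ccZ_mem_closure (fun V => ∃ U, Small S U ∧ V = qmk S '' U)
    (by rintro _ ⟨U, h, rfl⟩; exact hq.isOpenMap _ h.1)
    (by rintro _ ⟨U, h, rfl⟩; exact h.2.1.image hq.continuous)
    (by
      rintro _ C ⟨U, h, rfl⟩ hC
      exact ⟨U ∩ qmk S ⁻¹' C, h.inter (hC.preimage hq.continuous),
        (image_inter_preimage _ _ _).symm⟩) c hc
    (by
      intro y _ O hO hy
      obtain ⟨x, rfl⟩ := hq.surjective y
      obtain ⟨U, hU, hxU, hUO⟩ := exists_small hA hS hfree hp x _ (hO.preimage hq.continuous) hy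
      exact ⟨_, ⟨U, hU, rfl⟩, ⟨x, hxU, rfl⟩, image_subset_iff.2 hUO⟩)
  clear hc
  induction hmem using AddSubgroup.closure_induction with
  | mem c h =>
    obtain ⟨_, ⟨U, hU, rfl⟩, rfl⟩ := h
    exact ⟨U.indicator 1, ind_mem_ccZ hU.1 hU.2.1, Tbar_ind hA hS hfree hU.2.2.1⟩
  | zero => exact ⟨0, zero_mem _, Tbar_zero hA hS⟩
  | add a b _ _ h h' =>
    obtain ⟨f, hf, rfl⟩ := h
    obtain ⟨f', hf', rfl⟩ := h'
    exact ⟨f + f', add_mem hf hf', Tbar_add hA hS (ccZ_OFin hA hp hf) (ccZ_OFin hA hp hf')⟩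
  | neg a _ h =>
    obtain ⟨f, hf, rfl⟩ := h
    exact ⟨-f, neg_mem hf, Tbar_neg hA hS (ccZ_OFin hA hp hf)⟩

/-- The summation homomorphism. -/
def Thom [T2Space X] (hA : D.IsAmpleGroupoid) (hS : S.IsGSpace) (hfree : S.IsFree)
    (hp : S.IsProper) : ↥(ccZSub X) →+ ↥(ccZSub S.Quot') where
  toFun f := ⟨Tbar hA hS f.1, Tbar_mem hA hS hfree hp f.2⟩
  map_zero' := Subtype.ext (Tbar_zero hA hS)
  map_add' f g := Subtype.ext (Tbar_add hA hS (ccZ_OFin hA hp f.2) (ccZ_OFin hA hp g.2))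

lemma Thom_ker [T2Space X] (hA : D.IsAmpleGroupoid) (hS : S.IsGSpace) (hfree : S.IsFree)
    (hp : S.IsProper) : AddSubgroup.comap (ccZSub X).subtype S.coinvRel =
      (Thom hA hS hfree hp).ker := by
  ext f
  rw [AddMonoidHom.mem_ker, AddSubgroup.mem_comap]
  constructor
  · intro h
    refine Subtype.ext (Tbar_ext hA hS _ _ fun x => ?_)
    exact congrFun (Tm_coinvRel hA hS hp h).2 x
  · intro h
    refine ker_sub hA hS hfree hp f.2 ?_
    ext x
    exact congrFun (congrArg Subtype.val h) (qmk S x)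

lemma Thom_surj [T2Space X] (hA : D.IsAmpleGroupoid) (hS : S.IsGSpace) (hfree : S.IsFree)
    (hp : S.IsProper) : Function.Surjective (Thom hA hS hfree hp) := by
  rintro ⟨c, hc⟩
  obtain ⟨f, hf, rfl⟩ := Tbar_surj hA hS hfree hp hc
  exact ⟨⟨f, hf⟩, rfl⟩

end GroupoidData

end Helpers

/-- Let `G` be an ample groupoid and `X` a locally compact Hausdorff space with an étale
anchor map `p : X → G⁰` and a continuous left `G`-action that is free and proper.  Then
there is an isomorphism of abelian groups `ℤ[X]_G ≅ ℤ[G\X]`, induced by the map sending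
`f ∈ ℤ[X]` to the function `[x] ↦ ∑_{g ∈ G_{p(x)}} f(g·x)` on the quotient `G\X`. -/
theorem coinvariants_iso_quotient
    {G : Type u} [TopologicalSpace G] (D : GroupoidData G) (hAmple : D.IsAmpleGroupoid)
    {X : Type v} [TopologicalSpace X] [T2Space X] [LocallyCompactSpace X]
    (S : D.GSpaceData X) (hS : S.IsGSpace) (hfree : S.IsFree) (hproper : S.IsProper) :
    letI : TopologicalSpace S.Quot' := S.quotTop
    ∃ e : S.Coinv ≃+ ↥(ccZSub S.Quot'),
      ∀ (f : X → ℤ) (hf : f ∈ ccZ X) (x : X),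
        (e (S.coinvCls f hf) : S.Quot' → ℤ) (Quot.mk S.orbRel x)
          = ∑ᶠ g ∈ {g : G | D.source g = S.anchor x}, f (S.act g x) := by
  refine ⟨(QuotientAddGroup.quotientAddEquivOfEq
    (GroupoidData.Thom_ker hAmple hS hfree hproper)).trans
    (QuotientAddGroup.quotientKerEquivOfSurjective _
      (GroupoidData.Thom_surj hAmple hS hfree hproper)), ?_⟩
  intro f hf x
  rfl
end
end

section
/- Let G be an ample groupoid with compact unit space and let 𝒞 = (G_0,…,G_d) be a colouring of G with nerve N_*. Then the canonical inclusion N_*^> → N_* induces an isomorphism H_*(𝒞) ≅ H_*^G(N_*^>); in particular, since N_n^> is empty for n > d, H_n(𝒞) = 0 for all n > d. -/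
noncomputable section

open Function Set

attribute [local instance] Classical.propDecidable

universe u v w

namespace GroupoidData

variable {G : Type u} {D : GroupoidData G}
variable (D) in

/-- A colouring of an ample groupoid `G` with compact unit space: a finite ordered
collection `(G_0, …, G_d)` of compact open subgroupoids whose unit spaces cover `G⁰`. -/
structure Colouring [TopologicalSpace G] (d : ℕ) where
  sub : Fin (d + 1) → Set G
  isCompact : ∀ i, IsCompact (sub i)
  isOpen : ∀ i, IsOpen (sub i)
  inv_mem : ∀ i, ∀ g ∈ sub i, D.inv g ∈ sub i
  mul_mem : ∀ i, ∀ g h, g ∈ sub i → h ∈ sub i → D.source g = D.range h → D.mul g h ∈ sub i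
  source_mem : ∀ i, ∀ g ∈ sub i, D.source g ∈ sub i
  range_mem : ∀ i, ∀ g ∈ sub i, D.range g ∈ sub i
  covers : D.unitSpace ⊆ ⋃ i, (sub i ∩ D.unitSpace)

/-- A colouring is `K`-Lebesgue if for every unit `x` some colour `G_i` contains `G^x ∩ K`. -/
def Colouring.IsLebesgue [TopologicalSpace G] {D : GroupoidData G} {d : ℕ}
    (C : D.Colouring d) (K : Set G) : Prop :=
  ∀ x ∈ D.unitSpace, ∃ i, {g | D.range g = x} ∩ K ⊆ C.sub i

/-- A colouring is `K`-bounded if every colour is contained in `K`. -/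
def Colouring.IsBounded [TopologicalSpace G] {D : GroupoidData G} {d : ℕ}
    (C : D.Colouring d) (K : Set G) : Prop :=
  ∀ i, C.sub i ⊆ K

end GroupoidData
namespace GroupoidData

variable {G : Type u}

/-- The data of a semi-simplicial `G`-space: a sequence of topological spaces with face maps,
anchor maps to the unit space and a left `G`-action. -/
structure SSG [TopologicalSpace G] (D : GroupoidData G) where
  X : ℕ → Type u
  top : ∀ n, TopologicalSpace (X n)
  face : ∀ n, Fin (n + 2) → X (n + 1) → X n
  anchor : ∀ n, X n → G
  act : ∀ n, G → X n → X n

namespace SSG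

variable [TopologicalSpace G] {D : GroupoidData G}

instance (S : D.SSG) (n : ℕ) : TopologicalSpace (S.X n) := S.top n

variable (S : D.SSG)

/-- The boundary map `∂ = ∑ (-1)^i (∂^i)_*` of the chain complex `ℤ[X_*]`. -/
def bdry (n : ℕ) (a : S.X (n + 1) → ℤ) : S.X n → ℤ :=
  fun y => ∑ i : Fin (n + 2), (-1 : ℤ) ^ (i : ℕ) * ∑ᶠ x ∈ {x | S.face n i x = y}, a x

/-- The module action `(f·a)(x) = ∑_{g ∈ G^{p(x)}} f(g) a(g⁻¹ x)` of `ℤ[G]` on `ℤ[X_n]`. -/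
def actFun (n : ℕ) (f : G → ℤ) (a : S.X n → ℤ) : S.X n → ℤ :=
  fun x => ∑ᶠ g : G, if D.range g = S.anchor n x then f g * a (S.act n (D.inv g) x) else 0

/-- The action of the augmentation `ε(f) ∈ ℤ[G⁰]` on `ℤ[X_n]`. -/
def epsFun (n : ℕ) (f : G → ℤ) (a : S.X n → ℤ) : S.X n → ℤ :=
  fun x => (∑ᶠ g ∈ {g : G | D.source g = S.anchor n x}, f g) * a x

/-- The subgroup of `ℤ[X_n]` generated by the elements `f·a - ε(f)·a`; the quotient by this
subgroup is the group of coinvariants `ℤ[X_n]_G`. -/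
def rel (n : ℕ) : AddSubgroup (S.X n → ℤ) :=
  AddSubgroup.closure
    {c | ∃ f a, f ∈ ccZ G ∧ a ∈ ccZ (S.X n) ∧ c = S.actFun n f a - S.epsFun n f a}

/-- The cycles of the coinvariants complex `(ℤ[X_*]_G, ∂)`, described by their
representatives in `ℤ[X_n]`. -/
def cycles : (n : ℕ) → AddSubgroup (S.X n → ℤ)
  | 0 => ccZSub (S.X 0)
  | (n + 1) => AddSubgroup.closure {a | a ∈ ccZ (S.X (n + 1)) ∧ S.bdry n a ∈ S.rel n}

/-- The boundaries of the coinvariants complex `(ℤ[X_*]_G, ∂)`, described by their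
representatives in `ℤ[X_n]`. -/
def bdries (n : ℕ) : AddSubgroup (S.X n → ℤ) :=
  S.rel n ⊔ AddSubgroup.closure {c | ∃ a ∈ ccZ (S.X (n + 1)), S.bdry n a = c}

/-- The equivariant homology `H_*^G(X)` of the semi-simplicial `G`-space `X_*`:
the homology of the complex of coinvariants `(ℤ[X_*]_G, ∂)`. -/
def homology (n : ℕ) : Type u :=
  (S.cycles n) ⧸ AddSubgroup.comap (S.cycles n).subtype (S.bdries n)

instance (n : ℕ) : AddCommGroup (S.homology n) :=
  QuotientAddGroup.Quotient.addCommGroup _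

/-- The homology class of a cycle. -/
def cls {n : ℕ} (a : S.X n → ℤ) (ha : a ∈ S.cycles n) : S.homology n :=
  QuotientAddGroup.mk ⟨a, ha⟩

end SSG

/-- A morphism of semi-simplicial `G`-spaces: a family of `G`-equivariant étale maps
compatible with the face and anchor maps. -/
structure SSGMor [TopologicalSpace G] {D : GroupoidData G} (S T : D.SSG) where
  map : ∀ n, S.X n → T.X n
  etale : ∀ n, IsLocalHomeomorph (map n)
  face_comm : ∀ n i x, map n (S.face n i x) = T.face n i (map (n + 1) x)
  anchor_comm : ∀ n x, T.anchor n (map n x) = S.anchor n x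
  equivariant : ∀ n g x, D.range g = S.anchor n x → map n (S.act n g x) = T.act n g (map n x)

/-! ### The nerve of a colouring -/

section Nerve

variable [TopologicalSpace G] {D : GroupoidData G} {d : ℕ}

/-- The set `g G_i^{s(g)}`. -/
def Colouring.fib (C : D.Colouring d) (i : Fin (d + 1)) (g : G) : Set G :=
  {w | ∃ h ∈ C.sub i, D.range h = D.source g ∧ w = D.mul g h}

/-- The cover `𝒰` associated to a colouring: all nonempty sets `g G_i^{s(g)}` together with
their colour. -/
def Colouring.coverSet (C : D.Colouring d) : Set (Set G × Fin (d + 1)) :=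
  {U | ∃ g : G, (∃ h ∈ C.sub U.2, D.range h = D.source g) ∧ U.1 = C.fib U.2 g}

/-- The topology on coloured subsets of `G` generated by the sets
`U_{V,i} = {(g G_i^{s(g)}, i) | g ∈ V}` for `V ⊆ G` open. -/
def Colouring.baseTop (C : D.Colouring d) : TopologicalSpace (Set G × Fin (d + 1)) :=
  TopologicalSpace.generateFrom
    {S | ∃ (V : Set G) (i : Fin (d + 1)), IsOpen V ∧
      (∀ g ∈ V, ∃ h ∈ C.sub i, D.range h = D.source g) ∧
      S = {p | ∃ g ∈ V, p = (C.fib i g, i)}}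

/-- The `n`-simplices of the nerve of a colouring: `(n+1)`-tuples of elements of the
associated cover with nonempty intersection. -/
def Colouring.nerveSet (C : D.Colouring d) (n : ℕ) :
    Set (Fin (n + 1) → Set G × Fin (d + 1)) :=
  {u | (∀ j, u j ∈ C.coverSet) ∧ (⋂ j, (u j).1).Nonempty}

/-- The space of `n`-simplices of the nerve. -/
def Colouring.NerveSp (C : D.Colouring d) (n : ℕ) : Type u := ↥(C.nerveSet n)

/-- The topology on the nerve, as a subspace of the product of copies of `N_0`. -/
def Colouring.nerveTop (C : D.Colouring d) (n : ℕ) : TopologicalSpace (C.NerveSp n) :=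
  @instTopologicalSpaceSubtype _ _ (@Pi.topologicalSpace _ _ (fun _ => C.baseTop))

/-- The face maps of the nerve delete one entry of a tuple. -/
def Colouring.nerveFace (C : D.Colouring d) (n : ℕ) (i : Fin (n + 2))
    (x : C.NerveSp (n + 1)) : C.NerveSp n :=
  ⟨fun j => x.1 (i.succAbove j),
    ⟨fun j => x.2.1 _, by
      obtain ⟨w, hw⟩ := x.2.2
      exact ⟨w, Set.mem_iInter.2 fun j => Set.mem_iInter.1 hw (i.succAbove j)⟩⟩⟩

/-- Translation of a subset of `G` by an element of `G`. -/
def trans (g : G) (A : Set G) : Set G :=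
  {w | ∃ a ∈ A, D.source g = D.range a ∧ w = D.mul g a}

/-- The action of `G` on the nerve, translating each member of a tuple. -/
def Colouring.nerveAct (C : D.Colouring d) (n : ℕ) (g : G) (x : C.NerveSp n) :
    C.NerveSp n :=
  if h : (fun j => ((trans (D := D) g (x.1 j).1 : Set G), (x.1 j).2)) ∈ C.nerveSet n
  then ⟨_, h⟩ else x

/-- The nerve of a colouring, as a semi-simplicial `G`-space. -/
def Colouring.nerveSSG (C : D.Colouring d) : D.SSG where
  X n := C.NerveSp n
  top n := C.nerveTop n
  face n i x := C.nerveFace n i x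
  anchor _ x := D.range x.2.2.some
  act n g x := C.nerveAct n g x

/-- The homology `H_*(𝒞)` of a colouring: the equivariant homology of its nerve. -/
def Colouring.homology (C : D.Colouring d) (n : ℕ) : Type u := C.nerveSSG.homology n

/-- The part `N_*^>` of the nerve consisting of tuples with strictly increasing colours. -/
def Colouring.nerveGtSet (C : D.Colouring d) (n : ℕ) :
    Set (Fin (n + 1) → Set G × Fin (d + 1)) :=
  {u | u ∈ C.nerveSet n ∧ ∀ j k : Fin (n + 1), j < k → (u j).2 < (u k).2}

def Colouring.NerveGtSp (C : D.Colouring d) (n : ℕ) : Type u := ↥(C.nerveGtSet n)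

def Colouring.nerveGtTop (C : D.Colouring d) (n : ℕ) : TopologicalSpace (C.NerveGtSp n) :=
  @instTopologicalSpaceSubtype _ _ (@Pi.topologicalSpace _ _ (fun _ => C.baseTop))

def Colouring.nerveGtFace (C : D.Colouring d) (n : ℕ) (i : Fin (n + 2))
    (x : C.NerveGtSp (n + 1)) : C.NerveGtSp n :=
  ⟨fun j => x.1 (i.succAbove j),
    ⟨⟨fun j => x.2.1.1 _, by
        obtain ⟨w, hw⟩ := x.2.1.2
        exact ⟨w, Set.mem_iInter.2 fun j => Set.mem_iInter.1 hw (i.succAbove j)⟩⟩,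
      fun j k hjk => x.2.2 _ _ (Fin.strictMono_succAbove i hjk)⟩⟩

def Colouring.nerveGtAct (C : D.Colouring d) (n : ℕ) (g : G) (x : C.NerveGtSp n) :
    C.NerveGtSp n :=
  if h : (fun j => ((trans (D := D) g (x.1 j).1 : Set G), (x.1 j).2)) ∈ C.nerveGtSet n
  then ⟨_, h⟩ else x

/-- The semi-simplicial `G`-space `N_*^>`. -/
def Colouring.nerveGtSSG (C : D.Colouring d) : D.SSG where
  X n := C.NerveGtSp n
  top n := C.nerveGtTop n
  face n i x := C.nerveGtFace n i x
  anchor _ x := D.range x.2.1.2.some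
  act n g x := C.nerveGtAct n g x

/-- The inclusion `N_*^> → N_*`. -/
def Colouring.nerveIncl (C : D.Colouring d) (n : ℕ) (x : C.NerveGtSp n) : C.NerveSp n :=
  ⟨x.1, x.2.1⟩

end Nerve

end GroupoidData

namespace GroupoidData

instance {G : Type u} [TopologicalSpace G] {D : GroupoidData G} {d : ℕ}
    (C : D.Colouring d) (n : ℕ) : AddCommGroup (C.homology n) :=
  inferInstanceAs (AddCommGroup (C.nerveSSG.homology n))

end GroupoidData

set_option linter.unusedSectionVars false
set_option linter.unusedVariables false

set_option linter.unusedSectionVars false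
/-! ### Algebra of ordered tuples of colours -/

namespace ColAlg

variable {κ : Type} [LinearOrder κ]

/-- Free abelian group on tuples. -/
abbrev O (κ : Type) (n : ℕ) := (Fin (n + 1) → κ) →₀ ℤ

/-- linear extension -/
abbrev lc {κ : Type} {n : ℕ} {M : Type*} [AddCommGroup M] (K : (Fin (n + 1) → κ) → M) :
    O κ n →ₗ[ℤ] M := Finsupp.linearCombination ℤ K

def bd0 {κ : Type} (n : ℕ) (c : Fin (n + 2) → κ) : O κ n :=
  ∑ i : Fin (n + 2), ((-1 : ℤ) ^ (i : ℕ)) • Finsupp.single (fun j => c (i.succAbove j)) (1 : ℤ)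

def bd {κ : Type} (n : ℕ) : O κ (n + 1) →ₗ[ℤ] O κ n := lc (bd0 n)

lemma bd_single {n : ℕ} (c : Fin (n + 2) → κ) : bd n (Finsupp.single c 1) = bd0 n c := by
  simp [bd]

def cone (s : κ) (n : ℕ) : O κ n →ₗ[ℤ] O κ (n + 1) :=
  lc (fun c => Finsupp.single (Fin.cons s c : Fin (n + 2) → κ) (1 : ℤ))

def coneGt (s : κ) (n : ℕ) : O κ n →ₗ[ℤ] O κ (n + 1) :=
  lc (fun c => if s < c 0 then Finsupp.single (Fin.cons s c : Fin (n + 2) → κ) (1 : ℤ) else 0)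

def eps : O κ 0 →ₗ[ℤ] ℤ := lc (fun _ => (1 : ℤ))

def mn {n : ℕ} (c : Fin (n + 1) → κ) : κ := Finset.univ.inf' Finset.univ_nonempty c

lemma mn_le {n : ℕ} (c : Fin (n + 1) → κ) (j) : mn c ≤ c j :=
  Finset.inf'_le _ (Finset.mem_univ j)

lemma mn_mem {n : ℕ} (c : Fin (n + 1) → κ) : mn c ∈ Set.range c := by
  obtain ⟨j, _, hj⟩ := Finset.exists_mem_eq_inf' Finset.univ_nonempty c
  exact ⟨j, hj.symm⟩

lemma bd0_cons {n : ℕ} (s : κ) (c : Fin (n + 2) → κ) :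
    bd0 (n + 1) (Fin.cons s c : Fin (n + 3) → κ) =
      Finsupp.single c 1 - cone s n (bd0 n c) := by
  unfold bd0
  rw [Fin.sum_univ_succ, sub_eq_add_neg, map_sum, ← Finset.sum_neg_distrib]
  congr 1
  · simp [Fin.zero_succAbove]
  · refine Finset.sum_congr rfl fun i _ => ?_
    rw [map_smul, ← neg_smul]
    congr 1
    · simp [pow_succ]
    · simp only [cone, lc, Finsupp.linearCombination_single, one_smul]
      congr 1
      funext j
      refine Fin.cases ?_ (fun k => ?_) j
      · simp
      · simp [Fin.succ_succAbove_succ]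

lemma bd_cone {n : ℕ} (s : κ) (z : O κ (n + 1)) :
    bd (n + 1) (cone s (n + 1) z) = z - cone s n (bd n z) := by
  induction z using Finsupp.induction_linear with
  | zero => simp
  | add a b ha hb => simp only [map_add, ha, hb]; abel
  | single c k =>
    have : (Finsupp.single c k : O κ (n + 1)) = k • Finsupp.single c 1 := by simp
    rw [this]
    simp only [map_smul, bd_single]
    rw [show cone s (n + 1) (Finsupp.single c 1) = Finsupp.single (Fin.cons s c) 1 by simp [cone],
      bd_single, bd0_cons, smul_sub]

lemma bd0_cons0 (s : κ) (c : Fin 1 → κ) :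
    bd0 0 (Fin.cons s c : Fin 2 → κ) = Finsupp.single c 1 - Finsupp.single (fun _ => s) 1 := by
  unfold bd0
  rw [Fin.sum_univ_two, sub_eq_add_neg]
  congr 1
  · simp [Fin.zero_succAbove]
  · have : (fun j : Fin 1 => (Fin.cons s c : Fin 2 → κ) (Fin.succAbove 1 j)) = fun _ => s := by
      funext j; fin_cases j; rfl
    rw [this]; simp

lemma bd_cone0 (s : κ) (z : O κ 0) :
    bd 0 (cone s 0 z) = z - eps z • Finsupp.single (fun _ => s) 1 := by
  induction z using Finsupp.induction_linear with
  | zero => simp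
  | add a b ha hb => simp only [map_add, ha, hb, add_smul]; abel
  | single c k =>
    have : (Finsupp.single c k : O κ 0) = k • Finsupp.single c 1 := by simp
    rw [this]
    simp only [map_smul]
    rw [show cone s 0 (Finsupp.single c 1) = Finsupp.single (Fin.cons s c) 1 by simp [cone],
      bd_single, bd0_cons0, smul_sub]
    simp [eps]

lemma eps_bd (z : O κ 1) : eps (bd 0 z) = 0 := by
  induction z using Finsupp.induction_linear with
  | zero => simp
  | add a b ha hb => simp only [map_add, ha, hb]; simp
  | single c k =>
    have : (Finsupp.single c k : O κ 1) = k • Finsupp.single c 1 := by simp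
    rw [this]
    simp only [map_smul, bd_single, bd0]
    simp [Fin.sum_univ_two, eps]

lemma exists_cone {n : ℕ} (c : Fin (n + 2) → κ) :
    (Finsupp.single c 1 : O κ (n + 1)) = cone (c 0) n (Finsupp.single (fun j => c j.succ) 1) := by
  simp only [cone, lc, Finsupp.linearCombination_single, one_smul]
  congr 1
  exact (Fin.cons_self_tail c).symm

lemma bd_bd {n : ℕ} (z : O κ (n + 2)) : bd n (bd (n + 1) z) = 0 := by
  induction n with
  | zero =>
    induction z using Finsupp.induction_linear with
    | zero => simp
    | add a b ha hb => simp only [map_add, ha, hb]; simp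
    | single c k =>
      have : (Finsupp.single c k : O κ 2) = k • Finsupp.single c 1 := by simp
      rw [this, map_smul, map_smul, exists_cone, bd_cone, map_sub, bd_cone0, eps_bd]
      simp
  | succ n ih =>
    induction z using Finsupp.induction_linear with
    | zero => simp
    | add a b ha hb => simp only [map_add, ha, hb]; simp
    | single c k =>
      have : (Finsupp.single c k : O κ (n + 1 + 2)) = k • Finsupp.single c 1 := by simp
      rw [this, map_smul, map_smul, exists_cone, bd_cone, map_sub, bd_cone, ih]
      simp

/-- increasing tuples bounded below by `s` -/
lemma bd_coneGt {n : ℕ} (s : κ) (z : O κ (n + 1))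
    (hz : z ∈ Finsupp.supported ℤ ℤ {c : Fin (n + 2) → κ | StrictMono c ∧ ∀ j, s ≤ c j}) :
    bd (n + 1) (coneGt s (n + 1) z) = z - coneGt s n (bd n z) := by
  rw [Finsupp.supported_eq_span_single] at hz
  induction hz using Submodule.span_induction with
  | zero => simp
  | add a b _ _ ha hb => simp only [map_add, ha, hb]; abel
  | smul k a _ ha => simp only [map_smul, ha, smul_sub]
  | mem x hx =>
    obtain ⟨c, ⟨hm, hs⟩, rfl⟩ := hx
    simp only [bd_single]
    by_cases h : s < c 0
    · have e1 : coneGt s (n + 1) (Finsupp.single c 1) = cone s (n + 1) (Finsupp.single c 1) := by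
        simp [coneGt, cone, h]
      have e2 : coneGt s n (bd0 n c) = cone s n (bd0 n c) := by
        unfold bd0
        simp only [map_sum, map_smul]
        refine Finset.sum_congr rfl fun i _ => ?_
        congr 1
        have : s < c (i.succAbove 0) := lt_of_lt_of_le h (hm.monotone (Fin.zero_le _))
        simp [coneGt, cone, this]
      rw [e1, e2, bd_cone, bd_single]
    · have h0 : c 0 = s := le_antisymm (not_lt.1 h) (hs 0)
      have e1 : coneGt s (n + 1) (Finsupp.single c 1) = 0 := by
        simp [coneGt, h]
      have e2 : coneGt s n (bd0 n c) = Finsupp.single c 1 := by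
        unfold bd0
        simp only [map_sum, map_smul]
        rw [Fin.sum_univ_succ, Finset.sum_eq_zero]
        · have : s < c 1 := by rw [← h0]; exact hm (by simp)
          have h3 : (Fin.cons s (fun j : Fin (n+1) => c j.succ) : Fin (n + 2) → κ) = c := by
            rw [← h0]; exact Fin.cons_self_tail c
          simp [coneGt, Fin.zero_succAbove, this, h3]
        · intro i _
          simp [coneGt, h]
      rw [e1, e2]; simp

lemma bd_coneGt0 (s : κ) (z : O κ 0)
    (hz : z ∈ Finsupp.supported ℤ ℤ {c : Fin 1 → κ | StrictMono c ∧ ∀ j, s ≤ c j}) :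
    bd 0 (coneGt s 0 z) = z - eps z • Finsupp.single (fun _ => s) 1 := by
  rw [Finsupp.supported_eq_span_single] at hz
  induction hz using Submodule.span_induction with
  | zero => simp
  | add a b _ _ ha hb => simp only [map_add, ha, hb, add_smul]; abel
  | smul k a _ ha => simp only [map_smul, ha, smul_sub]; simp [mul_smul]
  | mem x hx =>
    obtain ⟨c, ⟨hm, hs⟩, rfl⟩ := hx
    by_cases h : s < c 0
    · have e1 : coneGt s 0 (Finsupp.single c 1) = cone s 0 (Finsupp.single c 1) := by
        simp [coneGt, cone, h]
      rw [e1, bd_cone0]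
    · have h0 : c 0 = s := le_antisymm (not_lt.1 h) (hs 0)
      have hc : c = fun _ => s := by funext j; rw [← h0]; congr 1; exact Subsingleton.elim _ _
      have e1 : coneGt s 0 (Finsupp.single c 1) = 0 := by
        simp [coneGt, h]
      rw [e1, hc]; simp [eps]

def P : (n : ℕ) → (Fin (n + 1) → κ) → O κ n
  | 0, c => Finsupp.single c 1
  | (n + 1), c => coneGt (mn c) n (lc (P n) (bd0 n c))

def H : (n : ℕ) → (Fin (n + 1) → κ) → O κ (n + 1)
  | 0, _ => 0
  | (n + 1), c => cone (mn c) (n + 1) (Finsupp.single c 1 - P (n + 1) c - lc (H n) (bd0 n c))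

/-- chains with entries in `S` -/
abbrev OS (S : Set κ) (n : ℕ) : Submodule ℤ (O κ n) :=
  Finsupp.supported ℤ ℤ {c : Fin (n + 1) → κ | ∀ j, c j ∈ S}

lemma lc_mem {n m : ℕ} {K : (Fin (n + 1) → κ) → O κ m} {A : Set (Fin (n + 1) → κ)}
    {B : Submodule ℤ (O κ m)} (hK : ∀ c ∈ A, K c ∈ B) {z : O κ n}
    (hz : z ∈ Finsupp.supported ℤ ℤ A) : lc K z ∈ B := by
  rw [Finsupp.supported_eq_span_single] at hz
  induction hz using Submodule.span_induction with
  | zero => simp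
  | add a b _ _ ha hb => rw [map_add]; exact B.add_mem ha hb
  | smul k a _ ha => rw [map_smul]; exact B.smul_mem _ ha
  | mem x hx =>
    obtain ⟨c, hc, rfl⟩ := hx
    simpa using hK c hc

lemma single_mem_OS {S : Set κ} {n : ℕ} {c : Fin (n + 1) → κ} (hc : ∀ j, c j ∈ S) :
    (Finsupp.single c 1 : O κ n) ∈ OS S n := Finsupp.single_mem_supported ℤ _ hc

lemma bd0_mem {S : Set κ} {n : ℕ} {c : Fin (n + 2) → κ} (hc : ∀ j, c j ∈ S) :
    bd0 n c ∈ OS S n :=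
  Submodule.sum_mem _ fun _ _ => Submodule.smul_mem _ _ (single_mem_OS fun _ => hc _)

lemma cons_mem {S : Set κ} {n : ℕ} {s : κ} (hs : s ∈ S) {c : Fin (n + 1) → κ}
    (hc : ∀ j, c j ∈ S) (j : Fin (n + 2)) : (Fin.cons s c : Fin (n + 2) → κ) j ∈ S := by
  refine Fin.cases ?_ (fun k => ?_) j
  · simpa using hs
  · simpa using hc k

lemma P_mem {n : ℕ} (S : Set κ) (c : Fin (n + 1) → κ) (hc : ∀ j, c j ∈ S) : P n c ∈ OS S n := by
  induction n with
  | zero => exact single_mem_OS hc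
  | succ n ih =>
    refine lc_mem (A := {c : Fin (n + 1) → κ | ∀ j, c j ∈ S}) ?_
      (lc_mem (fun c' hc' => ih c' hc') (bd0_mem hc))
    intro c' hc'
    have : mn c ∈ S := by obtain ⟨j, hj⟩ := mn_mem c; rw [← hj]; exact hc j
    split_ifs
    · exact single_mem_OS (cons_mem this hc')
    · exact Submodule.zero_mem _

lemma H_mem {n : ℕ} (S : Set κ) (c : Fin (n + 1) → κ) (hc : ∀ j, c j ∈ S) :
    H n c ∈ OS S (n + 1) := by
  induction n with
  | zero => exact Submodule.zero_mem _
  | succ n ih =>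
    refine lc_mem (A := {c : Fin (n + 2) → κ | ∀ j, c j ∈ S}) ?_
      (Submodule.sub_mem _ (Submodule.sub_mem _ (single_mem_OS hc) (P_mem S c hc))
        (lc_mem (fun c' hc' => ih c' hc') (bd0_mem hc)))
    intro c' hc'
    have : mn c ∈ S := by obtain ⟨j, hj⟩ := mn_mem c; rw [← hj]; exact hc j
    exact single_mem_OS (cons_mem this hc')

lemma P_strict {n : ℕ} (c : Fin (n + 1) → κ) :
    P n c ∈ Finsupp.supported ℤ ℤ {c' : Fin (n + 1) → κ | StrictMono c'} := by
  induction n with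
  | zero => exact Finsupp.single_mem_supported ℤ _ (fun a b hab => absurd hab (by
      have : a = b := Fin.ext (by omega)
      simp [this]))
  | succ n ih =>
    have h1 : lc (P n) (bd0 n c) ∈ Finsupp.supported ℤ ℤ {c' : Fin (n + 1) → κ | StrictMono c'} :=
      lc_mem (A := Set.univ) (fun c' _ => ih c') (by simp)
    refine lc_mem ?_ h1
    intro c' hc'
    split_ifs with h
    · refine Finsupp.single_mem_supported ℤ _ ?_
      rw [Set.mem_ofPred_eq, Fin.strictMono_iff_lt_succ]
      intro i
      refine Fin.cases ?_ (fun k => ?_) i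
      · simpa using h
      · simpa using hc' (Fin.castSucc_lt_succ (i := k))
    · exact Submodule.zero_mem _

lemma P_mem' {n : ℕ} (c : Fin (n + 2) → κ) :
    lc (P n) (bd0 n c) ∈
      Finsupp.supported ℤ ℤ {c' : Fin (n + 1) → κ | StrictMono c' ∧ ∀ j, mn c ≤ c' j} := by
  have h1 : lc (P n) (bd0 n c) ∈ Finsupp.supported ℤ ℤ {c' : Fin (n + 1) → κ | StrictMono c'} :=
      lc_mem (A := Set.univ) (fun c' _ => P_strict c') (by simp)
  have h2 : lc (P n) (bd0 n c) ∈ OS (Set.Ici (mn c)) n :=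
    lc_mem (fun c' hc' => P_mem _ c' hc') (bd0_mem (fun j => mn_le c j))
  exact fun x hx => ⟨h1 hx, h2 hx⟩

lemma lcP0 (z : O κ 0) : lc (P 0) z = z := by
  have : (P 0 : (Fin 1 → κ) → O κ 0) = fun c => Finsupp.single c 1 := rfl
  rw [this]; simp [lc, Finsupp.linearCombination_apply]

lemma bd_lcP {n : ℕ} (h : ∀ c : Fin (n + 2) → κ, bd n (P (n + 1) c) = lc (P n) (bd0 n c))
    (z : O κ (n + 1)) : bd n (lc (P (n + 1)) z) = lc (P n) (bd n z) := by
  induction z using Finsupp.induction_linear with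
  | zero => simp
  | add a b ha hb => simp only [map_add, ha, hb]
  | single c k =>
    have : (Finsupp.single c k : O κ (n+1)) = k • Finsupp.single c 1 := by simp
    rw [this]
    simp only [map_smul, bd_single]
    simp [h]

lemma bd_P {n : ℕ} (c : Fin (n + 2) → κ) : bd n (P (n + 1) c) = lc (P n) (bd0 n c) := by
  induction n with
  | zero =>
    rw [P, bd_coneGt0 _ _ (P_mem' c), lcP0, ← bd_single, eps_bd]; simp
  | succ n ih =>
    rw [P, bd_coneGt _ _ (P_mem' c), bd_lcP ih, ← bd_single, bd_bd]; simp

lemma P_of_strictMono {n : ℕ} (c : Fin (n + 1) → κ) (hc : StrictMono c) :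
    P n c = Finsupp.single c 1 := by
  induction n with
  | zero => rfl
  | succ n ih =>
    have h0 : mn c = c 0 := le_antisymm (mn_le c 0) (by
      obtain ⟨j, hj⟩ := mn_mem c
      rw [← hj]; exact hc.monotone (Fin.zero_le _))
    have e : lc (P n) (bd0 n c) = bd0 n c := by
      unfold bd0
      simp only [map_sum, map_smul]
      refine Finset.sum_congr rfl fun i _ => ?_
      congr 1
      simp only [lc, Finsupp.linearCombination_single, one_smul]
      exact ih _ (hc.comp (Fin.strictMono_succAbove i))
    rw [P, e, h0]
    unfold bd0
    simp only [map_sum, map_smul]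
    rw [Fin.sum_univ_succ, Finset.sum_eq_zero]
    · have : c 0 < c (Fin.succ 0) := hc (Fin.succ_pos 0)
      have h3 : (Fin.cons (c 0) (fun j : Fin (n+1) => c j.succ) : Fin (n + 2) → κ) = c :=
        Fin.cons_self_tail c
      simp only [coneGt, Fin.zero_succAbove, lc, Finsupp.linearCombination_single, one_smul, h3]
      rw [if_pos this]; simp
    · intro i _
      rcases n with _ | n
      · have : i = 0 := Fin.ext (by omega)
        subst this
        simp [coneGt]
      · simp [coneGt]

lemma bd_lcH {n : ℕ} (h : ∀ c : Fin (n + 2) → κ, bd (n + 1) (H (n + 1) c) =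
      Finsupp.single c 1 - P (n + 1) c - lc (H n) (bd0 n c))
    (z : O κ (n + 1)) : bd (n + 1) (lc (H (n + 1)) z) =
      z - lc (P (n + 1)) z - lc (H n) (bd n z) := by
  induction z using Finsupp.induction_linear with
  | zero => simp
  | add a b ha hb => simp only [map_add, ha, hb]; abel
  | single c k =>
    have : (Finsupp.single c k : O κ (n+1)) = k • Finsupp.single c 1 := by simp
    rw [this]
    simp only [map_smul, bd_single]
    simp [h, smul_sub]

lemma bd_H {n : ℕ} (c : Fin (n + 2) → κ) : bd (n + 1) (H (n + 1) c) =
      Finsupp.single c 1 - P (n + 1) c - lc (H n) (bd0 n c) := by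
  suffices h : bd n (Finsupp.single c 1 - P (n + 1) c - lc (H n) (bd0 n c)) = 0 by
    rw [H, bd_cone, h]; simp
  induction n with
  | zero =>
    have : lc (H 0) (bd0 0 c) = (0 : O κ 1) := by
      have : (H 0 : (Fin 1 → κ) → O κ 1) = fun _ => 0 := rfl
      rw [this]; simp [lc, Finsupp.linearCombination_apply]
    rw [this, map_sub, map_sub, bd_P, lcP0, bd_single]; simp
  | succ n ih =>
    have ih' : ∀ c : Fin (n + 2) → κ, bd (n + 1) (H (n + 1) c) =
      Finsupp.single c 1 - P (n + 1) c - lc (H n) (bd0 n c) := by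
      intro c
      rw [H, bd_cone, ih c]; simp
    rw [map_sub, map_sub, bd_lcH ih', bd_P, bd_single, ← bd_single c, bd_bd]
    simp

end ColAlg

set_option linter.unusedSectionVars false
set_option linter.unusedVariables false
/-! ### Generators of `ℤ[Y]` -/

lemma ccZ_aux {X : Type v} [TopologicalSpace X] (𝓑 : Set (Set X))
    (hcl : ∀ B ∈ 𝓑, IsClopen B)
    (hdiff : ∀ B ∈ 𝓑, ∀ E, IsClopen E → B \ E ∈ 𝓑)
    (L : List (Set X × ℤ)) : ∀ (f : X → ℤ), Continuous f →
    (∀ p ∈ L, p.1 ∈ 𝓑 ∧ ∀ x ∈ p.1, f x = 0 ∨ f x = p.2) →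
    (∀ x, f x ≠ 0 → ∃ p ∈ L, x ∈ p.1) →
    f ∈ AddSubgroup.closure {g : X → ℤ | ∃ B ∈ 𝓑, g = B.indicator 1} := by
  induction L with
  | nil =>
    intro f _ _ h
    have : f = 0 := by
      funext x
      by_contra hx
      obtain ⟨p, hp, _⟩ := h x hx
      simp at hp
    rw [this]; exact AddSubgroup.zero_mem _
  | cons p L ih =>
    intro f hf hL hs
    obtain ⟨B, v⟩ := p
    have hB : B ∈ 𝓑 := (hL (B, v) (by simp)).1
    have hBv := (hL (B, v) (by simp)).2
    have hZ : IsClopen (f ⁻¹' {0}) := (isClopen_discrete {(0 : ℤ)}).preimage hf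
    have e : f = v • (B \ f ⁻¹' {0}).indicator 1 + Bᶜ.indicator f := by
      funext x
      by_cases hx : x ∈ B
      · rcases hBv x hx with h | h
        · simp [hx, h]
        · by_cases h0 : f x = 0
          · simp [hx, h0]
          · simp only [Pi.add_apply, Pi.smul_apply, indicator, mem_sdiff, mem_preimage,
              mem_singleton_iff, mem_compl_iff, hx, h0]
            simpa using h
      · simp [hx]
    rw [e]
    have hmem : (B \ f ⁻¹' {0}).indicator (1 : X → ℤ) ∈
        AddSubgroup.closure {g : X → ℤ | ∃ B ∈ 𝓑, g = B.indicator 1} :=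
      AddSubgroup.subset_closure ⟨_, hdiff B hB _ hZ, rfl⟩
    refine AddSubgroup.add_mem _ (AddSubgroup.zsmul_mem _ hmem _) ?_
    refine ih _ ?_ ?_ ?_
    · exact (hcl B hB).compl.continuous_indicator hf
    · intro q hq
      refine ⟨(hL q (by simp [hq])).1, fun x hx => ?_⟩
      by_cases h : x ∈ B
      · simp [h]
      · simpa [h] using (hL q (by simp [hq])).2 x hx
    · intro x hx
      by_cases h : x ∈ B
      · simp [h] at hx
      · have hfx : f x ≠ 0 := by simpa [h] using hx
        obtain ⟨q, hq, hxq⟩ := hs x hfx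
        rcases List.mem_cons.1 hq with rfl | hq
        · exact absurd hxq h
        · exact ⟨q, hq, hxq⟩

lemma ccZ_gen {X : Type v} [TopologicalSpace X] (𝓑 : Set (Set X))
    (hcl : ∀ B ∈ 𝓑, IsClopen B)
    (hdiff : ∀ B ∈ 𝓑, ∀ E, IsClopen E → B \ E ∈ 𝓑)
    (hbas : ∀ x : X, ∀ U, IsOpen U → x ∈ U → ∃ B ∈ 𝓑, x ∈ B ∧ B ⊆ U)
    (f : X → ℤ) (hf : f ∈ ccZ X) :
    f ∈ AddSubgroup.closure {g : X → ℤ | ∃ B ∈ 𝓑, g = B.indicator 1} := by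
  have h1 : ∀ x : X, ∃ B ∈ 𝓑, x ∈ B ∧ B ⊆ f ⁻¹' {f x} := fun x =>
    hbas x _ ((isOpen_discrete _).preimage hf.1) rfl
  choose B hB hxB hBf using h1
  obtain ⟨t, ht⟩ := hf.2.isCompact.elim_finite_subcover B (fun x => (hcl _ (hB x)).isOpen)
    (fun x _ => mem_iUnion.2 ⟨x, hxB x⟩)
  refine ccZ_aux 𝓑 hcl hdiff (t.toList.map fun x => (B x, f x)) f hf.1 ?_ ?_
  · intro p hp
    obtain ⟨x, _, rfl⟩ := List.mem_map.1 hp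
    exact ⟨hB x, fun y hy => Or.inr (hBf x hy)⟩
  · intro x hx
    have := ht (subset_tsupport f hx)
    simp only [mem_iUnion] at this
    obtain ⟨y, hy, hxy⟩ := this
    exact ⟨(B y, f y), List.mem_map.2 ⟨y, by simpa using hy, rfl⟩, hxy⟩

namespace GroupoidData

variable {G : Type u} [TopologicalSpace G] {D : GroupoidData G}

lemma IsBisection.mono {A B : Set G} (hB : D.IsBisection B) (h : A ⊆ B) : D.IsBisection A :=
  ⟨hB.1.mono h, hB.2.mono h⟩

lemma ccG_gen (hA : D.IsAmpleGroupoid) (f : G → ℤ) (hf : f ∈ ccZ G) :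
    f ∈ AddSubgroup.closure {g : G → ℤ | ∃ B, (IsOpen B ∧ IsCompact B ∧ D.IsBisection B) ∧
      g = B.indicator 1} := by
  have := hA.t2
  refine ccZ_gen {B | IsOpen B ∧ IsCompact B ∧ D.IsBisection B} ?_ ?_ ?_ f hf
  · rintro B ⟨h1, h2, _⟩
    exact ⟨h2.isClosed, h1⟩
  · rintro B ⟨h1, h2, h3⟩ E hE
    exact ⟨h1.sdiff hE.isClosed, h2.diff hE.isOpen, h3.mono sdiff_subset⟩
  · intro x U hU hx
    obtain ⟨B, h1, h2, h3, h4, h5⟩ := hA.ample x U hU hx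
    exact ⟨B, ⟨h3, h4, h5⟩, h1, h2⟩

/-! ### Groupoid algebra -/

lemma inv_mul_cancel' (hA : D.IsAmpleGroupoid) {g h : G} (e : D.source g = D.range h) :
    D.mul (D.inv g) (D.mul g h) = h := by
  rw [← hA.mul_assoc _ _ _ (hA.source_inv g) e, hA.inv_mul, e, hA.unit_mul]

lemma mul_inv_cancel' (hA : D.IsAmpleGroupoid) {g h : G} (e : D.range g = D.range h) :
    D.mul g (D.mul (D.inv g) h) = h := by
  rw [← hA.mul_assoc _ _ _ (hA.range_inv g).symm ((hA.source_inv g).trans e), hA.mul_inv, e,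
    hA.unit_mul]

lemma inv_inv' (hA : D.IsAmpleGroupoid) (g : G) : D.inv (D.inv g) = g := by
  have h1 : D.mul (D.inv (D.inv g)) (D.mul (D.inv g) g) = g :=
    inv_mul_cancel' hA (hA.source_inv g)
  rw [hA.inv_mul] at h1
  have h2 := hA.mul_unit (D.inv (D.inv g))
  rw [hA.source_inv, hA.range_inv] at h2
  rw [← h2, h1]

variable {d : ℕ} (C : D.Colouring d)

namespace Colouring

/-- the raw simplex determined by an arrow and colours -/
def raw {n : ℕ} (c : Fin (n + 1) → Fin (d + 1)) (w : G) : Fin (n + 1) → Set G × Fin (d + 1) :=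
  fun j => (C.fib (c j) w, c j)

/-- colours of a simplex -/
def col {n : ℕ} (x : C.NerveSp n) : Fin (n + 1) → Fin (d + 1) := fun j => (x.1 j).2

/-- arrows admissible for colours -/
def Adm {n : ℕ} (c : Fin (n + 1) → Fin (d + 1)) : Set G := {w | ∀ j, D.source w ∈ C.sub (c j)}

variable {C}

lemma range_of_mem_fib (hA : D.IsAmpleGroupoid) {i : Fin (d + 1)} {g w : G}
    (h : w ∈ C.fib i g) : D.range w = D.range g := by
  obtain ⟨k, _, hk, rfl⟩ := h
  exact hA.range_mul _ _ hk.symm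

lemma source_mem_of_mem_fib (hA : D.IsAmpleGroupoid) {i : Fin (d + 1)} {g w : G}
    (h : w ∈ C.fib i g) : D.source w ∈ C.sub i := by
  obtain ⟨k, hk, hk', rfl⟩ := h
  rw [hA.source_mul _ _ hk'.symm]
  exact C.source_mem i k hk

lemma self_mem_fib (hA : D.IsAmpleGroupoid) {i : Fin (d + 1)} {g : G}
    (h : D.source g ∈ C.sub i) : g ∈ C.fib i g :=
  ⟨D.source g, h, hA.range_unit _ (hA.source_mem g), (hA.mul_unit g).symm⟩

lemma fib_mul (hA : D.IsAmpleGroupoid) {i : Fin (d + 1)} {g k : G}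
    (hk : k ∈ C.sub i) (e : D.range k = D.source g) : C.fib i (D.mul g k) = C.fib i g := by
  ext w
  constructor
  · rintro ⟨l, hl, hl', rfl⟩
    rw [hA.source_mul _ _ e.symm] at hl'
    refine ⟨D.mul k l, C.mul_mem i _ _ hk hl hl'.symm, ?_, ?_⟩
    · rw [hA.range_mul _ _ hl'.symm, e]
    · exact hA.mul_assoc _ _ _ e.symm hl'.symm
  · rintro ⟨l, hl, hl', rfl⟩
    have hs : D.source (D.inv k) = D.range l := by rw [hA.source_inv, e, hl']
    refine ⟨D.mul (D.inv k) l, C.mul_mem i _ _ (C.inv_mem i _ hk) hl hs, ?_, ?_⟩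
    · rw [hA.range_mul _ _ hs, hA.range_inv, hA.source_mul _ _ e.symm]
    · rw [hA.mul_assoc _ _ _ e.symm (by rw [hA.range_mul _ _ hs, hA.range_inv]),
        mul_inv_cancel' hA (by rw [e, hl'])]

lemma fib_eq_of_mem (hA : D.IsAmpleGroupoid) {i : Fin (d + 1)} {g w : G}
    (h : w ∈ C.fib i g) : C.fib i w = C.fib i g := by
  obtain ⟨k, hk, hk', rfl⟩ := h
  exact fib_mul hA hk hk'

/-- equality of cosets: the connecting element lies in the subgroupoid -/
lemma inv_mul_mem (hA : D.IsAmpleGroupoid) {i : Fin (d + 1)} {v w : G}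
    (hw : D.source w ∈ C.sub i) (e : C.fib i w = C.fib i v) :
    D.range w = D.range v ∧ D.mul (D.inv v) w ∈ C.sub i := by
  have : w ∈ C.fib i v := e ▸ self_mem_fib hA hw
  refine ⟨range_of_mem_fib hA this, ?_⟩
  obtain ⟨k, hk, hk', rfl⟩ := this
  rwa [inv_mul_cancel' hA hk'.symm]

lemma raw_mem (hA : D.IsAmpleGroupoid) {n : ℕ} {c : Fin (n + 1) → Fin (d + 1)} {w : G}
    (hw : w ∈ C.Adm c) : C.raw c w ∈ C.nerveSet n :=
  ⟨fun j => ⟨w, ⟨D.source w, hw j, hA.range_unit _ (hA.source_mem w)⟩, rfl⟩,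
    ⟨w, mem_iInter.2 fun j => self_mem_fib hA (hw j)⟩⟩

lemma eq_raw (hA : D.IsAmpleGroupoid) {n : ℕ} (x : C.NerveSp n) {w : G}
    (hw : w ∈ ⋂ j, (x.1 j).1) : x.1 = C.raw (C.col x) w ∧ w ∈ C.Adm (C.col x) := by
  have key : ∀ j, (x.1 j).1 = C.fib (C.col x j) w ∧ D.source w ∈ C.sub (C.col x j) := by
    intro j
    obtain ⟨g, _, hg⟩ := x.2.1 j
    have hwj := mem_iInter.1 hw j
    rw [hg] at hwj
    exact ⟨hg.trans (fib_eq_of_mem hA hwj).symm, source_mem_of_mem_fib hA hwj⟩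
  exact ⟨funext fun j => Prod.ext (key j).1 rfl, fun j => (key j).2⟩

lemma exists_raw (hA : D.IsAmpleGroupoid) {n : ℕ} (x : C.NerveSp n) :
    ∃ w, x.1 = C.raw (C.col x) w ∧ w ∈ C.Adm (C.col x) :=
  ⟨_, eq_raw hA x x.2.2.some_mem⟩

lemma col_of_raw {n : ℕ} {x : C.NerveSp n} {c : Fin (n + 1) → Fin (d + 1)} {w : G}
    (h : x.1 = C.raw c w) : C.col x = c := by
  funext j; unfold col; rw [h]; rfl

/-- anchor -/
def anc {n : ℕ} (x : C.NerveSp n) : G := D.range x.2.2.some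

lemma anc_eq (hA : D.IsAmpleGroupoid) {n : ℕ} {x : C.NerveSp n} {c : Fin (n + 1) → Fin (d + 1)}
    {w : G} (h : x.1 = C.raw c w) : anc x = D.range w := by
  have := mem_iInter.1 x.2.2.some_mem 0
  refine range_of_mem_fib (C := C) (i := c 0) hA ?_
  have h0 : (x.1 0).1 = C.fib (c 0) w := by rw [h]; rfl
  exact h0 ▸ this

lemma adm_of_raw (hA : D.IsAmpleGroupoid) {n : ℕ} {x : C.NerveSp n}
    {c : Fin (n + 1) → Fin (d + 1)} {w : G} (h : x.1 = C.raw c w) : w ∈ C.Adm c := by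
  intro j
  obtain ⟨z, hz⟩ := x.2.2
  have := mem_iInter.1 hz j
  rw [h] at this
  obtain ⟨k, hk, hk', _⟩ := this
  rw [← hk']
  exact C.range_mem _ k hk

variable (C) in
/-- basic sets -/
def bset {n : ℕ} (c : Fin (n + 1) → Fin (d + 1)) (W : Set G) : Set (C.NerveSp n) :=
  {x | ∃ w ∈ W, x.1 = C.raw c w}

variable (C) in
def ind {n : ℕ} (c : Fin (n + 1) → Fin (d + 1)) (W : Set G) : C.NerveSp n → ℤ :=
  (C.bset c W).indicator 1

/-! ### the action -/

lemma trans_fib (hA : D.IsAmpleGroupoid) {i : Fin (d + 1)} {g w : G}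
    (e : D.source g = D.range w) : trans (D := D) g (C.fib i w) = C.fib i (D.mul g w) := by
  ext z
  constructor
  · rintro ⟨a, ⟨k, hk, hk', rfl⟩, _, rfl⟩
    exact ⟨k, hk, by rw [hA.source_mul _ _ e, hk'], (hA.mul_assoc _ _ _ e hk'.symm).symm⟩
  · rintro ⟨k, hk, hk', rfl⟩
    rw [hA.source_mul _ _ e] at hk'
    exact ⟨D.mul w k, ⟨k, hk, hk', rfl⟩, by rw [hA.range_mul _ _ hk'.symm, e],
      hA.mul_assoc _ _ _ e hk'.symm⟩

lemma act_raw (hA : D.IsAmpleGroupoid) {n : ℕ} {x : C.NerveSp n}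
    {c : Fin (n + 1) → Fin (d + 1)} {g w : G} (h : x.1 = C.raw c w)
    (e : D.source g = D.range w) : (C.nerveAct n g x).1 = C.raw c (D.mul g w) := by
  have h1 : (fun j => ((trans (D := D) g (x.1 j).1 : Set G), (x.1 j).2)) =
      C.raw c (D.mul g w) := by
    funext j
    rw [h]
    exact Prod.ext (trans_fib hA e) rfl
  have h2 : (fun j => ((trans (D := D) g (x.1 j).1 : Set G), (x.1 j).2)) ∈ C.nerveSet n := by
    rw [h1]
    refine raw_mem hA fun j => ?_
    rw [hA.source_mul _ _ e]
    exact adm_of_raw hA h j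
  have h3 : C.nerveAct n g x = ⟨_, h2⟩ := dif_pos h2
  rw [h3]
  exact h1

/-- `y` is a face of `x` -/
def isFace {n m : ℕ} (y : C.NerveSp m) (x : C.NerveSp n) : Prop := ∀ j, ∃ k, y.1 j = x.1 k

lemma isFace_iff {n m : ℕ} {y : C.NerveSp m} {x : C.NerveSp n}
    {c : Fin (n + 1) → Fin (d + 1)} {w : G} (h : x.1 = C.raw c w) :
    isFace y x ↔ y.1 = C.raw (C.col y) w ∧ ∀ j, C.col y j ∈ Set.range c := by
  constructor
  · intro hf
    constructor
    · funext j
      obtain ⟨k, hk⟩ := hf j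
      rw [h] at hk
      have h2 : C.col y j = c k := by unfold col; rw [hk]; rfl
      rw [hk]; unfold raw; rw [h2]
    · intro j
      obtain ⟨k, hk⟩ := hf j
      rw [h] at hk
      exact ⟨k, by unfold col; rw [hk]; rfl⟩
  · rintro ⟨h1, h2⟩ j
    obtain ⟨k, hk⟩ := h2 j
    refine ⟨k, ?_⟩
    rw [h, h1]; unfold raw; rw [hk]

lemma isFace_anc (hA : D.IsAmpleGroupoid) {n m : ℕ} {y : C.NerveSp m} {x : C.NerveSp n}
    (h : isFace y x) : anc x = anc y := by
  obtain ⟨w, hw, _⟩ := exists_raw hA x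
  rw [anc_eq hA hw, anc_eq hA ((isFace_iff hw).1 h).1]

lemma nerveFace_raw {n : ℕ} {i : Fin (n + 2)} {x : C.NerveSp (n + 1)}
    {c : Fin (n + 2) → Fin (d + 1)} {w : G} (h : x.1 = C.raw c w) :
    (C.nerveFace n i x).1 = C.raw (fun j => c (i.succAbove j)) w := by
  unfold nerveFace
  simp only [h]
  rfl

end Colouring
end GroupoidData

/-! ### Topology of the nerve -/

namespace GroupoidData

variable {G : Type u} [TopologicalSpace G] {D : GroupoidData G}

lemma isOpen_mulSet (hA : D.IsAmpleGroupoid) {V U : Set G} (hV : IsOpen V) (hU : IsOpen U) :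
    IsOpen {w | ∃ v ∈ V, D.range v = D.range w ∧ D.mul (D.inv v) w ∈ U} := by
  have hrc : Continuous D.range := hA.etale_range.continuous
  rw [isOpen_iff_mem_nhds]
  rintro w0 ⟨v0, hv0, hr, hm⟩
  obtain ⟨e, he, hee⟩ := hA.etale_range v0
  have hre : ∀ z, e z = D.range z := fun z => by rw [hee]
  let A : Set G := D.range ⁻¹' e.target
  have hAo : IsOpen A := e.open_target.preimage hrc
  have hσ : ContinuousOn (fun w => e.symm (D.range w)) A :=
    e.continuousOn_symm.comp hrc.continuousOn (fun w hw => hw)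
  have hrs : ∀ w ∈ A, D.range (e.symm (D.range w)) = D.range w := fun w hw => by
    rw [← hre, e.right_inv hw]
  let f : A → {p : G × G // D.source p.1 = D.range p.2} := fun w =>
    ⟨(D.inv (e.symm (D.range w.1)), w.1), by
      simp only [hA.source_inv]; exact hrs w.1 w.2⟩
  have hσ' : Continuous (fun w : A => e.symm (D.range w.1)) := continuousOn_iff_continuous_domRestrict.1 hσ
  have hf : Continuous f :=
    Continuous.subtype_mk ((hA.continuous_inv.comp hσ').prodMk continuous_subtype_val) _
  have hF := hA.continuous_mul.comp hf
  have hO : IsOpen ({a : A | e.symm (D.range a.1) ∈ V} ∩ {a : A | D.mul (f a).1.1 (f a).1.2 ∈ U}) :=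
    (hV.preimage hσ').inter (hU.preimage hF)
  have hO' := hAo.isOpenMap_subtype_val _ hO
  have hw0 : w0 ∈ A := by
    change D.range w0 ∈ e.target
    rw [← hr, ← hre]; exact e.map_source he
  have hs0 : e.symm (D.range w0) = v0 := by rw [← hr, ← hre]; exact e.left_inv he
  refine Filter.mem_of_superset (hO'.mem_nhds ⟨⟨w0, hw0⟩, ⟨?_, ?_⟩, rfl⟩) ?_
  · change e.symm (D.range w0) ∈ V
    rw [hs0]; exact hv0
  · change D.mul (D.inv (e.symm (D.range w0))) w0 ∈ U
    rw [hs0]; exact hm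
  · rintro _ ⟨a, ⟨h1, h2⟩, rfl⟩
    exact ⟨_, h1, hrs a.1 a.2, h2⟩

lemma isClosed_mulSet (hA : D.IsAmpleGroupoid) {W U : Set G} (hW : IsCompact W)
    (hU : IsCompact U) :
    IsClosed {w | ∃ v ∈ W, D.range v = D.range w ∧ D.mul (D.inv v) w ∈ U} := by
  have := hA.t2
  have hcl : IsClosed {p : G × G | D.source p.1 = D.range p.2} :=
    isClosed_eq (hA.etale_source.continuous.comp continuous_fst)
      (hA.etale_range.continuous.comp continuous_snd)
  have hK : IsCompact ((Subtype.val : {p : G × G // D.source p.1 = D.range p.2} → G × G) ⁻¹'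
      (W ×ˢ U)) := hcl.isClosedEmbedding_subtypeVal.isCompact_preimage (hW.prod hU)
  have hI := hK.image hA.continuous_mul
  convert hI.isClosed using 1
  ext w
  constructor
  · rintro ⟨v, hv, hr, hm⟩
    refine ⟨⟨(v, D.mul (D.inv v) w), ?_⟩, ⟨hv, hm⟩, ?_⟩
    · simp only
      rw [hA.range_mul _ _ ((hA.source_inv v).trans hr), hA.range_inv]
    · exact mul_inv_cancel' hA hr
  · rintro ⟨⟨⟨v, k⟩, hvk⟩, ⟨hv, hk⟩, rfl⟩
    refine ⟨v, hv, (hA.range_mul _ _ hvk).symm, ?_⟩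
    simp only
    rw [inv_mul_cancel' hA hvk]; exact hk

variable {d : ℕ} {C : D.Colouring d}

namespace Colouring

attribute [local instance] nerveTop nerveGtTop

lemma isOpen_Adm (hA : D.IsAmpleGroupoid) {n : ℕ} (c : Fin (n + 1) → Fin (d + 1)) :
    IsOpen (C.Adm c) := by
  have : C.Adm c = ⋂ j, D.source ⁻¹' (C.sub (c j)) := by
    ext w; simp [Adm]
  rw [this]
  exact isOpen_iInter_of_finite fun j => (C.isOpen _).preimage hA.etale_source.continuous

/-- the quotient map onto simplices of given colours -/
def qmap (hA : D.IsAmpleGroupoid) {n : ℕ} (c : Fin (n + 1) → Fin (d + 1)) (w : C.Adm c) :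
    C.NerveSp n := ⟨C.raw c w.1, raw_mem hA w.2⟩

lemma continuous_qmap (hA : D.IsAmpleGroupoid) {n : ℕ} (c : Fin (n + 1) → Fin (d + 1)) :
    Continuous (qmap (C := C) hA c) := by
  refine continuous_induced_rng.2 ?_
  refine @continuous_pi _ _ _ _ (fun _ => C.baseTop) _ fun j => ?_
  refine continuous_generateFrom_iff.2 ?_
  rintro _ ⟨V, i, hV, hVi, rfl⟩
  by_cases hi : i = c j
  · subst hi
    convert (isOpen_mulSet hA hV (C.isOpen (c j))).preimage continuous_subtype_val using 1
    ext w
    constructor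
    · rintro ⟨v, hv, hvw⟩
      have h1 : C.fib (c j) w.1 = C.fib (c j) v := congrArg Prod.fst hvw
      obtain ⟨h2, h3⟩ := inv_mul_mem hA (w.2 j) h1
      exact ⟨v, hv, h2.symm, h3⟩
    · rintro ⟨v, hv, hr, hm⟩
      refine ⟨v, hv, Prod.ext ?_ rfl⟩
      change C.fib (c j) w.1 = C.fib (c j) v
      have e : D.range (D.mul (D.inv v) w.1) = D.source v := by
        rw [hA.range_mul _ _ ((hA.source_inv v).trans hr), hA.range_inv]
      have := fib_mul hA hm e
      rwa [mul_inv_cancel' hA hr] at this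
  · convert isOpen_empty using 1
    ext w
    simp only [mem_preimage, mem_empty_iff_false, iff_false]
    rintro ⟨v, hv, hvw⟩
    exact hi (congrArg Prod.snd hvw).symm

/-- good sets -/
structure Good {n : ℕ} (C : D.Colouring d) (c : Fin (n + 1) → Fin (d + 1)) (W : Set G) : Prop where
  op : IsOpen W
  cpt : IsCompact W
  bis : D.IsBisection W
  adm : W ⊆ C.Adm c

lemma bset_eq_image (hA : D.IsAmpleGroupoid) {n : ℕ} {c : Fin (n + 1) → Fin (d + 1)} {W : Set G}
    (hW : W ⊆ C.Adm c) : C.bset c W = qmap hA c '' (Subtype.val ⁻¹' W) := by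
  ext x
  constructor
  · rintro ⟨w, hw, h⟩
    exact ⟨⟨w, hW hw⟩, hw, Subtype.ext h.symm⟩
  · rintro ⟨w, hw, rfl⟩
    exact ⟨w.1, hw, rfl⟩

lemma isCompact_bset (hA : D.IsAmpleGroupoid) {n : ℕ} {c : Fin (n + 1) → Fin (d + 1)} {W : Set G}
    (hW : Good C c W) : IsCompact (C.bset c W) := by
  rw [bset_eq_image hA hW.adm]
  refine IsCompact.image ?_ (continuous_qmap hA c)
  rw [Topology.IsInducing.subtypeVal.isCompact_preimage_iff (by simpa using hW.adm)]
  exact hW.cpt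

lemma isOpen_bset (hA : D.IsAmpleGroupoid) {n : ℕ} {c : Fin (n + 1) → Fin (d + 1)} {W : Set G}
    (hW : Good C c W) : IsOpen (C.bset c W) := by
  have e : C.bset c W = ⋂ j, {x : C.NerveSp n | x.1 j ∈ {p | ∃ g ∈ W, p = (C.fib (c j) g, c j)}} := by
    ext x
    simp only [mem_iInter]
    constructor
    · rintro ⟨w, hw, h⟩ j
      exact ⟨w, hw, by rw [h]; rfl⟩
    · intro h
      choose g hg hx using h
      have h1 : ∀ j, D.range (g j) = D.range (x.2.2.some) := by
        intro j
        have := mem_iInter.1 x.2.2.some_mem j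
        have h2 : (x.1 j).1 = C.fib (c j) (g j) := by rw [hx j]
        exact (range_of_mem_fib hA (h2 ▸ this)).symm
      refine ⟨g 0, hg 0, ?_⟩
      funext j
      have : g j = g 0 := hW.bis.2 (hg j) (hg 0) ((h1 j).trans (h1 0).symm)
      rw [hx j, this]; rfl
  rw [e]
  refine isOpen_iInter_of_finite fun j => ?_
  have h1 : @IsOpen _ C.baseTop {p | ∃ g ∈ W, p = (C.fib (c j) g, c j)} := by
    refine TopologicalSpace.isOpen_generateFrom_of_mem ⟨W, c j, hW.op, fun g hg => ?_, rfl⟩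
    exact ⟨D.source g, hW.adm hg j, hA.range_unit _ (hA.source_mem g)⟩
  let _ : TopologicalSpace (Set G × Fin (d + 1)) := C.baseTop
  have h2 : Continuous (fun x : C.NerveSp n => x.1 j) :=
    (@continuous_apply _ _ (fun _ => C.baseTop) j).comp continuous_induced_dom
  exact h1.preimage h2

lemma bset_basis (hA : D.IsAmpleGroupoid) {n : ℕ} (x : C.NerveSp n) (w : G)
    (hx : x.1 = C.raw (C.col x) w) (U : Set (C.NerveSp n)) (hU : IsOpen U) (hxU : x ∈ U)
    (V : Set G) (hV : IsOpen V) (hwV : w ∈ V) :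
    ∃ W, Good C (C.col x) W ∧ w ∈ W ∧ W ⊆ V ∧ C.bset (C.col x) W ⊆ U := by
  have hw := adm_of_raw hA hx
  have h1 : IsOpen (Subtype.val '' (qmap hA (C.col x) ⁻¹' U)) :=
    (isOpen_Adm hA _).isOpenMap_subtype_val _ (hU.preimage (continuous_qmap hA _))
  have h2 : w ∈ (Subtype.val '' (qmap hA (C.col x) ⁻¹' U)) := by
    refine ⟨⟨w, hw⟩, ?_, rfl⟩
    have : qmap hA (C.col x) ⟨w, hw⟩ = x := Subtype.ext hx.symm
    rw [mem_preimage, this]; exact hxU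
  obtain ⟨W, hwW, hWU, hWo, hWc, hWb⟩ := hA.ample w _ (h1.inter hV) ⟨h2, hwV⟩
  refine ⟨W, ⟨hWo, hWc, hWb, ?_⟩, hwW, fun z hz => (hWU hz).2, ?_⟩
  · intro z hz
    obtain ⟨⟨a, ha, rfl⟩, _⟩ := hWU hz
    exact a.2
  · rintro y ⟨z, hz, hyz⟩
    obtain ⟨⟨a, ha, rfl⟩, _⟩ := hWU hz
    have : qmap hA (C.col x) a = y := Subtype.ext hyz.symm
    rw [← this]; exact ha

lemma col_bset {n : ℕ} {c : Fin (n + 1) → Fin (d + 1)} {W : Set G} {x : C.NerveSp n}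
    (h : x ∈ C.bset c W) : C.col x = c := by
  obtain ⟨w, _, h⟩ := h
  exact col_of_raw h

lemma isOpen_col (hA : D.IsAmpleGroupoid) {n : ℕ} (S : Set (Fin (n + 1) → Fin (d + 1))) :
    IsOpen {x : C.NerveSp n | C.col x ∈ S} := by
  rw [isOpen_iff_mem_nhds]
  intro x hx
  obtain ⟨w, hw, _⟩ := exists_raw hA x
  obtain ⟨W, hW, hwW, _, _⟩ := bset_basis hA x w hw univ isOpen_univ trivial univ isOpen_univ trivial
  refine Filter.mem_of_superset ((isOpen_bset hA hW).mem_nhds ⟨w, hwW, hw⟩) ?_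
  intro y hy
  change C.col y ∈ S
  rw [col_bset hy]; exact hx

lemma isClosed_bset (hA : D.IsAmpleGroupoid) {n : ℕ} {c : Fin (n + 1) → Fin (d + 1)} {W : Set G}
    (hW : Good C c W) : IsClosed (C.bset c W) := by
  have := hA.t2
  rw [← isOpen_compl_iff, isOpen_iff_mem_nhds]
  intro x hx
  by_cases hc : C.col x = c
  · obtain ⟨v, hv, hva⟩ := exists_raw hA x
    let Hc : Set G := ⋂ j, C.sub (c j)
    have hHc : IsCompact Hc := (C.isCompact (c 0)).of_isClosed_subset
      (isClosed_iInter fun j => (C.isCompact _).isClosed) (iInter_subset _ 0)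
    have hcl := isClosed_mulSet hA hW.cpt hHc
    have key : ∀ z : G, ∀ y : C.NerveSp n, y.1 = C.raw c z →
        (y ∈ C.bset c W ↔ z ∈ {w | ∃ v ∈ W, D.range v = D.range w ∧ D.mul (D.inv v) w ∈ Hc}) := by
      intro z y hyz
      have hz := adm_of_raw hA hyz
      constructor
      · rintro ⟨w, hw, hyw⟩
        have h1 : ∀ j, C.fib (c j) z = C.fib (c j) w := fun j =>
          congrArg (fun f => (f j).1) (hyz.symm.trans hyw)
        exact ⟨w, hw, (inv_mul_mem hA (hz 0) (h1 0)).1.symm, mem_iInter.2 fun j =>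
          (inv_mul_mem hA (hz j) (h1 j)).2⟩
      · rintro ⟨w, hw, hr, hm⟩
        refine ⟨w, hw, hyz.trans (funext fun j => Prod.ext ?_ rfl)⟩
        have e : D.range (D.mul (D.inv w) z) = D.source w := by
          rw [hA.range_mul _ _ ((hA.source_inv w).trans hr), hA.range_inv]
        have := fib_mul hA (mem_iInter.1 hm j) e
        rwa [mul_inv_cancel' hA hr] at this
    obtain ⟨V, hV, hvV, hVs, _⟩ := bset_basis hA x v hv univ isOpen_univ trivial _ hcl.isOpen_compl
      (fun h => hx ((key v x (hc ▸ hv)).2 h))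
    rw [hc] at hv hV
    refine Filter.mem_of_superset ((isOpen_bset hA hV).mem_nhds ⟨v, hvV, hv⟩) ?_
    rintro y ⟨z, hz, hyz⟩ hy
    exact hVs hz ((key z y hyz).1 hy)
  · refine Filter.mem_of_superset ((isOpen_col (C := C) hA {c}ᶜ).mem_nhds hc) ?_
    intro y hy hy'
    exact hy (col_bset hy')

lemma isClopen_bset (hA : D.IsAmpleGroupoid) {n : ℕ} {c : Fin (n + 1) → Fin (d + 1)} {W : Set G}
    (hW : Good C c W) : IsClopen (C.bset c W) := ⟨isClosed_bset hA hW, isOpen_bset hA hW⟩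

lemma ind_mem (hA : D.IsAmpleGroupoid) {n : ℕ} {c : Fin (n + 1) → Fin (d + 1)} {W : Set G}
    (hW : Good C c W) : C.ind c W ∈ ccZSub (C.NerveSp n) := by
  refine ⟨(isClopen_bset hA hW).continuous_indicator continuous_one, ?_⟩
  refine HasCompactSupport.intro' (isCompact_bset hA hW) (isClosed_bset hA hW) ?_
  intro x hx
  exact indicator_of_notMem hx _

lemma cc_gen (hA : D.IsAmpleGroupoid) {n : ℕ} (f : C.NerveSp n → ℤ)
    (hf : f ∈ ccZ (C.NerveSp n)) :
    f ∈ AddSubgroup.closure {g : C.NerveSp n → ℤ | ∃ c W, Good C c W ∧ g = C.ind c W} := by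
  have := ccZ_gen {B : Set (C.NerveSp n) | ∃ c W, Good C c W ∧ B = C.bset c W} ?_ ?_ ?_ f hf
  · refine AddSubgroup.closure_mono ?_ this
    rintro _ ⟨_, ⟨c, W, hW, rfl⟩, rfl⟩
    exact ⟨c, W, hW, rfl⟩
  · rintro _ ⟨c, W, hW, rfl⟩
    exact isClopen_bset hA hW
  · rintro _ ⟨c, W, hW, rfl⟩ E hE
    let E' : Set G := Subtype.val '' (qmap hA c ⁻¹' E)
    let F' : Set G := Subtype.val '' (qmap hA c ⁻¹' Eᶜ)
    have hE' : IsOpen E' :=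
      (isOpen_Adm hA _).isOpenMap_subtype_val _ (hE.isOpen.preimage (continuous_qmap hA _))
    have hF' : IsOpen F' :=
      (isOpen_Adm hA _).isOpenMap_subtype_val _ (hE.compl.isOpen.preimage (continuous_qmap hA _))
    have hEF : W \ E' = W ∩ F' := by
      ext w
      constructor
      · rintro ⟨hw, hn⟩
        exact ⟨hw, ⟨w, hW.adm hw⟩, fun h => hn ⟨_, h, rfl⟩, rfl⟩
      · rintro ⟨hw, ⟨a, ha, rfl⟩⟩
        refine ⟨hw, ?_⟩
        rintro ⟨b, hb, hab⟩
        rw [Subtype.ext hab] at hb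
        exact ha hb
    refine ⟨c, W \ E', ⟨?_, hW.cpt.diff hE', hW.bis.mono sdiff_subset,
      sdiff_subset.trans hW.adm⟩, ?_⟩
    · rw [hEF]; exact hW.op.inter hF'
    · ext x
      constructor
      · rintro ⟨⟨w, hw, hx⟩, hxE⟩
        refine ⟨w, ⟨hw, ?_⟩, hx⟩
        rintro ⟨a, ha, rfl⟩
        have : qmap hA c a = x := Subtype.ext hx.symm
        exact hxE (this ▸ ha)
      · rintro ⟨w, ⟨hw, hn⟩, hx⟩
        refine ⟨⟨w, hw, hx⟩, fun hxE => hn ⟨⟨w, hW.adm hw⟩, ?_, rfl⟩⟩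
        have : qmap hA c ⟨w, hW.adm hw⟩ = x := Subtype.ext hx.symm
        rw [mem_preimage, this]; exact hxE
  · intro x U hU hx
    obtain ⟨w, hw, _⟩ := exists_raw hA x
    obtain ⟨W, hW, hwW, _, hWU⟩ := bset_basis hA x w hw U hU hx univ isOpen_univ trivial
    exact ⟨_, ⟨_, W, hW, rfl⟩, ⟨w, hwW, hw⟩, hWU⟩

/-! ### extension and restriction -/

lemma nerveIncl_inj {n : ℕ} : Injective (C.nerveIncl n) := by
  intro x y h
  exact Subtype.ext (congrArg (fun z : C.NerveSp n => z.1) h)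

lemma mem_range_incl {n : ℕ} (x : C.NerveSp n) :
    x ∈ Set.range (C.nerveIncl n) ↔ StrictMono (C.col x) := by
  constructor
  · rintro ⟨y, rfl⟩ j k hjk
    exact y.2.2 j k hjk
  · intro h
    exact ⟨⟨x.1, x.2, fun j k hjk => h hjk⟩, rfl⟩

lemma isClosedEmbedding_incl (hA : D.IsAmpleGroupoid) {n : ℕ} :
    Topology.IsClosedEmbedding (C.nerveIncl n) := by
  refine ⟨⟨⟨?_⟩, nerveIncl_inj⟩, ?_⟩
  · exact (induced_compose (tγ := @Pi.topologicalSpace _ _ (fun _ => C.baseTop))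
      (f := C.nerveIncl n) (g := fun x : C.NerveSp n => x.1)).symm
  · have : Set.range (C.nerveIncl n) = {x | C.col x ∈ {c | ¬ StrictMono c}}ᶜ := by
      ext x
      rw [mem_range_incl]; simp
    rw [this, isClosed_compl_iff]
    exact isOpen_col hA _

lemma isClopen_range_incl (hA : D.IsAmpleGroupoid) {n : ℕ} :
    IsClopen (Set.range (C.nerveIncl n)) := by
  refine ⟨(isClosedEmbedding_incl hA).isClosed_range, ?_⟩
  have : Set.range (C.nerveIncl n) = {x | C.col x ∈ {c | StrictMono c}} := by
      ext x
      rw [mem_range_incl]; simp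
  rw [this]
  exact isOpen_col hA _

variable (C) in
/-- extension by zero -/
def ext0 (n : ℕ) : (C.NerveGtSp n → ℤ) →+ (C.NerveSp n → ℤ) where
  toFun a := fun x => if h : x ∈ Set.range (C.nerveIncl n) then a h.choose else 0
  map_zero' := by funext x; simp
  map_add' a b := by funext x; simp only [Pi.add_apply]; split_ifs <;> simp

lemma ext0_incl {n : ℕ} (a : C.NerveGtSp n → ℤ) (x) : C.ext0 n a (C.nerveIncl n x) = a x := by
  have h : C.nerveIncl n x ∈ Set.range (C.nerveIncl n) := ⟨x, rfl⟩
  change (if h : C.nerveIncl n x ∈ Set.range (C.nerveIncl n) then a h.choose else 0) = _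
  rw [dif_pos h, nerveIncl_inj h.choose_spec]

lemma ext0_not {n : ℕ} (a : C.NerveGtSp n → ℤ) {x} (hx : x ∉ Set.range (C.nerveIncl n)) :
    C.ext0 n a x = 0 := dif_neg hx

lemma pushf_incl {n : ℕ} (a : C.NerveGtSp n → ℤ) : pushf (C.nerveIncl n) a = C.ext0 n a := by
  funext x
  unfold pushf
  by_cases hx : x ∈ Set.range (C.nerveIncl n)
  · obtain ⟨y, rfl⟩ := hx
    rw [ext0_incl]
    have : C.nerveIncl n ⁻¹' {C.nerveIncl n y} = {y} := by
      ext z; simp [nerveIncl_inj.eq_iff]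
    rw [this, finsum_mem_singleton]
  · rw [ext0_not _ hx]
    have : C.nerveIncl n ⁻¹' {x} = ∅ := by
      ext z
      simp only [mem_preimage, mem_singleton_iff, mem_empty_iff_false, iff_false]
      exact fun h => hx ⟨z, h⟩
    rw [this, finsum_mem_empty]

variable (C) in
def restr (n : ℕ) : (C.NerveSp n → ℤ) →+ (C.NerveGtSp n → ℤ) where
  toFun a := fun x => a (C.nerveIncl n x)
  map_zero' := rfl
  map_add' _ _ := rfl

lemma restr_ext0 {n : ℕ} (a : C.NerveGtSp n → ℤ) : C.restr n (C.ext0 n a) = a :=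
  funext fun x => ext0_incl a x

lemma ext0_restr {n : ℕ} (a : C.NerveSp n → ℤ)
    (ha : ∀ x, a x ≠ 0 → StrictMono (C.col x)) : C.ext0 n (C.restr n a) = a := by
  funext x
  by_cases hx : x ∈ Set.range (C.nerveIncl n)
  · obtain ⟨y, rfl⟩ := hx
    rw [ext0_incl]; rfl
  · rw [ext0_not _ hx]
    by_contra h
    exact hx ((mem_range_incl x).2 (ha x (Ne.symm h)))

lemma restr_cc (hA : D.IsAmpleGroupoid) {n : ℕ} {a : C.NerveSp n → ℤ}
    (ha : a ∈ ccZ (C.NerveSp n)) : C.restr n a ∈ ccZ (C.NerveGtSp n) :=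
  ⟨ha.1.comp (isClosedEmbedding_incl hA).continuous,
    ha.2.comp_isClosedEmbedding (isClosedEmbedding_incl hA)⟩

lemma ext0_cc (hA : D.IsAmpleGroupoid) {n : ℕ} {a : C.NerveGtSp n → ℤ}
    (ha : a ∈ ccZ (C.NerveGtSp n)) : C.ext0 n a ∈ ccZ (C.NerveSp n) := by
  have hce := isClosedEmbedding_incl (C := C) (n := n) hA
  have hoe : Topology.IsOpenEmbedding (C.nerveIncl n) :=
    ⟨hce.isEmbedding, (isClopen_range_incl hA).isOpen⟩
  constructor
  · rw [continuous_iff_continuousAt]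
    intro x
    by_cases hx : x ∈ Set.range (C.nerveIncl n)
    · obtain ⟨y, rfl⟩ := hx
      rw [← hoe.continuousAt_iff]
      have : C.ext0 n a ∘ C.nerveIncl n = a := funext fun z => ext0_incl a z
      rw [this]
      exact ha.1.continuousAt
    · have : C.ext0 n a =ᶠ[nhds x] fun _ => 0 := by
        filter_upwards [(isClopen_range_incl hA).compl.isOpen.mem_nhds hx] with z hz
        exact ext0_not a hz
      exact continuousAt_const.congr this.symm
  · refine HasCompactSupport.intro' (ha.2.isCompact.image hce.continuous)
      (hce.isClosedMap _ (isClosed_tsupport a)) ?_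
    intro x hx
    by_cases hr : x ∈ Set.range (C.nerveIncl n)
    · obtain ⟨y, rfl⟩ := hr
      rw [ext0_incl]
      exact image_eq_zero_of_notMem_tsupport fun h => hx ⟨y, h, rfl⟩
    · exact ext0_not a hr

end Colouring
end GroupoidData

/-! ### Operators on chains of the nerve -/

namespace GroupoidData

variable {G : Type u} [TopologicalSpace G] {D : GroupoidData G} {d : ℕ} {C : D.Colouring d}

namespace Colouring

open ColAlg

attribute [local instance] nerveTop nerveGtTop

/-- fibrewise finitely supported functions -/
def FF {n : ℕ} (a : C.NerveSp n → ℤ) : Prop := ∀ t, {x | a x ≠ 0 ∧ anc x = t}.Finite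

lemma FF.add {n : ℕ} {a b : C.NerveSp n → ℤ} (ha : FF a) (hb : FF b) : FF (a + b) := by
  intro t
  refine ((ha t).union (hb t)).subset ?_
  rintro x ⟨h1, h2⟩
  by_cases h : a x = 0
  · right; exact ⟨by simpa [h] using h1, h2⟩
  · left; exact ⟨h, h2⟩

lemma FF.neg {n : ℕ} {a : C.NerveSp n → ℤ} (ha : FF a) : FF (-a) := by
  intro t
  refine (ha t).subset ?_
  rintro x ⟨h1, h2⟩
  exact ⟨by simpa using h1, h2⟩

lemma FF.sub {n : ℕ} {a b : C.NerveSp n → ℤ} (ha : FF a) (hb : FF b) : FF (a - b) := by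
  rw [sub_eq_add_neg]; exact ha.add hb.neg

lemma FF.of_imp {n : ℕ} {a b : C.NerveSp n → ℤ} (ha : FF a) (h : ∀ x, b x ≠ 0 → a x ≠ 0) :
    FF b := fun t => (ha t).subset fun x hx => ⟨h x hx.1, hx.2⟩

lemma FF_zero {n : ℕ} : FF (0 : C.NerveSp n → ℤ) := fun t => by simp

lemma FF_ind (hA : D.IsAmpleGroupoid) {n : ℕ} {c : Fin (n + 1) → Fin (d + 1)} {W : Set G}
    (hW : D.IsBisection W) : FF (C.ind c W) := by
  intro t
  refine Set.Subsingleton.finite ?_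
  rintro x ⟨h1, h2⟩ x' ⟨h1', h2'⟩
  obtain ⟨w, hw, hx⟩ : x ∈ C.bset c W := by
    by_contra h; exact h1 (indicator_of_notMem h _)
  obtain ⟨w', hw', hx'⟩ : x' ∈ C.bset c W := by
    by_contra h; exact h1' (indicator_of_notMem h _)
  rw [anc_eq hA hx] at h2
  rw [anc_eq hA hx'] at h2'
  have := hW.2 hw hw' (h2.trans h2'.symm)
  subst this
  exact Subtype.ext (hx.trans hx'.symm)

lemma closure_gen_le (hA : D.IsAmpleGroupoid) {n : ℕ} :
    AddSubgroup.closure {g : C.NerveSp n → ℤ | ∃ c W, Good C c W ∧ g = C.ind c W} ≤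
      ccZSub (C.NerveSp n) := by
  rw [AddSubgroup.closure_le]
  rintro _ ⟨c, W, hW, rfl⟩
  exact ind_mem hA hW

lemma cc_induct (hA : D.IsAmpleGroupoid) {n : ℕ} {p : (C.NerveSp n → ℤ) → Prop}
    (hg : ∀ c W, Good C c W → p (C.ind c W)) (h0 : p 0)
    (hadd : ∀ a b, a ∈ ccZ (C.NerveSp n) → b ∈ ccZ (C.NerveSp n) → p a → p b → p (a + b))
    (hneg : ∀ a, a ∈ ccZ (C.NerveSp n) → p a → p (-a)) (a) (ha : a ∈ ccZ (C.NerveSp n)) : p a := by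
  have := cc_gen hA a ha
  induction this using AddSubgroup.closure_induction with
  | mem x hx => obtain ⟨c, W, hW, rfl⟩ := hx; exact hg c W hW
  | zero => exact h0
  | add x y hx hy h1 h2 =>
    have hx' := closure_gen_le hA hx
    have hy' := closure_gen_le hA hy
    exact hadd x y hx' hy' (h1 hx') (h2 hy')
  | neg x hx h1 =>
    have hx' := closure_gen_le hA hx
    exact hneg x hx' (h1 hx')

lemma cc_FF (hA : D.IsAmpleGroupoid) {n : ℕ} {a : C.NerveSp n → ℤ}
    (ha : a ∈ ccZ (C.NerveSp n)) : FF a :=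
  cc_induct hA (p := FF) (fun c W hW => FF_ind hA hW.bis) FF_zero
    (fun _ _ _ _ h1 h2 => h1.add h2) (fun _ _ h => h.neg) a ha

/-- operator attached to a matrix on colour tuples -/
def T {n m : ℕ} (K : (Fin (n + 1) → Fin (d + 1)) → O (Fin (d + 1)) m) (a : C.NerveSp n → ℤ) :
    C.NerveSp m → ℤ :=
  fun y => ∑ᶠ x : C.NerveSp n, (if isFace y x then K (C.col x) (C.col y) else 0) * a x

/-- support condition -/
def SuppK {n m : ℕ} (K : (Fin (n + 1) → Fin (d + 1)) → O (Fin (d + 1)) m) : Prop :=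
  ∀ c, K c ∈ OS (Set.range c) m

section T

variable {n m : ℕ} (K : (Fin (n + 1) → Fin (d + 1)) → O (Fin (d + 1)) m)

lemma T_fin (hA : D.IsAmpleGroupoid) {a : C.NerveSp n → ℤ} (ha : FF a) (y : C.NerveSp m) :
    (support fun x : C.NerveSp n =>
      (if isFace y x then K (C.col x) (C.col y) else 0) * a x).Finite := by
  refine (ha (anc y)).subset ?_
  intro x hx
  rw [mem_support] at hx
  by_cases h : isFace y x
  · exact ⟨right_ne_zero_of_mul hx, isFace_anc hA h⟩
  · simp [h] at hx

lemma T_add (hA : D.IsAmpleGroupoid) {a b : C.NerveSp n → ℤ} (ha : FF a) (hb : FF b) :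
    T K (a + b) = T K a + T K b := by
  funext y
  simp only [T, Pi.add_apply, mul_add]
  exact finsum_add_distrib (T_fin K hA ha y) (T_fin K hA hb y)

lemma T_zero : T K (0 : C.NerveSp n → ℤ) = 0 := by
  funext y
  simp [T]

lemma T_neg (a : C.NerveSp n → ℤ) : T K (-a) = - T K a := by
  funext y
  simp only [T, Pi.neg_apply, mul_neg]
  exact finsum_neg_distrib _

lemma T_sub (hA : D.IsAmpleGroupoid) {a b : C.NerveSp n → ℤ} (ha : FF a) (hb : FF b) :
    T K (a - b) = T K a - T K b := by
  rw [sub_eq_add_neg, T_add K hA ha hb.neg, T_neg, sub_eq_add_neg]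

lemma T_smul (k : ℤ) (a : C.NerveSp n → ℤ) : T K (k • a) = k • T K a := by
  funext y
  simp only [T, Pi.smul_apply]
  rw [smul_finsum]
  refine finsum_congr fun x => ?_
  simp only [smul_eq_mul]; ring

end T

variable (C) in
/-- realise colour chains over `W` -/
def Ph {m : ℕ} (W : Set G) : O (Fin (d + 1)) m →ₗ[ℤ] (C.NerveSp m → ℤ) :=
  lc (fun c' => C.ind c' W)

lemma ind_col {m : ℕ} {c : Fin (m + 1) → Fin (d + 1)} {W : Set G} {y : C.NerveSp m}
    (h : c ≠ C.col y) : C.ind c W y = 0 :=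
  indicator_of_notMem (fun hy => h (col_bset hy).symm) _

lemma Ph_apply {m : ℕ} (W : Set G) (z : O (Fin (d + 1)) m) (y : C.NerveSp m) :
    C.Ph W z y = z (C.col y) * C.ind (C.col y) W y := by
  induction z using Finsupp.induction_linear with
  | zero => simp
  | add a b ha hb => simp only [map_add, Pi.add_apply, ha, hb, Finsupp.add_apply, add_mul]
  | single c k =>
    simp only [Ph, lc, Finsupp.linearCombination_single, Pi.smul_apply, smul_eq_mul]
    by_cases h : c = C.col y
    · subst h; simp
    · rw [ind_col h]; simp [Finsupp.single_apply, h]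

lemma Ph_single {m : ℕ} (W : Set G) (c : Fin (m + 1) → Fin (d + 1)) :
    C.Ph W (Finsupp.single c 1) = C.ind c W := by
  simp [Ph]

lemma T_ind (hA : D.IsAmpleGroupoid) {n m : ℕ}
    {K : (Fin (n + 1) → Fin (d + 1)) → O (Fin (d + 1)) m} (hK : SuppK K)
    {c : Fin (n + 1) → Fin (d + 1)} {W : Set G} (hW : D.IsBisection W) (hWa : W ⊆ C.Adm c) :
    T K (C.ind c W) = C.Ph W (K c) := by
  funext y
  rw [Ph_apply]
  by_cases hz : K c (C.col y) = 0
  · rw [hz, zero_mul]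
    refine finsum_eq_zero_of_forall_eq_zero fun x => ?_
    by_cases hx : x ∈ C.bset c W
    · rw [col_bset hx, hz]; simp
    · rw [show C.ind c W x = 0 from indicator_of_notMem hx _, mul_zero]
  have hr : ∀ j, C.col y j ∈ Set.range c := hK c (Finsupp.mem_support_iff.2 hz)
  by_cases hy : y ∈ C.bset (C.col y) W
  · obtain ⟨w, hw, hyw⟩ := id hy
    let x0 : C.NerveSp n := ⟨C.raw c w, raw_mem hA (hWa hw)⟩
    have hx0 : x0.1 = C.raw c w := rfl
    have hx0m : x0 ∈ C.bset c W := ⟨w, hw, rfl⟩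
    unfold T
    rw [finsum_eq_single _ x0]
    · rw [if_pos ((isFace_iff hx0).2 ⟨hyw, hr⟩), col_of_raw hx0]
      unfold ind
      rw [indicator_of_mem hy, indicator_of_mem hx0m]; rfl
    · intro x hx
      by_cases hxm : x ∈ C.bset c W
      · obtain ⟨w', hw', hxw'⟩ := hxm
        rw [if_neg, zero_mul]
        intro hf
        have h1 := ((isFace_iff hxw').1 hf).1
        have h2 : D.range w = D.range w' := (anc_eq hA hyw).symm.trans (anc_eq hA h1)
        have := hW.2 hw hw' h2
        subst this
        exact hx (Subtype.ext hxw')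
      · rw [show C.ind c W x = 0 from indicator_of_notMem hxm _, mul_zero]
  · rw [show C.ind (C.col y) W y = 0 from indicator_of_notMem hy _, mul_zero]
    refine finsum_eq_zero_of_forall_eq_zero fun x => ?_
    by_cases hx : x ∈ C.bset c W
    · obtain ⟨w', hw', hxw'⟩ := hx
      rw [if_neg, zero_mul]
      intro hf
      exact hy ⟨w', hw', ((isFace_iff hxw').1 hf).1⟩
    · rw [show C.ind c W x = 0 from indicator_of_notMem hx _, mul_zero]

lemma Adm_mono {n m : ℕ} {c : Fin (n + 1) → Fin (d + 1)} {c' : Fin (m + 1) → Fin (d + 1)}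
    (h : ∀ j, c' j ∈ Set.range c) : C.Adm c ⊆ C.Adm c' := by
  intro w hw j
  obtain ⟨k, hk⟩ := h j
  rw [← hk]; exact hw k

lemma FF_smul {n : ℕ} {a : C.NerveSp n → ℤ} (ha : FF a) (k : ℤ) : FF (k • a) :=
  ha.of_imp fun x hx => right_ne_zero_of_mul (by simpa using hx)

lemma FF_Ph (hA : D.IsAmpleGroupoid) {m : ℕ} {W : Set G} (hW : D.IsBisection W)
    (z : O (Fin (d + 1)) m) : FF (C.Ph W z) := by
  induction z using Finsupp.induction_linear with
  | zero => rw [map_zero]; exact FF_zero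
  | add a b ha hb => rw [map_add]; exact ha.add hb
  | single c k =>
    simp only [Ph, lc, Finsupp.linearCombination_single]
    exact FF_smul (FF_ind hA hW) k

lemma T_Ph (hA : D.IsAmpleGroupoid) {l n m : ℕ}
    {K : (Fin (n + 1) → Fin (d + 1)) → O (Fin (d + 1)) m} (hK : SuppK K)
    {c : Fin (l + 1) → Fin (d + 1)} {W : Set G} (hW : D.IsBisection W) (hWa : W ⊆ C.Adm c)
    {z : O (Fin (d + 1)) n} (hz : z ∈ OS (Set.range c) n) :
    T K (C.Ph W z) = C.Ph W (lc K z) := by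
  rw [OS, Finsupp.supported_eq_span_single] at hz
  induction hz using Submodule.span_induction with
  | zero => simp only [map_zero]; exact T_zero K
  | add a b _ _ ha hb =>
    simp only [map_add]
    rw [T_add K hA (FF_Ph hA hW _) (FF_Ph hA hW _), ha, hb]
  | smul k a _ ha => simp only [map_smul]; rw [T_smul, ha]
  | mem x hx =>
    obtain ⟨c', hc', rfl⟩ := hx
    rw [Ph_single, T_ind hA hK hW (hWa.trans (Adm_mono hc'))]
    simp

lemma Ph_cc (hA : D.IsAmpleGroupoid) {l m : ℕ} {c : Fin (l + 1) → Fin (d + 1)} {W : Set G}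
    (hW : Good C c W) {z : O (Fin (d + 1)) m} (hz : z ∈ OS (Set.range c) m) :
    C.Ph W z ∈ ccZSub (C.NerveSp m) := by
  rw [OS, Finsupp.supported_eq_span_single] at hz
  induction hz using Submodule.span_induction with
  | zero => rw [map_zero]; exact AddSubgroup.zero_mem _
  | add a b _ _ ha hb => rw [map_add]; exact AddSubgroup.add_mem _ ha hb
  | smul k a _ ha => rw [map_smul]; exact AddSubgroup.zsmul_mem _ ha k
  | mem x hx =>
    obtain ⟨c', hc', rfl⟩ := hx
    rw [Ph_single]
    exact ind_mem hA ⟨hW.op, hW.cpt, hW.bis, hW.adm.trans (Adm_mono hc')⟩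

lemma T_cc (hA : D.IsAmpleGroupoid) {n m : ℕ}
    {K : (Fin (n + 1) → Fin (d + 1)) → O (Fin (d + 1)) m} (hK : SuppK K)
    {a : C.NerveSp n → ℤ} (ha : a ∈ ccZ (C.NerveSp n)) : T K a ∈ ccZ (C.NerveSp m) := by
  refine cc_induct hA (p := fun a => T K a ∈ ccZSub (C.NerveSp m)) ?_ ?_ ?_ ?_ a ha
  · intro c W hW
    rw [T_ind hA hK hW.bis hW.adm]
    exact Ph_cc hA hW (hK c)
  · rw [T_zero]; exact AddSubgroup.zero_mem _
  · intro a b ha hb h1 h2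
    rw [T_add K hA (cc_FF hA ha) (cc_FF hA hb)]
    exact AddSubgroup.add_mem _ h1 h2
  · intro a ha h
    rw [T_neg]; exact AddSubgroup.neg_mem _ h

/-! boundary -/

def bN (n : ℕ) (a : C.NerveSp (n + 1) → ℤ) : C.NerveSp n → ℤ :=
  fun y => ∑ i : Fin (n + 2), (-1 : ℤ) ^ (i : ℕ) * ∑ᶠ x ∈ {x | C.nerveFace n i x = y}, a x

lemma face_anc (hA : D.IsAmpleGroupoid) {n : ℕ} (i) (x : C.NerveSp (n + 1)) :
    anc x = anc (C.nerveFace n i x) := isFace_anc hA fun j => ⟨i.succAbove j, rfl⟩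

lemma bN_fin (hA : D.IsAmpleGroupoid) {n : ℕ} {a : C.NerveSp (n + 1) → ℤ} (ha : FF a)
    (y : C.NerveSp n) (i) : ({x | C.nerveFace n i x = y} ∩ support a).Finite := by
  refine (ha (anc y)).subset ?_
  rintro x ⟨h1, h2⟩
  exact ⟨h2, by rw [face_anc hA i x]; exact congrArg anc h1⟩

lemma bN_add (hA : D.IsAmpleGroupoid) {n : ℕ} {a b : C.NerveSp (n + 1) → ℤ} (ha : FF a)
    (hb : FF b) : bN n (a + b) = bN n a + bN n b := by
  funext y
  simp only [bN, Pi.add_apply]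
  rw [← Finset.sum_add_distrib]
  refine Finset.sum_congr rfl fun i _ => ?_
  rw [← mul_add]
  congr 1
  exact finsum_mem_add_distrib' (bN_fin hA ha y i) (bN_fin hA hb y i)

lemma bN_smul {n : ℕ} (k : ℤ) (a : C.NerveSp (n + 1) → ℤ) : bN n (k • a) = k • bN n a := by
  funext y
  simp only [bN, Pi.smul_apply]
  rw [Finset.smul_sum]
  refine Finset.sum_congr rfl fun i _ => ?_
  rw [← mul_smul_comm]
  congr 1
  rw [finsum_mem_def, finsum_mem_def, smul_finsum]
  refine finsum_congr fun x => ?_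
  by_cases h : C.nerveFace n i x = y <;> simp [indicator, h]

lemma bN_neg {n : ℕ} (a : C.NerveSp (n + 1) → ℤ) : bN n (-a) = - bN n a := by
  have := bN_smul (-1) a
  simpa using this

lemma bN_zero {n : ℕ} : bN n (0 : C.NerveSp (n + 1) → ℤ) = 0 := by
  have := bN_smul 0 (0 : C.NerveSp (n + 1) → ℤ)
  simpa using this

lemma bN_sub (hA : D.IsAmpleGroupoid) {n : ℕ} {a b : C.NerveSp (n + 1) → ℤ} (ha : FF a)
    (hb : FF b) : bN n (a - b) = bN n a - bN n b := by
  rw [sub_eq_add_neg, bN_add hA ha hb.neg, bN_neg, sub_eq_add_neg]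

lemma bN_ind (hA : D.IsAmpleGroupoid) {n : ℕ} {c : Fin (n + 2) → Fin (d + 1)} {W : Set G}
    (hW : D.IsBisection W) (hWa : W ⊆ C.Adm c) :
    bN n (C.ind c W) = C.Ph W (bd0 n c) := by
  funext y
  unfold bN bd0
  rw [map_sum, Finset.sum_apply]
  refine Finset.sum_congr rfl fun i _ => ?_
  rw [map_smul, Ph_single, Pi.smul_apply, smul_eq_mul]
  congr 1
  rw [finsum_mem_def]
  by_cases hy : y ∈ C.bset (fun j => c (i.succAbove j)) W
  · obtain ⟨w, hw, hyw⟩ := id hy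
    let x0 : C.NerveSp (n + 1) := ⟨C.raw c w, raw_mem hA (hWa hw)⟩
    have hx0 : x0.1 = C.raw c w := rfl
    have hx0m : x0 ∈ C.bset c W := ⟨w, hw, rfl⟩
    have hf0 : C.nerveFace n i x0 = y := Subtype.ext hyw.symm
    rw [finsum_eq_single _ x0]
    · rw [indicator_of_mem (show x0 ∈ {x | C.nerveFace n i x = y} from hf0)]
      unfold ind
      rw [indicator_of_mem hy, indicator_of_mem hx0m]; rfl
    · intro x hx
      refine indicator_apply_eq_zero.2 fun hf => ?_
      refine indicator_of_notMem (fun hxm => ?_) _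
      obtain ⟨w', hw', hxw'⟩ := hxm
      have h2 : D.range w = D.range w' := by
        rw [← anc_eq hA hyw, ← anc_eq hA hxw', face_anc hA i x]
        exact congrArg anc (Eq.symm hf)
      have := hW.2 hw hw' h2
      subst this
      exact hx (Subtype.ext hxw')
  · rw [show C.ind _ W y = 0 from indicator_of_notMem hy _]
    refine finsum_eq_zero_of_forall_eq_zero fun x => ?_
    refine indicator_apply_eq_zero.2 fun hf => ?_
    refine indicator_of_notMem (fun hxm => hy ?_) _
    obtain ⟨w', hw', hxw'⟩ := hxm
    refine ⟨w', hw', ?_⟩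
    rw [← nerveFace_raw hxw']
    exact congrArg Subtype.val (Eq.symm hf)

lemma bN_Ph (hA : D.IsAmpleGroupoid) {l n : ℕ}
    {c : Fin (l + 1) → Fin (d + 1)} {W : Set G} (hW : D.IsBisection W) (hWa : W ⊆ C.Adm c)
    {z : O (Fin (d + 1)) (n + 1)} (hz : z ∈ OS (Set.range c) (n + 1)) :
    bN n (C.Ph W z) = C.Ph W (bd n z) := by
  rw [OS, Finsupp.supported_eq_span_single] at hz
  induction hz using Submodule.span_induction with
  | zero => simp only [map_zero]; exact bN_zero
  | add a b _ _ ha hb =>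
    simp only [map_add]
    rw [bN_add hA (FF_Ph hA hW _) (FF_Ph hA hW _), ha, hb]
  | smul k a _ ha => simp only [map_smul]; rw [bN_smul, ha]
  | mem x hx =>
    obtain ⟨c', hc', rfl⟩ := hx
    rw [Ph_single, bN_ind hA hW (hWa.trans (Adm_mono hc')), bd_single]

lemma bN_cc (hA : D.IsAmpleGroupoid) {n : ℕ}
    {a : C.NerveSp (n + 1) → ℤ} (ha : a ∈ ccZ (C.NerveSp (n + 1))) : bN n a ∈ ccZ (C.NerveSp n) := by
  refine cc_induct hA (p := fun a => bN n a ∈ ccZSub (C.NerveSp n)) ?_ ?_ ?_ ?_ a ha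
  · intro c W hW
    rw [bN_ind hA hW.bis hW.adm]
    exact Ph_cc hA hW (bd0_mem fun j => ⟨j, rfl⟩)
  · rw [bN_zero]; exact AddSubgroup.zero_mem _
  · intro a b ha hb h1 h2
    rw [bN_add hA (cc_FF hA ha) (cc_FF hA hb)]
    exact AddSubgroup.add_mem _ h1 h2
  · intro a ha h
    rw [bN_neg]; exact AddSubgroup.neg_mem _ h

/-! the two identities -/

lemma SuppK_P {n : ℕ} : SuppK (P n : (Fin (n + 1) → Fin (d + 1)) → O (Fin (d + 1)) n) :=
  fun c => P_mem _ c fun j => ⟨j, rfl⟩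

lemma SuppK_H {n : ℕ} : SuppK (H n : (Fin (n + 1) → Fin (d + 1)) → O (Fin (d + 1)) (n + 1)) :=
  fun c => H_mem _ c fun j => ⟨j, rfl⟩

lemma bN_TP (hA : D.IsAmpleGroupoid) {n : ℕ} {a : C.NerveSp (n + 1) → ℤ}
    (ha : a ∈ ccZ (C.NerveSp (n + 1))) : bN n (T (P (n + 1)) a) = T (P n) (bN n a) := by
  refine cc_induct hA (p := fun a => bN n (T (P (n + 1)) a) = T (P n) (bN n a)) ?_ ?_ ?_ ?_ a ha
  · intro c W hW
    rw [T_ind hA SuppK_P hW.bis hW.adm, bN_ind hA hW.bis hW.adm,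
      bN_Ph hA hW.bis hW.adm (SuppK_P c),
      T_Ph hA SuppK_P hW.bis hW.adm (bd0_mem fun j => ⟨j, rfl⟩), bd_P]
  · rw [T_zero, bN_zero, T_zero]
  · intro a b ha hb h1 h2
    have ha' := cc_FF hA ha
    have hb' := cc_FF hA hb
    rw [T_add _ hA ha' hb', bN_add hA (cc_FF hA (T_cc hA SuppK_P ha))
      (cc_FF hA (T_cc hA SuppK_P hb)), bN_add hA ha' hb',
      T_add _ hA (cc_FF hA (bN_cc hA ha)) (cc_FF hA (bN_cc hA hb)), h1, h2]
  · intro a ha h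
    rw [T_neg, bN_neg, bN_neg, T_neg, h]

lemma homotopy (hA : D.IsAmpleGroupoid) {n : ℕ} {a : C.NerveSp (n + 1) → ℤ}
    (ha : a ∈ ccZ (C.NerveSp (n + 1))) :
    a - T (P (n + 1)) a = bN (n + 1) (T (H (n + 1)) a) + T (H n) (bN n a) := by
  refine cc_induct hA (p := fun a =>
    a - T (P (n + 1)) a = bN (n + 1) (T (H (n + 1)) a) + T (H n) (bN n a)) ?_ ?_ ?_ ?_ a ha
  · intro c W hW
    rw [T_ind hA SuppK_P hW.bis hW.adm, bN_ind hA hW.bis hW.adm,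
      T_ind hA SuppK_H hW.bis hW.adm, bN_Ph hA hW.bis hW.adm (SuppK_H c),
      T_Ph hA SuppK_H hW.bis hW.adm (bd0_mem fun j => ⟨j, rfl⟩), bd_H, ← Ph_single]
    simp only [map_sub]
    abel
  · rw [T_zero, T_zero, bN_zero, bN_zero, T_zero]; simp
  · intro a b ha hb h1 h2
    have ha' := cc_FF hA ha
    have hb' := cc_FF hA hb
    rw [T_add _ hA ha' hb', T_add _ hA ha' hb', bN_add hA (cc_FF hA (T_cc hA SuppK_H ha))
      (cc_FF hA (T_cc hA SuppK_H hb)), bN_add hA ha' hb',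
      T_add _ hA (cc_FF hA (bN_cc hA ha)) (cc_FF hA (bN_cc hA hb)), add_sub_add_comm, h1, h2]
    abel
  · intro a ha h
    rw [T_neg, T_neg, bN_neg, bN_neg, T_neg, ← neg_add, ← h]
    abel

lemma TP_strict {n : ℕ} (a : C.NerveSp n → ℤ) (y : C.NerveSp n) (hy : T (P n) a y ≠ 0) :
    StrictMono (C.col y) := by
  obtain ⟨x, hx⟩ : ∃ x : C.NerveSp n,
      (if isFace y x then P n (C.col x) (C.col y) else 0) * a x ≠ 0 := by
    by_contra hcon
    push Not at hcon
    exact hy (finsum_eq_zero_of_forall_eq_zero hcon)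
  by_cases h : isFace y x
  · rw [if_pos h] at hx
    exact P_strict (C.col x) (Finsupp.mem_support_iff.2 (left_ne_zero_of_mul hx))
  · simp [h] at hx

lemma TP_self (hA : D.IsAmpleGroupoid) {n : ℕ} (a : C.NerveSp n → ℤ)
    (ha : ∀ x, a x ≠ 0 → StrictMono (C.col x)) : T (P n) a = a := by
  funext y
  unfold T
  rw [finsum_eq_single _ y]
  · have hyy : isFace y y := fun j => ⟨j, rfl⟩
    rw [if_pos hyy]
    by_cases h : a y = 0
    · simp [h]
    · rw [P_of_strictMono _ (ha y h)]; simp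
  · intro x hx
    by_cases h : a x = 0
    · simp [h]
    · rw [P_of_strictMono _ (ha x h)]
      by_cases hf : isFace y x
      · rw [if_pos hf]
        by_cases hc : C.col x = C.col y
        · exfalso
          obtain ⟨w, hw, _⟩ := exists_raw hA x
          have := ((isFace_iff hw).1 hf).1
          exact hx (Subtype.ext (by rw [hw, this, hc]))
        · simp [Finsupp.single_apply, hc]
      · simp [hf]

end Colouring
end GroupoidData

/-! ### Coinvariants -/

namespace GroupoidData

variable {G : Type u} [TopologicalSpace G] {D : GroupoidData G} {d : ℕ} {C : D.Colouring d}

namespace Colouring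

open ColAlg

attribute [local instance] nerveTop nerveGtTop

def actN {n : ℕ} (f : G → ℤ) (a : C.NerveSp n → ℤ) : C.NerveSp n → ℤ :=
  fun x => ∑ᶠ g : G, if D.range g = anc x then f g * a (C.nerveAct n (D.inv g) x) else 0

def epsN {n : ℕ} (f : G → ℤ) (a : C.NerveSp n → ℤ) : C.NerveSp n → ℤ :=
  fun x => (∑ᶠ g ∈ {g : G | D.source g = anc x}, f g) * a x

variable (C) in
def relN (n : ℕ) : AddSubgroup (C.NerveSp n → ℤ) :=
  AddSubgroup.closure
    {c | ∃ f a, f ∈ ccZ G ∧ a ∈ ccZ (C.NerveSp n) ∧ c = actN f a - epsN f a}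

/-- range-fibrewise finitely supported functions on `G` -/
def FG (D : GroupoidData G) (f : G → ℤ) : Prop := ∀ t, {g | f g ≠ 0 ∧ D.range g = t}.Finite

lemma FG.add {f f' : G → ℤ} (ha : FG D f) (hb : FG D f') : FG D (f + f') := by
  intro t
  refine ((ha t).union (hb t)).subset ?_
  rintro x ⟨h1, h2⟩
  by_cases h : f x = 0
  · right; exact ⟨by simpa [h] using h1, h2⟩
  · left; exact ⟨h, h2⟩

lemma FG.neg {f : G → ℤ} (ha : FG D f) : FG D (-f) := by
  intro t
  refine (ha t).subset ?_
  rintro x ⟨h1, h2⟩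
  exact ⟨by simpa using h1, h2⟩

lemma FG_ind {B : Set G} (hB : D.IsBisection B) : FG D (B.indicator 1) := by
  intro t
  refine Set.Subsingleton.finite ?_
  rintro x ⟨h1, h2⟩ x' ⟨h1', h2'⟩
  exact hB.2 (mem_of_indicator_ne_zero h1) (mem_of_indicator_ne_zero h1') (h2.trans h2'.symm)

lemma closureG_le (hA : D.IsAmpleGroupoid) {f : G → ℤ}
    (hf : f ∈ AddSubgroup.closure {g : G → ℤ | ∃ B, (IsOpen B ∧ IsCompact B ∧ D.IsBisection B) ∧
      g = B.indicator 1}) : FG D f := by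
  induction hf using AddSubgroup.closure_induction with
  | mem x hx => obtain ⟨B, hB, rfl⟩ := hx; exact FG_ind hB.2.2
  | zero => intro t; simp
  | add x y _ _ h1 h2 => exact h1.add h2
  | neg x _ h1 => exact h1.neg

lemma ccG_induct (hA : D.IsAmpleGroupoid) {p : (G → ℤ) → Prop}
    (hg : ∀ B, D.IsBisection B → p (B.indicator 1)) (h0 : p 0)
    (hadd : ∀ a b, FG D a → FG D b → p a → p b → p (a + b))
    (hneg : ∀ a, FG D a → p a → p (-a)) (a) (ha : a ∈ ccZ G) : p a := by
  have := ccG_gen hA a ha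
  clear ha
  induction this using AddSubgroup.closure_induction with
  | mem x hx => obtain ⟨B, hB, rfl⟩ := hx; exact hg B hB.2.2
  | zero => exact h0
  | add x y hx hy h1 h2 => exact hadd x y (closureG_le hA hx) (closureG_le hA hy) h1 h2
  | neg x hx h1 => exact hneg x (closureG_le hA hx) h1

lemma actN_fin {n : ℕ} {f : G → ℤ} (hf : FG D f) (a : C.NerveSp n → ℤ) (x : C.NerveSp n) :
    (support fun g : G =>
      if D.range g = anc x then f g * a (C.nerveAct n (D.inv g) x) else 0).Finite := by
  refine (hf (anc x)).subset ?_
  intro g hg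
  rw [mem_support] at hg
  by_cases h : D.range g = anc x
  · rw [if_pos h] at hg
    exact ⟨left_ne_zero_of_mul hg, h⟩
  · simp [h] at hg

lemma actN_addf {n : ℕ} {f f' : G → ℤ} (hf : FG D f) (hf' : FG D f') (a : C.NerveSp n → ℤ) :
    actN (f + f') a = actN f a + actN f' a := by
  funext x
  simp only [actN, Pi.add_apply]
  rw [← finsum_add_distrib (actN_fin hf a x) (actN_fin hf' a x)]
  refine finsum_congr fun g => ?_
  split_ifs <;> ring

lemma actN_adda {n : ℕ} {f : G → ℤ} (hf : FG D f) (a b : C.NerveSp n → ℤ) :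
    actN f (a + b) = actN f a + actN f b := by
  funext x
  simp only [actN, Pi.add_apply]
  rw [← finsum_add_distrib (actN_fin hf a x) (actN_fin hf b x)]
  refine finsum_congr fun g => ?_
  split_ifs <;> ring

lemma actN_negf {n : ℕ} (f : G → ℤ) (a : C.NerveSp n → ℤ) : actN (-f) a = - actN f a := by
  funext x
  simp only [actN, Pi.neg_apply]
  rw [← finsum_neg_distrib]
  refine finsum_congr fun g => ?_
  split_ifs <;> ring

lemma actN_smula {n : ℕ} (f : G → ℤ) (k : ℤ) (a : C.NerveSp n → ℤ) :
    actN f (k • a) = k • actN f a := by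
  funext x
  simp only [actN, Pi.smul_apply]
  rw [smul_finsum]
  refine finsum_congr fun g => ?_
  simp only [smul_eq_mul]
  split_ifs <;> ring

lemma actN_nega {n : ℕ} (f : G → ℤ) (a : C.NerveSp n → ℤ) : actN f (-a) = - actN f a := by
  have := actN_smula f (-1) a
  simpa using this

lemma actN_zeroa {n : ℕ} (f : G → ℤ) : actN f (0 : C.NerveSp n → ℤ) = 0 := by
  funext x; simp [actN]

lemma actN_zerof {n : ℕ} (a : C.NerveSp n → ℤ) : actN (0 : G → ℤ) a = 0 := by
  funext x; simp [actN]

lemma actN_ind (hA : D.IsAmpleGroupoid) {n : ℕ} {c : Fin (n + 1) → Fin (d + 1)} {B W : Set G}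
    (hB : D.IsBisection B) :
    actN (B.indicator 1) (C.ind c W) = C.ind c (D.setMul B W) := by
  funext x
  by_cases hx : x ∈ C.bset c (D.setMul B W)
  · obtain ⟨_, ⟨b, hb, w, hw, e, rfl⟩, hxw⟩ := id hx
    have hax : anc x = D.range b := by rw [anc_eq hA hxw, hA.range_mul _ _ e]
    have e2 : D.source (D.inv b) = D.range (D.mul b w) := by
      rw [hA.source_inv, hA.range_mul _ _ e]
    have hact : C.nerveAct n (D.inv b) x ∈ C.bset c W := by
      refine ⟨w, hw, ?_⟩
      rw [act_raw hA hxw e2, inv_mul_cancel' hA e]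
    unfold actN
    rw [finsum_eq_single _ b]
    · rw [if_pos hax.symm]
      unfold ind
      rw [indicator_of_mem hb, indicator_of_mem hx, indicator_of_mem hact]; simp
    · intro g hg
      split_ifs with h
      · by_cases hgB : g ∈ B
        · exact absurd (hB.2 hgB hb (h.trans hax)) hg
        · rw [indicator_of_notMem hgB, zero_mul]
      · rfl
  · rw [show C.ind c _ x = 0 from indicator_of_notMem hx _]
    refine finsum_eq_zero_of_forall_eq_zero fun g => ?_
    split_ifs with h
    · by_cases hgB : g ∈ B
      · by_cases hxm : C.nerveAct n (D.inv g) x ∈ C.bset c W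
        · exfalso
          obtain ⟨w, hw, hxw⟩ := hxm
          obtain ⟨v, hv, _⟩ := exists_raw hA x
          rw [anc_eq hA hv] at h
          have e1 : D.source (D.inv g) = D.range v := by rw [hA.source_inv, h]
          have h1 := act_raw hA hv e1
          have e3 : D.source g = D.range (D.mul (D.inv g) v) := by
            rw [hA.range_mul _ _ e1, hA.range_inv]
          have e2 : D.source g = D.range w := by
            rw [← anc_eq hA hxw, anc_eq hA h1, e3]
          have h2 := act_raw hA hxw e2
          have h3 := act_raw hA h1 e3
          rw [mul_inv_cancel' hA h, ← hv] at h3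
          exact hx ⟨_, ⟨g, hgB, w, hw, e2, rfl⟩, h3.symm.trans h2⟩
        · rw [show C.ind c W _ = 0 from indicator_of_notMem hxm _, mul_zero]
      · rw [indicator_of_notMem hgB, zero_mul]
    · rfl

lemma setMul_bis (hA : D.IsAmpleGroupoid) {B W : Set G} (hB : D.IsBisection B)
    (hW : D.IsBisection W) : D.IsBisection (D.setMul B W) := by
  constructor
  · rintro _ ⟨b, hb, w, hw, e, rfl⟩ _ ⟨b', hb', w', hw', e', rfl⟩ h
    rw [hA.source_mul _ _ e, hA.source_mul _ _ e'] at h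
    have := hW.1 hw hw' h
    subst this
    have := hB.1 hb hb' (e.trans e'.symm)
    subst this
    rfl
  · rintro _ ⟨b, hb, w, hw, e, rfl⟩ _ ⟨b', hb', w', hw', e', rfl⟩ h
    rw [hA.range_mul _ _ e, hA.range_mul _ _ e'] at h
    have := hB.2 hb hb' h
    subst this
    have := hW.2 hw hw' (e.symm.trans e')
    subst this
    rfl

lemma setMul_adm (hA : D.IsAmpleGroupoid) {n : ℕ} {c : Fin (n + 1) → Fin (d + 1)} {B W : Set G}
    (hW : W ⊆ C.Adm c) : D.setMul B W ⊆ C.Adm c := by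
  rintro _ ⟨b, hb, w, hw, e, rfl⟩ j
  rw [hA.source_mul _ _ e]
  exact hW hw j

lemma actN_Ph (hA : D.IsAmpleGroupoid) {n : ℕ} {B W : Set G} (hB : D.IsBisection B)
    (z : O (Fin (d + 1)) n) :
    actN (B.indicator 1) (C.Ph W z) = C.Ph (D.setMul B W) z := by
  induction z using Finsupp.induction_linear with
  | zero => rw [map_zero, map_zero, actN_zeroa]
  | add a b ha hb => rw [map_add, map_add, actN_adda (FG_ind hB), ha, hb]
  | single c k =>
    have : (Finsupp.single c k : O (Fin (d + 1)) n) = k • Finsupp.single c 1 := by simp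
    rw [this, map_smul, map_smul, actN_smula, Ph_single, Ph_single, actN_ind hA hB]

lemma actN_T (hA : D.IsAmpleGroupoid) {n m : ℕ}
    {K : (Fin (n + 1) → Fin (d + 1)) → O (Fin (d + 1)) m} (hK : SuppK K)
    {f : G → ℤ} (hf : f ∈ ccZ G) {a : C.NerveSp n → ℤ} (ha : a ∈ ccZ (C.NerveSp n)) :
    FF (actN f a) ∧ T K (actN f a) = actN f (T K a) := by
  refine ccG_induct hA (p := fun f => FF (actN f a) ∧ T K (actN f a) = actN f (T K a))
    ?_ ?_ ?_ ?_ f hf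
  · intro B hB
    refine cc_induct hA (p := fun a => FF (actN (B.indicator 1) a) ∧
      T K (actN (B.indicator 1) a) = actN (B.indicator 1) (T K a)) ?_ ?_ ?_ ?_ a ha
    · intro c W hW
      rw [actN_ind hA hB, T_ind hA hK (setMul_bis hA hB hW.bis) (setMul_adm hA hW.adm),
        T_ind hA hK hW.bis hW.adm, actN_Ph hA hB]
      exact ⟨FF_ind hA (setMul_bis hA hB hW.bis), rfl⟩
    · rw [actN_zeroa, T_zero, actN_zeroa]
      exact ⟨FF_zero, rfl⟩
    · intro a b ha hb h1 h2
      rw [actN_adda (FG_ind hB), T_add K hA h1.1 h2.1, T_add K hA (cc_FF hA ha) (cc_FF hA hb),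
        actN_adda (FG_ind hB), h1.2, h2.2]
      exact ⟨h1.1.add h2.1, rfl⟩
    · intro a ha h
      rw [actN_nega, T_neg, T_neg, actN_nega, h.2]
      exact ⟨h.1.neg, rfl⟩
  · rw [actN_zerof, actN_zerof, T_zero]
    exact ⟨FF_zero, rfl⟩
  · intro f f' hf hf' h1 h2
    rw [actN_addf hf hf', actN_addf hf hf', T_add K hA h1.1 h2.1, h1.2, h2.2]
    exact ⟨h1.1.add h2.1, rfl⟩
  · intro f hf h
    rw [actN_negf, actN_negf, T_neg, h.2]
    exact ⟨h.1.neg, rfl⟩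

lemma FF_eps {n : ℕ} {f : G → ℤ} {a : C.NerveSp n → ℤ} (ha : FF a) : FF (epsN f a) :=
  ha.of_imp fun _ hx => right_ne_zero_of_mul hx

lemma epsN_T (hA : D.IsAmpleGroupoid) {n m : ℕ}
    (K : (Fin (n + 1) → Fin (d + 1)) → O (Fin (d + 1)) m)
    (f : G → ℤ) (a : C.NerveSp n → ℤ) : T K (epsN f a) = epsN f (T K a) := by
  funext y
  unfold epsN T
  rw [← smul_eq_mul, smul_finsum]
  refine finsum_congr fun x => ?_
  by_cases h : isFace y x
  · rw [if_pos h, ← isFace_anc hA h, smul_eq_mul]; ring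
  · simp [h]

lemma relN_T (hA : D.IsAmpleGroupoid) {n m : ℕ}
    {K : (Fin (n + 1) → Fin (d + 1)) → O (Fin (d + 1)) m} (hK : SuppK K)
    {r : C.NerveSp n → ℤ} (hr : r ∈ C.relN n) : FF r ∧ T K r ∈ C.relN m := by
  unfold relN at hr
  induction hr using AddSubgroup.closure_induction with
  | mem x hx =>
    obtain ⟨f, a, hf, ha, rfl⟩ := hx
    obtain ⟨h1, h2⟩ := actN_T hA hK hf ha
    have h3 := FF_eps (f := f) (cc_FF hA ha)
    refine ⟨h1.sub h3, ?_⟩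
    rw [T_sub K hA h1 h3, h2, epsN_T hA]
    exact AddSubgroup.subset_closure ⟨f, T K a, hf, T_cc hA hK ha, rfl⟩
  | zero => rw [T_zero]; exact ⟨FF_zero, AddSubgroup.zero_mem _⟩
  | add x y _ _ h1 h2 =>
    rw [T_add K hA h1.1 h2.1]
    exact ⟨h1.1.add h2.1, AddSubgroup.add_mem _ h1.2 h2.2⟩
  | neg x _ h1 =>
    rw [T_neg]
    exact ⟨h1.1.neg, AddSubgroup.neg_mem _ h1.2⟩

/-! ### The increasing part -/

def bG (n : ℕ) (a : C.NerveGtSp (n + 1) → ℤ) : C.NerveGtSp n → ℤ :=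
  fun y => ∑ i : Fin (n + 2), (-1 : ℤ) ^ (i : ℕ) * ∑ᶠ x ∈ {x | C.nerveGtFace n i x = y}, a x

def actG {n : ℕ} (f : G → ℤ) (a : C.NerveGtSp n → ℤ) : C.NerveGtSp n → ℤ :=
  fun x => ∑ᶠ g : G, if D.range g = anc (C.nerveIncl n x) then
    f g * a (C.nerveGtAct n (D.inv g) x) else 0

def epsG {n : ℕ} (f : G → ℤ) (a : C.NerveGtSp n → ℤ) : C.NerveGtSp n → ℤ :=
  fun x => (∑ᶠ g ∈ {g : G | D.source g = anc (C.nerveIncl n x)}, f g) * a x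

variable (C) in
def relG (n : ℕ) : AddSubgroup (C.NerveGtSp n → ℤ) :=
  AddSubgroup.closure
    {c | ∃ f a, f ∈ ccZ G ∧ a ∈ ccZ (C.NerveGtSp n) ∧ c = actG f a - epsG f a}

lemma finsum_incl {n : ℕ} (F : C.NerveSp n → ℤ) (hF : ∀ x, x ∉ Set.range (C.nerveIncl n) → F x = 0) :
    ∑ᶠ x, F x = ∑ᶠ x, F (C.nerveIncl n x) := by
  rw [← finsum_mem_range (f := F) nerveIncl_inj, finsum_mem_def]
  refine finsum_congr fun x => ?_
  by_cases h : x ∈ Set.range (C.nerveIncl n)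
  · rw [indicator_of_mem h]
  · rw [indicator_of_notMem h, hF x h]

lemma incl_face {n : ℕ} (i) (x : C.NerveGtSp (n + 1)) :
    C.nerveIncl n (C.nerveGtFace n i x) = C.nerveFace n i (C.nerveIncl (n + 1) x) := rfl

lemma ext0_bG {n : ℕ} (a : C.NerveGtSp (n + 1) → ℤ) :
    C.ext0 n (bG n a) = bN n (C.ext0 (n + 1) a) := by
  funext y
  have key : ∀ i, ∑ᶠ x ∈ {x | C.nerveFace n i x = y}, C.ext0 (n + 1) a x =
      ∑ᶠ x ∈ {x | C.nerveIncl n (C.nerveGtFace n i x) = y}, a x := by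
    intro i
    rw [finsum_mem_def, finsum_mem_def, finsum_incl]
    · refine finsum_congr fun x => ?_
      by_cases h : C.nerveIncl n (C.nerveGtFace n i x) = y
      · rw [indicator_of_mem (show x ∈ {x | C.nerveIncl n (C.nerveGtFace n i x) = y} from h),
          indicator_of_mem (show C.nerveIncl (n + 1) x ∈ {x | C.nerveFace n i x = y} from h),
          ext0_incl]
      · rw [indicator_of_notMem (show x ∉ {x | C.nerveIncl n (C.nerveGtFace n i x) = y} from h),
          indicator_of_notMem (show C.nerveIncl (n + 1) x ∉ {x | C.nerveFace n i x = y} from h)]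
    · intro x hx
      exact indicator_apply_eq_zero.2 fun _ => ext0_not a hx
  unfold bN
  simp only [key]
  by_cases hy : y ∈ Set.range (C.nerveIncl n)
  · obtain ⟨y, rfl⟩ := hy
    rw [ext0_incl]
    unfold bG
    refine Finset.sum_congr rfl fun i _ => ?_
    simp only [nerveIncl_inj.eq_iff]
  · rw [ext0_not _ hy]
    symm
    refine Finset.sum_eq_zero fun i _ => ?_
    rw [finsum_mem_def, finsum_eq_zero_of_forall_eq_zero, mul_zero]
    intro x
    exact indicator_apply_eq_zero.2 fun h => absurd ⟨_, h⟩ hy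

lemma col_act {n : ℕ} (g : G) (x : C.NerveSp n) : C.col (C.nerveAct n g x) = C.col x := by
  by_cases h : (fun j => ((trans (D := D) g (x.1 j).1 : Set G), (x.1 j).2)) ∈ C.nerveSet n
  · have : C.nerveAct n g x = ⟨_, h⟩ := dif_pos h
    rw [this]; rfl
  · have : C.nerveAct n g x = x := dif_neg h
    rw [this]

lemma incl_act {n : ℕ} (g : G) (x : C.NerveGtSp n) :
    C.nerveIncl n (C.nerveGtAct n g x) = C.nerveAct n g (C.nerveIncl n x) := by
  by_cases h : (fun j => ((trans (D := D) g (x.1 j).1 : Set G), (x.1 j).2)) ∈ C.nerveGtSet n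
  · have h' : (fun j => ((trans (D := D) g ((C.nerveIncl n x).1 j).1 : Set G),
      ((C.nerveIncl n x).1 j).2)) ∈ C.nerveSet n := h.1
    have e1 : C.nerveGtAct n g x = ⟨_, h⟩ := dif_pos h
    have e2 : C.nerveAct n g (C.nerveIncl n x) = ⟨_, h'⟩ := dif_pos h'
    rw [e1, e2]; rfl
  · have h' : (fun j => ((trans (D := D) g ((C.nerveIncl n x).1 j).1 : Set G),
      ((C.nerveIncl n x).1 j).2)) ∉ C.nerveSet n := fun h' => h ⟨h', x.2.2⟩
    have e1 : C.nerveGtAct n g x = x := dif_neg h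
    have e2 : C.nerveAct n g (C.nerveIncl n x) = C.nerveIncl n x := dif_neg h'
    rw [e1, e2]

lemma act_not_incl {n : ℕ} (g : G) {x : C.NerveSp n} (hx : x ∉ Set.range (C.nerveIncl n)) :
    C.nerveAct n g x ∉ Set.range (C.nerveIncl n) := by
  rw [mem_range_incl] at hx ⊢
  rwa [col_act]

lemma ext0_act {n : ℕ} (f : G → ℤ) (a : C.NerveGtSp n → ℤ) :
    C.ext0 n (actG f a) = actN f (C.ext0 n a) := by
  funext x
  by_cases hx : x ∈ Set.range (C.nerveIncl n)
  · obtain ⟨x, rfl⟩ := hx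
    rw [ext0_incl]
    unfold actG actN
    refine finsum_congr fun g => ?_
    rw [← incl_act, ext0_incl]
  · rw [ext0_not _ hx]
    symm
    refine finsum_eq_zero_of_forall_eq_zero fun g => ?_
    rw [ext0_not _ (act_not_incl _ hx)]; simp

lemma ext0_eps {n : ℕ} (f : G → ℤ) (a : C.NerveGtSp n → ℤ) :
    C.ext0 n (epsG f a) = epsN f (C.ext0 n a) := by
  funext x
  by_cases hx : x ∈ Set.range (C.nerveIncl n)
  · obtain ⟨x, rfl⟩ := hx
    unfold epsN
    rw [ext0_incl, ext0_incl]
    rfl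
  · unfold epsN
    rw [ext0_not _ hx, ext0_not _ hx, mul_zero]

lemma restr_act {n : ℕ} (f : G → ℤ) (a : C.NerveSp n → ℤ) :
    C.restr n (actN f a) = actG f (C.restr n a) := by
  funext x
  change actN f a (C.nerveIncl n x) = _
  unfold actG actN
  refine finsum_congr fun g => ?_
  rw [← incl_act]; rfl

lemma restr_eps {n : ℕ} (f : G → ℤ) (a : C.NerveSp n → ℤ) :
    C.restr n (epsN f a) = epsG f (C.restr n a) := rfl

lemma ext0_rel (hA : D.IsAmpleGroupoid) {n : ℕ} {r : C.NerveGtSp n → ℤ} (hr : r ∈ C.relG n) :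
    C.ext0 n r ∈ C.relN n := by
  have : C.relG n ≤ (C.relN n).comap (C.ext0 n) := by
    unfold relG
    rw [AddSubgroup.closure_le]
    rintro _ ⟨f, a, hf, ha, rfl⟩
    change C.ext0 n (actG f a - epsG f a) ∈ C.relN n
    rw [map_sub, ext0_act, ext0_eps]
    exact AddSubgroup.subset_closure ⟨f, C.ext0 n a, hf, ext0_cc hA ha, rfl⟩
  exact this hr

lemma restr_rel (hA : D.IsAmpleGroupoid) {n : ℕ} {r : C.NerveSp n → ℤ} (hr : r ∈ C.relN n) :
    C.restr n r ∈ C.relG n := by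
  have : C.relN n ≤ (C.relG n).comap (C.restr n) := by
    unfold relN
    rw [AddSubgroup.closure_le]
    rintro _ ⟨f, a, hf, ha, rfl⟩
    change C.restr n (actN f a - epsN f a) ∈ C.relG n
    rw [map_sub, restr_act, restr_eps]
    exact AddSubgroup.subset_closure ⟨f, C.restr n a, hf, restr_cc hA ha, rfl⟩
  exact this hr

lemma restr_bN {n : ℕ} {a : C.NerveSp (n + 1) → ℤ} (ha : ∀ x, a x ≠ 0 → StrictMono (C.col x)) :
    C.restr n (bN n a) = bG n (C.restr (n + 1) a) := by
  rw [← restr_ext0 (bG n _), ext0_bG, ext0_restr a ha]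

lemma ext0_inj {n : ℕ} : Injective (C.ext0 n) :=
  LeftInverse.injective (g := C.restr n) restr_ext0

lemma bG_add (hA : D.IsAmpleGroupoid) {n : ℕ} {a b : C.NerveGtSp (n + 1) → ℤ}
    (ha : a ∈ ccZ (C.NerveGtSp (n + 1))) (hb : b ∈ ccZ (C.NerveGtSp (n + 1))) :
    bG n (a + b) = bG n a + bG n b := by
  apply ext0_inj
  rw [map_add, ext0_bG, ext0_bG, ext0_bG, map_add,
    bN_add hA (cc_FF hA (ext0_cc hA ha)) (cc_FF hA (ext0_cc hA hb))]

lemma bG_neg {n : ℕ} (a : C.NerveGtSp (n + 1) → ℤ) : bG n (-a) = - bG n a := by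
  apply ext0_inj
  rw [map_neg, ext0_bG, ext0_bG, map_neg, bN_neg]

lemma bG_zero {n : ℕ} : bG n (0 : C.NerveGtSp (n + 1) → ℤ) = 0 := by
  have := bG_neg (0 : C.NerveGtSp (n + 1) → ℤ)
  apply ext0_inj
  rw [ext0_bG, map_zero, map_zero, bN_zero]

/-! ### Cycles and boundaries -/

lemma mem_cyN (hA : D.IsAmpleGroupoid) {n : ℕ} (a : C.NerveSp (n + 1) → ℤ) :
    a ∈ C.nerveSSG.cycles (n + 1) ↔ a ∈ ccZSub (C.NerveSp (n + 1)) ∧ bN n a ∈ C.relN n := by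
  constructor
  · intro h
    change a ∈ AddSubgroup.closure
      {a | a ∈ ccZSub (C.NerveSp (n + 1)) ∧ bN n a ∈ C.relN n} at h
    induction h using AddSubgroup.closure_induction with
    | mem x hx => exact hx
    | zero => exact ⟨AddSubgroup.zero_mem _, by rw [bN_zero]; exact AddSubgroup.zero_mem _⟩
    | add x y _ _ h1 h2 =>
      refine ⟨AddSubgroup.add_mem _ h1.1 h2.1, ?_⟩
      rw [bN_add hA (cc_FF hA h1.1) (cc_FF hA h2.1)]
      exact AddSubgroup.add_mem _ h1.2 h2.2
    | neg x _ h1 =>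
      refine ⟨AddSubgroup.neg_mem _ h1.1, ?_⟩
      rw [bN_neg]
      exact AddSubgroup.neg_mem _ h1.2
  · intro h
    exact AddSubgroup.subset_closure h

lemma mem_cyG (hA : D.IsAmpleGroupoid) {n : ℕ} (a : C.NerveGtSp (n + 1) → ℤ) :
    a ∈ C.nerveGtSSG.cycles (n + 1) ↔ a ∈ ccZSub (C.NerveGtSp (n + 1)) ∧ bG n a ∈ C.relG n := by
  constructor
  · intro h
    change a ∈ AddSubgroup.closure
      {a | a ∈ ccZSub (C.NerveGtSp (n + 1)) ∧ bG n a ∈ C.relG n} at h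
    induction h using AddSubgroup.closure_induction with
    | mem x hx => exact hx
    | zero => exact ⟨AddSubgroup.zero_mem _, by rw [bG_zero]; exact AddSubgroup.zero_mem _⟩
    | add x y _ _ h1 h2 =>
      refine ⟨AddSubgroup.add_mem _ h1.1 h2.1, ?_⟩
      rw [bG_add hA h1.1 h2.1]
      exact AddSubgroup.add_mem _ h1.2 h2.2
    | neg x _ h1 =>
      refine ⟨AddSubgroup.neg_mem _ h1.1, ?_⟩
      rw [bG_neg]
      exact AddSubgroup.neg_mem _ h1.2
  · intro h
    exact AddSubgroup.subset_closure h

lemma mem_buN (hA : D.IsAmpleGroupoid) {n : ℕ} (c : C.NerveSp n → ℤ) :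
    c ∈ C.nerveSSG.bdries n ↔
      ∃ r ∈ C.relN n, ∃ b ∈ ccZSub (C.NerveSp (n + 1)), c = r + bN n b := by
  change c ∈ C.relN n ⊔ AddSubgroup.closure {c | ∃ a ∈ ccZSub (C.NerveSp (n + 1)), bN n a = c} ↔ _
  rw [AddSubgroup.mem_sup]
  constructor
  · rintro ⟨r, hr, z, hz, rfl⟩
    refine ⟨r, hr, ?_⟩
    suffices h : ∃ b ∈ ccZSub (C.NerveSp (n + 1)), bN n b = z by
      obtain ⟨b, hb, rfl⟩ := h
      exact ⟨b, hb, rfl⟩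
    induction hz using AddSubgroup.closure_induction with
    | mem x hx => exact hx
    | zero => exact ⟨0, AddSubgroup.zero_mem _, bN_zero⟩
    | add x y _ _ h1 h2 =>
      obtain ⟨b, hb, rfl⟩ := h1
      obtain ⟨b', hb', rfl⟩ := h2
      exact ⟨b + b', AddSubgroup.add_mem _ hb hb', bN_add hA (cc_FF hA hb) (cc_FF hA hb')⟩
    | neg x _ h1 =>
      obtain ⟨b, hb, rfl⟩ := h1
      exact ⟨-b, AddSubgroup.neg_mem _ hb, bN_neg b⟩
  · rintro ⟨r, hr, b, hb, rfl⟩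
    exact ⟨r, hr, _, AddSubgroup.subset_closure ⟨b, hb, rfl⟩, rfl⟩

lemma mem_buG (hA : D.IsAmpleGroupoid) {n : ℕ} (c : C.NerveGtSp n → ℤ) :
    c ∈ C.nerveGtSSG.bdries n ↔
      ∃ r ∈ C.relG n, ∃ b ∈ ccZSub (C.NerveGtSp (n + 1)), c = r + bG n b := by
  change c ∈ C.relG n ⊔
    AddSubgroup.closure {c | ∃ a ∈ ccZSub (C.NerveGtSp (n + 1)), bG n a = c} ↔ _
  rw [AddSubgroup.mem_sup]
  constructor
  · rintro ⟨r, hr, z, hz, rfl⟩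
    refine ⟨r, hr, ?_⟩
    suffices h : ∃ b ∈ ccZSub (C.NerveGtSp (n + 1)), bG n b = z by
      obtain ⟨b, hb, rfl⟩ := h
      exact ⟨b, hb, rfl⟩
    induction hz using AddSubgroup.closure_induction with
    | mem x hx => exact hx
    | zero => exact ⟨0, AddSubgroup.zero_mem _, bG_zero⟩
    | add x y _ _ h1 h2 =>
      obtain ⟨b, hb, rfl⟩ := h1
      obtain ⟨b', hb', rfl⟩ := h2
      exact ⟨b + b', AddSubgroup.add_mem _ hb hb', bG_add hA hb hb'⟩
    | neg x _ h1 =>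
      obtain ⟨b, hb, rfl⟩ := h1
      exact ⟨-b, AddSubgroup.neg_mem _ hb, bG_neg b⟩
  · rintro ⟨r, hr, b, hb, rfl⟩
    exact ⟨r, hr, _, AddSubgroup.subset_closure ⟨b, hb, rfl⟩, rfl⟩

lemma cy_cc (hA : D.IsAmpleGroupoid) {n : ℕ} {a : C.NerveSp n → ℤ}
    (ha : a ∈ C.nerveSSG.cycles n) : a ∈ ccZSub (C.NerveSp n) := by
  cases n with
  | zero => exact ha
  | succ n => exact ((mem_cyN hA a).1 ha).1

lemma ext0_cy (hA : D.IsAmpleGroupoid) {n : ℕ} {a : C.NerveGtSp n → ℤ}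
    (ha : a ∈ C.nerveGtSSG.cycles n) : C.ext0 n a ∈ C.nerveSSG.cycles n := by
  cases n with
  | zero => exact ext0_cc hA ha
  | succ n =>
    obtain ⟨h1, h2⟩ := (mem_cyG hA a).1 ha
    refine (mem_cyN hA _).2 ⟨ext0_cc hA h1, ?_⟩
    rw [← ext0_bG]
    exact ext0_rel hA h2

lemma ext0_bu (hA : D.IsAmpleGroupoid) {n : ℕ} {a : C.NerveGtSp n → ℤ}
    (ha : a ∈ C.nerveGtSSG.bdries n) : C.ext0 n a ∈ C.nerveSSG.bdries n := by
  obtain ⟨r, hr, b, hb, rfl⟩ := (mem_buG hA a).1 ha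
  refine (mem_buN hA _).2 ⟨_, ext0_rel hA hr, _, ext0_cc hA hb, ?_⟩
  rw [map_add, ext0_bG]

lemma ext0_strict {n : ℕ} (a : C.NerveGtSp n → ℤ) (x) (hx : C.ext0 n a x ≠ 0) :
    StrictMono (C.col x) := by
  rw [← mem_range_incl]
  by_contra h
  exact hx (ext0_not a h)

lemma restr_TP_bu (hA : D.IsAmpleGroupoid) {n : ℕ} {z : C.NerveSp n → ℤ}
    (hz : z ∈ C.nerveSSG.bdries n) : C.restr n (T (P n) z) ∈ C.nerveGtSSG.bdries n := by
  obtain ⟨r, hr, b, hb, rfl⟩ := (mem_buN hA z).1 hz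
  obtain ⟨h1, h2⟩ := relN_T hA (SuppK_P (n := n)) hr
  refine (mem_buG hA _).2 ⟨_, restr_rel hA h2, C.restr (n + 1) (T (P (n + 1)) b),
    restr_cc hA (T_cc hA SuppK_P hb), ?_⟩
  rw [T_add _ hA h1 (cc_FF hA (bN_cc hA hb)), map_add, ← bN_TP hA hb, restr_bN (TP_strict b)]

lemma restr_TP_cy (hA : D.IsAmpleGroupoid) {n : ℕ} {z : C.NerveSp n → ℤ}
    (hz : z ∈ C.nerveSSG.cycles n) : C.restr n (T (P n) z) ∈ C.nerveGtSSG.cycles n := by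
  cases n with
  | zero => exact restr_cc hA (T_cc hA SuppK_P (cy_cc hA hz))
  | succ n =>
    obtain ⟨h1, h2⟩ := (mem_cyN hA z).1 hz
    refine (mem_cyG hA _).2 ⟨restr_cc hA (T_cc hA SuppK_P h1), ?_⟩
    rw [← restr_bN (TP_strict z), bN_TP hA h1]
    exact restr_rel hA (relN_T hA SuppK_P h2).2

lemma ext0_reflect (hA : D.IsAmpleGroupoid) {n : ℕ} {a : C.NerveGtSp n → ℤ}
    (ha : C.ext0 n a ∈ C.nerveSSG.bdries n) : a ∈ C.nerveGtSSG.bdries n := by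
  have := restr_TP_bu hA ha
  rwa [TP_self hA _ (ext0_strict a), restr_ext0] at this

lemma TP_homologous (hA : D.IsAmpleGroupoid) {n : ℕ} {z : C.NerveSp n → ℤ}
    (hz : z ∈ C.nerveSSG.cycles n) : z - T (P n) z ∈ C.nerveSSG.bdries n := by
  cases n with
  | zero =>
    have : z - T (P 0) z = 0 := by
      rw [TP_self hA z, sub_self]
      intro x _ j k hjk
      exfalso
      have h1 := j.2
      have h2 := k.2
      have h3 : (j : ℕ) < k := hjk
      omega
    rw [this]
    exact AddSubgroup.zero_mem _
  | succ n =>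
    obtain ⟨h1, h2⟩ := (mem_cyN hA z).1 hz
    rw [homotopy hA h1]
    rw [add_comm (bN _ _)]
    exact (mem_buN hA _).2 ⟨_, (relN_T hA SuppK_H h2).2, _, T_cc hA SuppK_H h1, rfl⟩

lemma isEmpty_gt {n : ℕ} (h : d < n) : IsEmpty (C.NerveGtSp n) := by
  refine ⟨fun x => ?_⟩
  have hs : StrictMono fun j => (x.1 j).2 := fun j k hjk => x.2.2 j k hjk
  have := Fintype.card_le_of_injective _ hs.injective
  simp at this
  omega

/-- the comparison homomorphism -/
def cmp (hA : D.IsAmpleGroupoid) (C : D.Colouring d) (n : ℕ) :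
    C.nerveGtSSG.homology n →+ C.nerveSSG.homology n :=
  QuotientAddGroup.map _ _
    (((C.ext0 n).comp (C.nerveGtSSG.cycles n).subtype).codRestrict (C.nerveSSG.cycles n)
      fun a => ext0_cy hA a.2)
    fun a ha => ext0_bu hA ha

lemma cmp_cls (hA : D.IsAmpleGroupoid) {n : ℕ} (a : C.NerveGtSp n → ℤ)
    (ha : a ∈ C.nerveGtSSG.cycles n) :
    cmp hA C n (C.nerveGtSSG.cls a ha) = C.nerveSSG.cls (C.ext0 n a) (ext0_cy hA ha) := rfl

lemma cmp_bij (hA : D.IsAmpleGroupoid) {n : ℕ} : Bijective (cmp hA C n) := by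
  constructor
  · rw [injective_iff_map_eq_zero]
    intro q hq
    induction q using QuotientAddGroup.induction_on with
    | H a =>
      have h1 : C.ext0 n a.1 ∈ C.nerveSSG.bdries n :=
        (QuotientAddGroup.eq_zero_iff (N := AddSubgroup.comap (C.nerveSSG.cycles n).subtype
          (C.nerveSSG.bdries n)) (⟨C.ext0 n a.1, ext0_cy hA a.2⟩ : C.nerveSSG.cycles n)).1 hq
      exact (QuotientAddGroup.eq_zero_iff _).2 (ext0_reflect hA h1)
  · intro q
    induction q using QuotientAddGroup.induction_on with
    | H z =>
      refine ⟨C.nerveGtSSG.cls _ (restr_TP_cy hA z.2), ?_⟩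
      rw [cmp_cls]
      refine QuotientAddGroup.eq.2 ?_
      have h := TP_homologous hA z.2
      have e : ∀ z : C.NerveSp n → ℤ,
          z - T (P n) z = -(C.ext0 n (C.restr n (T (P n) z))) + z := by
        intro z
        rw [ext0_restr _ (TP_strict z), neg_add_eq_sub]
      have h' : -(C.ext0 n (C.restr n (T (P n) z.1))) + (show C.NerveSp n → ℤ from z.1) ∈
          C.nerveSSG.bdries n := (e z.1) ▸ h
      exact h'

end Colouring
end GroupoidData

/-- Let `G` be an ample groupoid with compact unit space and let `𝒞 = (G_0, …, G_d)` be a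
colouring of `G` with nerve `N_*`.  Then the canonical inclusion `N_*^> → N_*` induces an
isomorphism `H_*(𝒞) ≅ H_*^G(N_*^>)`; in particular, since `N_n^>` is empty for `n > d`,
`H_n(𝒞) = 0` for all `n > d`. -/
theorem colouring_homology_eq_increasing_part
    {G : Type u} [TopologicalSpace G] (D : GroupoidData G)
    (hAmple : D.IsAmpleGroupoid) (hcpt : IsCompact D.unitSpace)
    (d : ℕ) (C : D.Colouring d) :
    (∀ n : ℕ, ∃ e : C.nerveGtSSG.homology n ≃+ C.homology n,
      ∀ (a : C.NerveGtSp n → ℤ) (ha : a ∈ C.nerveGtSSG.cycles n),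
        ∃ hb : pushf (C.nerveIncl n) a ∈ C.nerveSSG.cycles n,
          e (C.nerveGtSSG.cls a ha) = C.nerveSSG.cls (pushf (C.nerveIncl n) a) hb) ∧
    (∀ n : ℕ, d < n → ∀ x : C.homology n, x = 0) := by
  constructor
  · intro n
    refine ⟨AddEquiv.ofBijective (GroupoidData.Colouring.cmp hAmple C n)
      (GroupoidData.Colouring.cmp_bij hAmple), fun a ha => ?_⟩
    have hp := GroupoidData.Colouring.pushf_incl (C := C) (n := n) a
    have key : ∀ p : C.NerveSp n → ℤ, p = C.ext0 n a →
        ∃ hb : p ∈ C.nerveSSG.cycles n,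
          GroupoidData.Colouring.cmp hAmple C n (C.nerveGtSSG.cls a ha) =
            C.nerveSSG.cls p hb := by
      rintro p rfl
      exact ⟨GroupoidData.Colouring.ext0_cy hAmple ha, rfl⟩
    exact key _ hp
  · intro n hn x
    obtain ⟨q, rfl⟩ := (GroupoidData.Colouring.cmp_bij (C := C) (n := n) hAmple).2 x
    have he := GroupoidData.Colouring.isEmpty_gt (C := C) hn
    have hq : q = 0 := by
      induction q using QuotientAddGroup.induction_on with
      | H a =>
        have : a = 0 := Subtype.ext (funext fun y => he.elim y)
        rw [this]; rfl
    rw [hq]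
    exact map_zero (GroupoidData.Colouring.cmp hAmple C n)
end
end
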